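/- arXiv:2212.03944 — 3 statements merged into one kernel-verified Lean document; each statement's English description precedes it below -/
import Mathlib

section
/- Let X₁,…,Xₙ be i.i.d. from a probability measure μ on a Polish space 𝒳. (i) The bivariate empirical measures 𝔏_n = (1/n)Σ_{i=1}^n δ_{(i/n, X_i)} satisfy a large deviation principle at speed n on ℳ (with the weak topology) with the good rate function I(ν) = D(ν|ρ) if ν ∈ 𝒯ℳ and I(ν) = +∞ otherwise. (ii) The random measures 𝔏̃_n ∈ 𝒯ℳ, defined for each realization of X as the law of (U, X_{⌈nU⌉}) with U ~ Unif[0,1], satisfy a large deviation principle at speed n on 𝒯ℳ with the good rate function D(·|ρ). -/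
open MeasureTheory Filter Set
open scoped ENNReal NNReal

noncomputable section

/-- The uniform probability measure on `[0,1]`. -/
def unif01 : Measure ℝ := volume.restrict (Set.Icc 0 1)

instance : IsProbabilityMeasure unif01 :=
  ⟨by rw [unif01, Measure.restrict_apply_univ, Real.volume_Icc]; norm_num⟩

/-- The `L^r` norm (`r : ℝ≥0∞`) of a kernel, viewed as a function on `[0,1]²`. -/
def kerNorm (W : ℝ → ℝ → ℝ) (r : ℝ≥0∞) : ℝ≥0∞ :=
  eLpNorm (fun z : ℝ × ℝ => W z.1 z.2) r (unif01.prod unif01)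

/-- The (strong) cut distance `d_□` between two kernels on `[0,1]²`. -/
def cutDist (W₁ W₂ : ℝ → ℝ → ℝ) : ℝ :=
  ⨆ S : {S : Set ℝ // MeasurableSet S}, ⨆ T : {T : Set ℝ // MeasurableSet T},
    |∫ x in Set.Icc (0:ℝ) 1 ∩ S.1, ∫ y in Set.Icc (0:ℝ) 1 ∩ T.1, (W₁ x y - W₂ x y)|

/-- A Lebesgue-measure-preserving bijection of `[0,1]`. -/
def MPB (σ : ℝ → ℝ) : Prop :=
  Set.BijOn σ (Set.Icc 0 1) (Set.Icc 0 1) ∧ MeasurePreserving σ unif01 unif01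

/-- The weak cut distance `δ_□`. -/
def weakCutDist (W₁ W₂ : ℝ → ℝ → ℝ) : ℝ :=
  ⨅ σ : {σ : ℝ → ℝ // MPB σ}, cutDist (fun x y => W₁ (σ.1 x) (σ.1 y)) W₂

/-- The step kernel `W_{Q_n}` associated to an `n × n` matrix `Q`:
it equals `Q i j` when `⌈n x⌉ = i, ⌈n y⌉ = j`. -/
def stepKernel (n : ℕ) (Q : Fin n → Fin n → ℝ) : ℝ → ℝ → ℝ := fun x y =>
  ∑ i : Fin n, ∑ j : Fin n,
    if x ∈ Set.Ioc (((i : ℕ) : ℝ)/n) ((((i : ℕ) : ℝ)+1)/n) ∧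
       y ∈ Set.Ioc (((j : ℕ) : ℝ)/n) ((((j : ℕ) : ℝ)+1)/n)
    then Q i j else 0

/-- Product over the edges of `H` (each edge counted once) of `f a b`. -/
def edgeProd {v : ℕ} (G : SimpleGraph (Fin v)) [DecidableRel G.Adj]
    (f : Fin v → Fin v → ℝ) : ℝ :=
  ∏ p ∈ Finset.univ.filter (fun p : Fin v × Fin v => G.Adj p.1 p.2 ∧ p.1 < p.2), f p.1 p.2

/-- The number of edges `|E(H)|`. -/
def edgeCard {v : ℕ} (G : SimpleGraph (Fin v)) [DecidableRel G.Adj] : ℕ :=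
  (Finset.univ.filter (fun p : Fin v × Fin v => G.Adj p.1 p.2 ∧ p.1 < p.2)).card

/-- The inhomogeneous U-statistic `U_n(X)` (sum over distinct indices). -/
def Ustat {X : Type*} {v : ℕ} (G : SimpleGraph (Fin v)) [DecidableRel G.Adj]
    (φ : (Fin v → X) → ℝ) (n : ℕ) (Q : Fin n → Fin n → ℝ) (x : Fin n → X) : ℝ :=
  (∑ i ∈ Finset.univ.filter (fun i : Fin v → Fin n => Function.Injective i),
      φ (x ∘ i) * edgeProd G (fun a b => Q (i a) (i b))) / (n : ℝ) ^ v

/-- The inhomogeneous V-statistic `V_n(X)` (sum over all indices). -/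
def Vstat {X : Type*} {v : ℕ} (G : SimpleGraph (Fin v)) [DecidableRel G.Adj]
    (φ : (Fin v → X) → ℝ) (n : ℕ) (Q : Fin n → Fin n → ℝ) (x : Fin n → X) : ℝ :=
  (∑ i : Fin v → Fin n, φ (x ∘ i) * edgeProd G (fun a b => Q (i a) (i b))) / (n : ℝ) ^ v

open Classical in
/-- Kullback-Leibler divergence `D(ν | ρ) ∈ [0,∞]`. -/
def KLdiv {α : Type*} [MeasurableSpace α] (ν ρ : Measure α) : ℝ≥0∞ :=
  if ν ≪ ρ ∧ Integrable (llr ν ρ) ν then ENNReal.ofReal (∫ a, llr ν ρ a ∂ν) else ⊤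

open Classical in
/-- `ν` itself if it is a probability measure, junk value `0` otherwise. -/
def probOr {α : Type*} [MeasurableSpace α] (ν : Measure α) : Measure α :=
  if IsProbabilityMeasure ν then ν else 0

instance {α : Type*} [MeasurableSpace α] (ν : Measure α) : SigmaFinite (probOr ν) := by
  unfold probOr
  split_ifs with h
  · haveI := h; infer_instance
  · infer_instance

/-- `v`-fold product of a (probability) measure. -/
def piProb {α : Type*} [MeasurableSpace α] (v : ℕ) (ν : Measure α) : Measure (Fin v → α) :=
  Measure.pi fun _ => probOr ν

/-- The functional `T_{W,φ}(ν) = E[φ(B₁,…,B_v) ∏_{(a,b) ∈ E(H)} W(A_a,A_b)]`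
for `(A_a,B_a)` i.i.d. with law `ν`. -/
def TWphi {X : Type*} [MeasurableSpace X] {v : ℕ} (G : SimpleGraph (Fin v))
    [DecidableRel G.Adj] (W : ℝ → ℝ → ℝ) (φ : (Fin v → X) → ℝ)
    (ν : Measure (ℝ × X)) : ℝ :=
  ∫ z : Fin v → ℝ × X,
    φ (fun a => (z a).2) * edgeProd G (fun a b => W (z a).1 (z b).1) ∂(piProb v ν)

/-- Membership in `𝒯ℳ`: probability measures on `[0,1] × 𝒳` whose first marginal
is uniform on `[0,1]`. -/
def inTM {X : Type*} [MeasurableSpace X] (ν : Measure (ℝ × X)) : Prop :=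
  IsProbabilityMeasure ν ∧ ν.map Prod.fst = unif01

/-- The rate function `I₀(t) = inf { D(ν|ρ) : ν ∈ 𝒯ℳ, D(ν|ρ) < ∞, T_{W,φ}(ν) = t }`. -/
def rate0 {X : Type*} [MeasurableSpace X] {v : ℕ} (G : SimpleGraph (Fin v))
    [DecidableRel G.Adj] (W : ℝ → ℝ → ℝ) (φ : (Fin v → X) → ℝ) (μ : Measure X)
    (t : ℝ) : ℝ≥0∞ :=
  ⨅ ν : {ν : Measure (ℝ × X) //
      inTM ν ∧ KLdiv ν (unif01.prod μ) ≠ ⊤ ∧ TWphi G W φ ν = t},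
    KLdiv ν.1 (unif01.prod μ)

/-- Tail assumption (T): `E_μ[e^{λ ψ(X)^p}] < ∞` for all `λ > 0`; for `p = ∞`
it means `ψ` is bounded. -/
def TailCond {X : Type*} [MeasurableSpace X] (μ : Measure X) (ψ : X → ℝ)
    (p : ℝ≥0∞) : Prop :=
  if p = ⊤ then ∃ C : ℝ, ∀ x, ψ x ≤ C
  else ∀ lam : ℝ, 0 < lam →
    ∫⁻ x, ENNReal.ofReal (Real.exp (lam * ψ x ^ p.toReal)) ∂μ < ⊤

/-- A sequence of random elements `T n` defined on probability spaces `(Ω n, P n)`,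
taking values in a topological space `E`, satisfies a large deviation principle at
speed `n` with good rate function `I`. -/
def SatisfiesLDP {E : Type*} [TopologicalSpace E] {Ω : ℕ → Type*}
    [∀ n, MeasurableSpace (Ω n)] (P : ∀ n, Measure (Ω n)) (T : ∀ n, Ω n → E)
    (I : E → ℝ≥0∞) : Prop :=
  (∀ c : ℝ≥0∞, c ≠ ⊤ → IsCompact {x | I x ≤ c}) ∧
  ∀ F : Set E, MeasurableSet[borel E] F →
    (-(⨅ x ∈ interior F, (I x : EReal)) ≤
      Filter.atTop.liminf fun n : ℕ =>
        (((n : ℝ)⁻¹ : ℝ) : EReal) * ENNReal.log (P n {ω | T n ω ∈ F})) ∧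
    (Filter.atTop.limsup (fun n : ℕ =>
        (((n : ℝ)⁻¹ : ℝ) : EReal) * ENNReal.log (P n {ω | T n ω ∈ F})) ≤
      -(⨅ x ∈ closure F, (I x : EReal)))

end
/-- The bivariate empirical measure `𝔏_n = (1/n) Σ_{i=1}^n δ_{(i/n, X_i)}`. -/
noncomputable def empMeas {X : Type*} [MeasurableSpace X] (n : ℕ) (x : Fin n → X) :
    Measure (ℝ × X) :=
  (n : ℝ≥0∞)⁻¹ • ∑ i : Fin n, Measure.dirac ((((i : ℕ) : ℝ) + 1) / n, x i)

open Classical in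
/-- Bundle a measure as a probability measure, with a default value in the junk case. -/
noncomputable def toProb {α : Type*} [MeasurableSpace α] (d : ProbabilityMeasure α)
    (ν : Measure α) : ProbabilityMeasure α :=
  if h : IsProbabilityMeasure ν then ⟨ν, h⟩ else d

/-- `ρ = Unif[0,1] ⊗ μ` as a probability measure. -/
noncomputable def rhoP {X : Type*} [MeasurableSpace X] (μ : Measure X)
    [IsProbabilityMeasure μ] : ProbabilityMeasure (ℝ × X) :=
  ⟨unif01.prod μ, inferInstance⟩

/-- The bounded-Lipschitz distance `d_l` between two measures on `[0,1] × 𝒳`. -/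
noncomputable def dBL {X : Type*} [MeasurableSpace X] [MetricSpace X]
    (ν₁ ν₂ : Measure (ℝ × X)) : ℝ :=
  ⨆ f : {f : ℝ × X → ℝ // LipschitzWith 1 f ∧ ∀ z, f z ∈ Set.Icc (-1 : ℝ) 1},
    |∫ z, f.1 z ∂ν₁ - ∫ z, f.1 z ∂ν₂|

/-- Distance from a measure to a set of measures, in the metric `d_l`. -/
noncomputable def dBLSet {X : Type*} [MeasurableSpace X] [MetricSpace X]
    (ν : Measure (ℝ × X)) (F : Set (Measure (ℝ × X))) : ℝ :=
  ⨅ σ : F, dBL ν σ.1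

/-- The set `F_θ` of maximizers of `ν ↦ θ T_{W,φ}(ν) − D(ν|ρ)` over
`{ν ∈ 𝒯ℳ : D(ν|ρ) < ∞}`. -/
def Fset {X : Type*} [MeasurableSpace X] {v : ℕ} (G : SimpleGraph (Fin v))
    [DecidableRel G.Adj] (W : ℝ → ℝ → ℝ) (φ : (Fin v → X) → ℝ) (μ : Measure X)
    (θ : ℝ) : Set (Measure (ℝ × X)) :=
  {ν | inTM ν ∧ KLdiv ν (unif01.prod μ) ≠ ⊤ ∧
    ∀ σ : Measure (ℝ × X), inTM σ → KLdiv σ (unif01.prod μ) ≠ ⊤ →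
      θ * TWphi G W φ σ - (KLdiv σ (unif01.prod μ)).toReal ≤
        θ * TWphi G W φ ν - (KLdiv ν (unif01.prod μ)).toReal}

open Classical in
/-- The rate function `I_θ(ν) = D(ν|ρ) − θ T_{W,φ}(ν) − inf_σ {D(σ|ρ) − θ T_{W,φ}(σ)}`,
extended by `+∞` outside `{ν ∈ 𝒯ℳ : D(ν|ρ) < ∞}`. -/
noncomputable def Itheta {X : Type*} [MeasurableSpace X] {v : ℕ}
    (G : SimpleGraph (Fin v)) [DecidableRel G.Adj] (W : ℝ → ℝ → ℝ)
    (φ : (Fin v → X) → ℝ) (μ : Measure X) (θ : ℝ) (ν : Measure (ℝ × X)) : ℝ≥0∞ :=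
  if inTM ν ∧ KLdiv ν (unif01.prod μ) ≠ ⊤ then
    ENNReal.ofReal ((KLdiv ν (unif01.prod μ)).toReal - θ * TWphi G W φ ν -
      sInf {z : ℝ | ∃ σ : Measure (ℝ × X), inTM σ ∧ KLdiv σ (unif01.prod μ) ≠ ⊤ ∧
        z = (KLdiv σ (unif01.prod μ)).toReal - θ * TWphi G W φ σ})
  else ⊤
open Classical in
/-- The rate function of part (i): `D(ν|ρ)` on `𝒯ℳ` and `+∞` elsewhere. -/
noncomputable def sanovRate {X : Type*} [MeasurableSpace X] (μ : Measure X)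
    (ν : Measure (ℝ × X)) : ℝ≥0∞ :=
  if inTM ν then KLdiv ν (unif01.prod μ) else ⊤

/-- The random element `𝔏̃_n ∈ 𝒯ℳ`: the law of `(U, X_{⌈nU⌉})` given `X`,
where `U ~ Unif[0,1]` (junk default for `n = 0`). -/
noncomputable def tildeL {X : Type*} [MeasurableSpace X] (n : ℕ) (x : Fin n → X)
    (d : Measure (ℝ × X)) : Measure (ℝ × X) :=
  if h : 0 < n then
    unif01.map (fun u => (u, x ⟨min (n - 1) (⌈u * n⌉₊ - 1), by omega⟩))
  else d

open Classical in
/-- Bundle a measure as an element of `𝒯ℳ`, with a default for the junk case. -/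
noncomputable def toTMsub {X : Type*} [MeasurableSpace X]
    (d : {ν : ProbabilityMeasure (ℝ × X) // ν.toMeasure.map Prod.fst = unif01})
    (ν : Measure (ℝ × X)) :
    {ν : ProbabilityMeasure (ℝ × X) // ν.toMeasure.map Prod.fst = unif01} :=
  if h : IsProbabilityMeasure ν ∧ ν.map Prod.fst = unif01 then ⟨⟨ν, h.1⟩, h.2⟩ else d

/-- `ρ = Unif[0,1] ⊗ μ` as an element of `𝒯ℳ`. -/
noncomputable def rhoTM {X : Type*} [MeasurableSpace X] (μ : Measure X)
    [IsProbabilityMeasure μ] :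
    {ν : ProbabilityMeasure (ℝ × X) // ν.toMeasure.map Prod.fst = unif01} :=
  ⟨rhoP μ, by
    show (unif01.prod μ).map Prod.fst = unif01
    rw [Measure.map_fst_prod]; simp⟩

/-!
Both random measures are averages of products `κ i ⊗ δ_{X i}`, where the law `κ i` of the `i`-th
time lives on the cell `[i/n, (i+1)/n]`: a point mass for `𝔏_n`, the uniform law for `𝔏̃_n`. The
large deviation principle does not depend on the choice of the `κ i`.

*Upper bound.* `D(ν|ρ)` is the supremum of `∫ f dν - ∫ (exp f - 1) dρ` over bounded continuous `f`.
If it exceeds `a`, some `f` witnesses this, and Chernoff's inequality for the sum of the independent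
averages `∫ f(u, X i) dκ i(u)`, together with Jensen's inequality for these averages, gives decay at
rate `a` near `ν`. The time marginal of the random measures is deterministic and tends to
`Unif[0,1]`, so measures outside `𝒯ℳ` have a neighbourhood that is eventually not visited.

*Lower bound.* For `ν ∈ 𝒯ℳ`, let `X i` be independent with the conditional law of the second
coordinate under `ν`, given that the first one lies in the `i`-th cell. Then the random measures
converge to `ν` by Chebyshev's inequality, and the relative entropy of this change of measure is at
most `n D(ν|ρ)`, since relative entropy decreases under projections and adds up over disjoint cells.

Exponential tightness turns the local bounds into the large deviation principle on `ℳ`, and the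
principle passes to `𝒯ℳ` because the rate function is infinite off `𝒯ℳ`.
-/

open InformationTheory ProbabilityTheory
open scoped Topology BoundedContinuousFunction

section LargeDeviations

variable {E : Type*} [TopologicalSpace E] {Ω : ℕ → Type*} [∀ n, MeasurableSpace (Ω n)]
  {P : ∀ n, Measure (Ω n)} {T : ∀ n, Ω n → E} {I : E → ℝ≥0∞}

/-- The local form of the large deviation upper bound at speed `n`: near a point `x`, the laws of
`T n` decay at every exponential rate smaller than `I x`. -/
def LocalUpperBound (P : ∀ n, Measure (Ω n)) (T : ∀ n, Ω n → E) (I : E → ℝ≥0∞) : Prop :=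
  ∀ x, ∀ a : ℝ≥0, (a : ℝ≥0∞) < I x → ∃ V ∈ 𝓝 x, ∀ᶠ n : ℕ in atTop,
    P n {ω | T n ω ∈ V} ≤ ENNReal.ofReal (Real.exp (-(n * a)))

/-- The local form of the large deviation lower bound at speed `n`: every neighbourhood of a
point `x` with `I x < ∞` is charged at every exponential rate larger than `I x`. -/
def LocalLowerBound (P : ∀ n, Measure (Ω n)) (T : ∀ n, Ω n → E) (I : E → ℝ≥0∞) : Prop :=
  ∀ x, I x ≠ ∞ → ∀ V ∈ 𝓝 x, ∀ ε : ℝ, 0 < ε → ∀ᶠ n : ℕ in atTop,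
    ENNReal.ofReal (Real.exp (-(n * ((I x).toReal + ε)))) ≤ P n {ω | T n ω ∈ V}

/-- Exponential tightness at speed `n` of the laws of `T n`. -/
def ExponentiallyTight (P : ∀ n, Measure (Ω n)) (T : ∀ n, Ω n → E) : Prop :=
  ∀ M : ℝ≥0, ∃ K : Set E, IsCompact K ∧ ∀ᶠ n : ℕ in atTop,
    P n {ω | T n ω ∉ K} ≤ ENNReal.ofReal (Real.exp (-(n * M)))

lemma inv_mul_log_ofReal_exp_neg {n : ℕ} (hn : 0 < n) (a : ℝ) :
    (((n : ℝ)⁻¹ : ℝ) : EReal) * ENNReal.log (ENNReal.ofReal (Real.exp (-(n * a)))) =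
      ((-a : ℝ) : EReal) := by
  have hn0 : (n : ℝ) ≠ 0 := by positivity
  rw [ENNReal.log_ofReal, if_neg (Real.exp_pos _).not_ge, Real.log_exp, ← EReal.coe_mul]
  congr 1
  field_simp

lemma le_liminf_inv_mul_log {p : ℕ → ℝ≥0∞} {z : ℝ}
    (h : ∀ᶠ n : ℕ in atTop, ENNReal.ofReal (Real.exp (-(n * z))) ≤ p n) :
    ((-z : ℝ) : EReal) ≤
      atTop.liminf fun n : ℕ => (((n : ℝ)⁻¹ : ℝ) : EReal) * ENNReal.log (p n) := by
  refine le_liminf_of_le (by isBoundedDefault) ?_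
  filter_upwards [h, eventually_gt_atTop 0] with n hpn hn
  rw [← inv_mul_log_ofReal_exp_neg hn z]
  gcongr

lemma limsup_inv_mul_log_le {p : ℕ → ℝ≥0∞} {z : ℝ}
    (h : ∀ᶠ n : ℕ in atTop, p n ≤ ENNReal.ofReal (Real.exp (-(n * z)))) :
    (atTop.limsup fun n : ℕ => (((n : ℝ)⁻¹ : ℝ) : EReal) * ENNReal.log (p n)) ≤
      ((-z : ℝ) : EReal) := by
  refine limsup_le_of_le (by isBoundedDefault) ?_
  filter_upwards [h, eventually_gt_atTop 0] with n hpn hn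
  rw [← inv_mul_log_ofReal_exp_neg hn z]
  gcongr

lemma limsup_inv_mul_log_nonpos {p : ℕ → ℝ≥0∞} (h : ∀ n, p n ≤ 1) :
    (atTop.limsup fun n : ℕ => (((n : ℝ)⁻¹ : ℝ) : EReal) * ENNReal.log (p n)) ≤ 0 := by
  simpa using limsup_inv_mul_log_le (z := 0) (Eventually.of_forall fun n => by simpa using h n)

lemma eventually_const_mul_exp_neg_le (C : ℝ) {z m : ℝ} (hzm : z < m) :
    ∀ᶠ n : ℕ in atTop, C * Real.exp (-(n * m)) ≤ Real.exp (-(n * z)) := by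
  have hlim : Tendsto (fun n : ℕ => Real.exp (n * (m - z))) atTop atTop :=
    Real.tendsto_exp_atTop.comp (tendsto_natCast_atTop_atTop.atTop_mul_const (sub_pos.2 hzm))
  filter_upwards [hlim.eventually_ge_atTop C] with n hn
  calc C * Real.exp (-(n * m)) ≤ Real.exp (n * (m - z)) * Real.exp (-(n * m)) := by gcongr
    _ = Real.exp (-(n * z)) := by rw [← Real.exp_add]; ring_nf

lemma LocalLowerBound.le_of_eventually_le (hL : LocalLowerBound P T I) {x : E} {V : Set E}
    (hV : V ∈ 𝓝 x) {a : ℝ≥0}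
    (hdecay : ∀ᶠ n : ℕ in atTop, P n {ω | T n ω ∈ V} ≤ ENNReal.ofReal (Real.exp (-(n * a)))) :
    a ≤ I x := by
  by_contra! hlt
  have hfin : I x ≠ ∞ := hlt.ne_top
  have hlt' : (I x).toReal < a := ENNReal.toReal_lt_of_lt_ofReal (by simpa using hlt)
  obtain ⟨n, hn, hlower, hupper⟩ := ((eventually_gt_atTop 0).and
    ((hL x hfin V hV ((a - (I x).toReal) / 2) (by linarith)).and hdecay)).exists
  have hexp := hlower.trans hupper
  rw [ENNReal.ofReal_le_ofReal_iff (Real.exp_pos _).le, Real.exp_le_exp] at hexp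
  have : (0 : ℝ) < n := mod_cast hn
  nlinarith

lemma LocalLowerBound.neg_iInf_interior_le_liminf (hL : LocalLowerBound P T I) (F : Set E) :
    -(⨅ x ∈ interior F, (I x : EReal)) ≤
      atTop.liminf fun n : ℕ =>
        (((n : ℝ)⁻¹ : ℝ) : EReal) * ENNReal.log (P n {ω | T n ω ∈ F}) := by
  rw [EReal.neg_le]
  refine le_iInf₂ fun x hx => ?_
  rw [EReal.neg_le]
  by_cases hfin : I x = ∞
  · simp [hfin]
  refine EReal.ge_of_forall_gt_iff_ge.1 fun z hz => ?_
  rw [← EReal.coe_ennreal_toReal hfin, ← EReal.coe_neg, EReal.coe_lt_coe_iff] at hz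
  have hF := hL x hfin F (mem_interior_iff_mem_nhds.1 hx) (-z - (I x).toReal) (by linarith)
  rw [add_sub_cancel] at hF
  simpa using le_liminf_inv_mul_log hF

lemma LocalUpperBound.exists_eventually_le_of_isCompact (hU : LocalUpperBound P T I)
    {K : Set E} (hK : IsCompact K) {a : ℝ≥0} (ha : ∀ x ∈ K, (a : ℝ≥0∞) < I x) :
    ∃ C : ℝ≥0, ∀ᶠ n : ℕ in atTop,
      P n {ω | T n ω ∈ K} ≤ C * ENNReal.ofReal (Real.exp (-(n * a))) := by
  refine hK.induction_on (p := fun S => ∃ C : ℝ≥0, ∀ᶠ n : ℕ in atTop,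
    P n {ω | T n ω ∈ S} ≤ C * ENNReal.ofReal (Real.exp (-(n * a)))) ?_ ?_ ?_ ?_
  · exact ⟨0, Eventually.of_forall fun n => by simp⟩
  · rintro S S' hSS' ⟨C, hC⟩
    exact ⟨C, hC.mono fun n hn => le_trans (measure_mono fun ω hω => hSS' hω) hn⟩
  · rintro S S' ⟨C, hC⟩ ⟨C', hC'⟩
    refine ⟨C + C', ?_⟩
    filter_upwards [hC, hC'] with n hn hn'
    rw [ENNReal.coe_add, add_mul]
    exact (measure_union_le {ω | T n ω ∈ S} {ω | T n ω ∈ S'}).trans (add_le_add hn hn')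
  · intro x hx
    obtain ⟨V, hV, hVn⟩ := hU x a (ha x hx)
    exact ⟨V, mem_nhdsWithin_of_mem_nhds hV, 1, by simpa using hVn⟩

lemma ExponentiallyTight.eventually_le_of_forall_closure_lt (hT : ExponentiallyTight P T)
    (hU : LocalUpperBound P T I) {F : Set E} {m : ℝ≥0} {z : ℝ} (hzm : z < m)
    (hF : ∀ x ∈ closure F, (m : ℝ≥0∞) < I x) :
    ∀ᶠ n : ℕ in atTop, P n {ω | T n ω ∈ F} ≤ ENNReal.ofReal (Real.exp (-(n * z))) := by
  obtain ⟨K, hK, hKm⟩ := hT m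
  obtain ⟨C, hC⟩ := hU.exists_eventually_le_of_isCompact (hK.inter_right isClosed_closure)
    fun x hx => hF x hx.2
  filter_upwards [hC, hKm, eventually_const_mul_exp_neg_le (C + 1) hzm] with n hCn hKn hzn
  have hcover : {ω | T n ω ∈ F} ⊆ {ω | T n ω ∈ K ∩ closure F} ∪ {ω | T n ω ∉ K} := fun ω hω =>
    or_iff_not_imp_right.2 fun hωK => ⟨not_not.1 hωK, subset_closure hω⟩
  calc P n {ω | T n ω ∈ F}
      ≤ P n {ω | T n ω ∈ K ∩ closure F} + P n {ω | T n ω ∉ K} :=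
        (measure_mono hcover).trans (measure_union_le _ _)
    _ ≤ C * ENNReal.ofReal (Real.exp (-(n * m))) + ENNReal.ofReal (Real.exp (-(n * m))) := by
        gcongr
    _ = ENNReal.ofReal ((C + 1) * Real.exp (-(n * m))) := by
        rw [add_mul, one_mul, ENNReal.ofReal_add (by positivity) (by positivity),
          ENNReal.ofReal_mul C.coe_nonneg, ENNReal.ofReal_coe_nnreal]
    _ ≤ ENNReal.ofReal (Real.exp (-(n * z))) := ENNReal.ofReal_le_ofReal hzn

lemma ExponentiallyTight.limsup_le_neg_iInf_closure [∀ n, IsProbabilityMeasure (P n)]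
    (hT : ExponentiallyTight P T) (hU : LocalUpperBound P T I) (F : Set E) :
    (atTop.limsup fun n : ℕ =>
        (((n : ℝ)⁻¹ : ℝ) : EReal) * ENNReal.log (P n {ω | T n ω ∈ F})) ≤
      -(⨅ x ∈ closure F, (I x : EReal)) := by
  rw [EReal.le_neg]
  refine EReal.ge_of_forall_gt_iff_ge.1 fun z hz => ?_
  rw [EReal.le_neg, ← EReal.coe_neg]
  rcases le_or_gt z 0 with hz0 | hz0
  · exact (limsup_inv_mul_log_nonpos fun n => prob_le_one).trans (mod_cast neg_nonneg.2 hz0)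
  obtain ⟨m, hzm, hm⟩ := EReal.lt_iff_exists_real_btwn.1 hz
  rw [EReal.coe_lt_coe_iff] at hzm
  lift m to ℝ≥0 using (hz0.trans hzm).le
  exact limsup_inv_mul_log_le <| hT.eventually_le_of_forall_closure_lt hU hzm fun x hx =>
    EReal.coe_ennreal_lt_coe_ennreal_iff.1 (hm.trans_le (iInf₂_le x hx))

lemma ExponentiallyTight.isCompact_setOf_le [T2Space E] (hT : ExponentiallyTight P T)
    (hU : LocalUpperBound P T I) (hL : LocalLowerBound P T I) {c : ℝ≥0∞} (hc : c ≠ ∞) :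
    IsCompact {x | I x ≤ c} := by
  lift c to ℝ≥0 using hc
  obtain ⟨K, hK, hKn⟩ := hT (c + 1)
  refine hK.of_isClosed_subset ?_ fun x (hx : I x ≤ c) => ?_
  · rw [← isOpen_compl_iff, isOpen_iff_mem_nhds]
    intro x hx
    obtain ⟨a, hca, hax⟩ := ENNReal.lt_iff_exists_nnreal_btwn.1 (not_le.1 hx)
    obtain ⟨V, hV, hVn⟩ := hU x a hax
    filter_upwards [eventually_mem_nhds_iff.2 hV] with y hy
    exact (hca.trans_le (hL.le_of_eventually_le hy hVn)).not_ge
  · by_contra hxK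
    have hle := (hL.le_of_eventually_le (hK.isClosed.isOpen_compl.mem_nhds hxK) hKn).trans hx
    exact (lt_add_one c).not_ge (ENNReal.coe_le_coe.1 hle)

theorem satisfiesLDP_of_local_bounds [T2Space E] [∀ n, IsProbabilityMeasure (P n)]
    (hU : LocalUpperBound P T I) (hL : LocalLowerBound P T I) (hT : ExponentiallyTight P T) :
    SatisfiesLDP P T I :=
  ⟨fun _ hc => hT.isCompact_setOf_le hU hL hc, fun F _ =>
    ⟨hL.neg_iInf_interior_le_liminf F, hT.limsup_le_neg_iInf_closure hU F⟩⟩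

theorem satisfiesLDP_of_subtypeVal {p : E → Prop} {T : ∀ n, Ω n → {x // p x}}
    (hI : ∀ x, ¬ p x → I x = ∞) (h : SatisfiesLDP P (fun n ω => (T n ω : E)) I) :
    SatisfiesLDP P T (fun x => I x) := by
  refine ⟨fun c hc => ?_, fun F _ => ⟨?_, ?_⟩⟩
  · have himage : Subtype.val '' {x : {x // p x} | I x ≤ c} = {x | I x ≤ c} := by
      refine Subset.antisymm (image_subset_iff.2 fun x hx => hx) fun x (hx : I x ≤ c) => ?_
      have hpx : p x := by_contra fun hpx => hc (top_le_iff.1 (hI x hpx ▸ hx))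
      exact ⟨⟨x, hpx⟩, hx, rfl⟩
    rw [Topology.IsEmbedding.subtypeVal.isCompact_iff, himage]
    exact h.1 c hc
  · obtain ⟨G, hG, hGF⟩ := isOpen_induced_iff.1 (isOpen_interior (s := F))
    have hLDP := (h.2 G (MeasurableSpace.measurableSet_generateFrom hG)).1
    rw [hG.interior_eq] at hLDP
    refine le_trans ?_ (hLDP.trans ?_)
    · rw [EReal.neg_le_neg_iff]
      exact le_iInf₂ fun x hx => iInf₂_le x.1 (by rwa [← hGF] at hx)
    · refine liminf_le_liminf (Eventually.of_forall fun n => ?_)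
      dsimp only
      gcongr
      exact fun hω => interior_subset (s := F) (hGF ▸ hω)
  · have hLDP := (h.2 (closure (Subtype.val '' F)) (by
      borelize E
      exact isClosed_closure.measurableSet)).2
    rw [closure_closure] at hLDP
    refine le_trans ?_ (hLDP.trans ?_)
    · refine limsup_le_limsup (Eventually.of_forall fun n => ?_)
      dsimp only
      gcongr
      exact fun hω => subset_closure ⟨_, hω, rfl⟩
    · rw [EReal.neg_le_neg_iff]
      refine le_iInf₂ fun x hx => ?_
      by_cases hpx : p x
      · exact iInf₂_le (⟨x, hpx⟩ : {x // p x}) (closure_subtype.2 hx)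
      · simp [hI x hpx]

end LargeDeviations

section Variational

variable {α : Type*} [MeasurableSpace α]

lemma integrable_of_abs_le {m : Measure α} [IsFiniteMeasure m] {f : α → ℝ} (hf : Measurable f)
    {C : ℝ} (hC : ∀ x, |f x| ≤ C) : Integrable f m :=
  Integrable.of_bound hf.aestronglyMeasurable C (ae_of_all _ hC)

lemma integrable_exp_of_abs_le {m : Measure α} [IsFiniteMeasure m] {f : α → ℝ}
    (hf : Measurable f) {C : ℝ} (hC : ∀ x, |f x| ≤ C) : Integrable (fun x => Real.exp (f x)) m :=
  integrable_of_abs_le hf.exp fun x => by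
    rw [abs_of_pos (Real.exp_pos _)]
    exact Real.exp_le_exp.2 ((le_abs_self _).trans (hC x))

lemma integrable_exp_sub_one_of_abs_le {m : Measure α} [IsFiniteMeasure m] {f : α → ℝ}
    (hf : Measurable f) {C : ℝ} (hC : ∀ x, |f x| ≤ C) :
    Integrable (fun x => Real.exp (f x) - 1) m :=
  (integrable_exp_of_abs_le hf hC).sub (integrable_const 1)

lemma KLdiv_eq_klDiv (ν ρ : Measure α) [IsProbabilityMeasure ν] [IsProbabilityMeasure ρ] :
    KLdiv ν ρ = klDiv ν ρ := by
  simp [KLdiv, klDiv_def]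

/-- The functional of `f` whose supremum over bounded test functions is `klDiv ν ρ`. This is the
Donsker–Varadhan formula without the logarithm, which also holds for measures of arbitrary finite
mass. -/
noncomputable def dvFunctional (ν ρ : Measure α) (f : α → ℝ) : ℝ :=
  ∫ x, f x ∂ν - ∫ x, (Real.exp (f x) - 1) ∂ρ

lemma mul_le_klFun_add_exp_sub_one {r : ℝ} (hr : 0 ≤ r) (t : ℝ) :
    r * t ≤ klFun r + (Real.exp t - 1) := by
  rw [klFun_apply]
  rcases hr.eq_or_lt with rfl | hr
  · simp [(Real.exp_pos t).le]
  · have h := Real.add_one_le_exp (t - Real.log r)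
    rw [Real.exp_sub, Real.exp_log hr, le_div_iff₀ hr] at h
    linarith

theorem dvFunctional_le_toReal_klDiv {ν ρ : Measure α} [IsFiniteMeasure ν] [IsFiniteMeasure ρ]
    (hfin : klDiv ν ρ ≠ ∞) {f : α → ℝ} (hf : Measurable f) {C : ℝ} (hC : ∀ x, |f x| ≤ C) :
    dvFunctional ν ρ f ≤ (klDiv ν ρ).toReal := by
  obtain ⟨hac, hllr⟩ := klDiv_ne_top_iff.1 hfin
  have hkl := (integrable_klFun_rnDeriv_iff hac).2 hllr
  have hexp := integrable_exp_sub_one_of_abs_le hf hC (m := ρ)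
  rw [dvFunctional, toReal_klDiv_eq_integral_klFun hac, ← integral_rnDeriv_smul hac,
    sub_le_iff_le_add, ← integral_add hkl hexp]
  exact integral_mono ((integrable_rnDeriv_smul_iff hac).2 (integrable_of_abs_le hf hC))
    (hkl.add hexp) fun x => mul_le_klFun_add_exp_sub_one ENNReal.toReal_nonneg _

/-- The logarithm truncated to `[-k, k]`; it takes the value `-k` on `(-∞, 0]`. -/
noncomputable def truncLog (k : ℕ) (r : ℝ) : ℝ :=
  Real.log (max (Real.exp (-k)) (min r (Real.exp k)))

lemma exp_truncLog (k : ℕ) (r : ℝ) :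
    Real.exp (truncLog k r) = max (Real.exp (-k)) (min r (Real.exp k)) :=
  Real.exp_log (lt_max_of_lt_left (Real.exp_pos _))

lemma measurable_truncLog (k : ℕ) : Measurable (truncLog k) := by
  unfold truncLog
  fun_prop

lemma abs_truncLog_le (k : ℕ) (r : ℝ) : |truncLog k r| ≤ k := by
  have hk : (-k : ℝ) ≤ k := by linarith [k.cast_nonneg (α := ℝ)]
  rw [abs_le, ← Real.exp_le_exp, ← Real.exp_le_exp (x := truncLog k r), exp_truncLog]
  exact ⟨le_max_left _ _, max_le (Real.exp_le_exp.2 hk) (min_le_right _ _)⟩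

lemma truncLog_eq_log {k : ℕ} {r : ℝ} (hr : 0 < r) (hk : |Real.log r| ≤ k) :
    truncLog k r = Real.log r := by
  rw [abs_le, ← Real.exp_le_exp, ← Real.exp_le_exp (x := Real.log r), Real.exp_log hr] at hk
  rw [truncLog, min_eq_left hk.2, max_eq_right hk.1]

lemma exp_truncLog_sub_one_le (k : ℕ) (r : ℝ) :
    Real.exp (truncLog k r) - 1 ≤ r * truncLog k r := by
  set t := truncLog k r with ht
  have : (0 : ℝ) ≤ k := k.cast_nonneg
  have hmul : 0 ≤ (r - Real.exp t) * t := by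
    rcases le_total r (Real.exp (-k)) with hr | hr
    · have : t = -k := by rw [ht, truncLog, max_eq_left (min_le_of_left_le hr), Real.log_exp]
      exact mul_nonneg_of_nonpos_of_nonpos (by rw [this]; linarith) (by linarith)
    rcases le_total r (Real.exp k) with hr' | hr'
    · rw [ht, exp_truncLog, min_eq_left hr', max_eq_right hr, sub_self, zero_mul]
    · have : t = k := by
        rw [ht, truncLog, min_eq_right hr', max_eq_right (Real.exp_le_exp.2 (by linarith)),
          Real.log_exp]
      exact mul_nonneg (by rw [this]; linarith) (by linarith)
  have hkl := klFun_nonneg (Real.exp_pos t).le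
  rw [klFun_apply, Real.log_exp] at hkl
  linarith

lemma tendsto_mul_truncLog_sub_exp {r : ℝ} (hr : 0 ≤ r) :
    Tendsto (fun k : ℕ => r * truncLog k r - (Real.exp (truncLog k r) - 1)) atTop
      (𝓝 (klFun r)) := by
  rcases hr.eq_or_lt with rfl | hr
  · have hexp : Tendsto (fun k : ℕ => Real.exp (-(k : ℝ))) atTop (𝓝 0) :=
      Real.tendsto_exp_neg_atTop_nhds_zero.comp tendsto_natCast_atTop_atTop
    have hmin : ∀ k : ℕ, max (Real.exp (-(k : ℝ))) (min 0 (Real.exp k)) = Real.exp (-k) :=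
      fun k => max_eq_left (min_le_of_left_le (Real.exp_pos _).le)
    simpa [exp_truncLog, hmin, klFun_apply] using hexp.const_sub 1
  · refine tendsto_const_nhds.congr' ?_
    filter_upwards [tendsto_natCast_atTop_atTop.eventually_ge_atTop |Real.log r|] with k hk
    rw [truncLog_eq_log hr hk, Real.exp_log hr, klFun_apply]
    ring

lemma absolutelyContinuous_of_forall_dvFunctional_le {ν ρ : Measure α} [IsFiniteMeasure ν]
    {a : ℝ} (h : ∀ f : α → ℝ, Measurable f → ∀ C : ℝ≥0, (∀ x, |f x| ≤ C) →
      dvFunctional ν ρ f ≤ a) : ν ≪ ρ := by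
  refine Measure.AbsolutelyContinuous.mk fun s hs hs0 => ?_
  by_contra hne
  have hpos : 0 < ν.real s := ENNReal.toReal_pos hne (measure_ne_top _ _)
  obtain ⟨t, ht⟩ := exists_nat_gt (a / ν.real s)
  have hle := h (s.indicator fun _ => (t : ℝ)) (measurable_const.indicator hs) t fun x => by
    by_cases hx : x ∈ s <;> simp [hx]
  have hρ : ∫ x, (Real.exp (s.indicator (fun _ => (t : ℝ)) x) - 1) ∂ρ = 0 := by
    refine integral_eq_zero_of_ae ?_
    filter_upwards [measure_eq_zero_iff_ae_notMem.1 hs0] with x hx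
    simp [hx]
  rw [dvFunctional, hρ, integral_indicator_const _ hs, smul_eq_mul, sub_zero] at hle
  rw [div_lt_iff₀ hpos] at ht
  linarith

theorem klDiv_le_of_forall_dvFunctional_le {ν ρ : Measure α} [IsFiniteMeasure ν]
    [IsFiniteMeasure ρ] {a : ℝ≥0} (h : ∀ f : α → ℝ, Measurable f → ∀ C : ℝ≥0,
      (∀ x, |f x| ≤ C) → dvFunctional ν ρ f ≤ a) : klDiv ν ρ ≤ a := by
  have hac := absolutelyContinuous_of_forall_dvFunctional_le h
  rw [klDiv_eq_lintegral_klFun_of_ac hac]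
  set r : α → ℝ := fun x => (ν.rnDeriv ρ x).toReal
  have hr : Measurable r := (Measure.measurable_rnDeriv _ _).ennreal_toReal
  have hlog (k : ℕ) : Measurable fun x => truncLog k (r x) := (measurable_truncLog k).comp hr
  set φ : ℕ → α → ℝ := fun k x => r x * truncLog k (r x) - (Real.exp (truncLog k (r x)) - 1)
  have hφ (k : ℕ) : ∫⁻ x, ENNReal.ofReal (φ k x) ∂ρ ≤ a := by
    have hi : Integrable (fun x => r x * truncLog k (r x)) ρ :=
      (integrable_rnDeriv_smul_iff hac).2
        (integrable_of_abs_le (hlog k) fun x => abs_truncLog_le k _)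
    have hi' : Integrable (fun x => Real.exp (truncLog k (r x)) - 1) ρ :=
      integrable_exp_sub_one_of_abs_le (hlog k) fun x => abs_truncLog_le k _
    have hφi : Integrable (φ k) ρ := hi.sub hi'
    rw [← ofReal_integral_eq_lintegral_ofReal hφi
      (ae_of_all _ fun x => sub_nonneg.2 (exp_truncLog_sub_one_le k _)),
      ← ENNReal.ofReal_coe_nnreal]
    refine ENNReal.ofReal_le_ofReal ?_
    have hdv := h _ (hlog k) k fun x => abs_truncLog_le k _
    rw [dvFunctional, ← integral_rnDeriv_smul hac] at hdv
    exact (integral_sub hi hi').trans_le hdv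
  calc ∫⁻ x, ENNReal.ofReal (klFun (r x)) ∂ρ
      = ∫⁻ x, liminf (fun k => ENNReal.ofReal (φ k x)) atTop ∂ρ := lintegral_congr fun x =>
        (ENNReal.tendsto_ofReal
          (tendsto_mul_truncLog_sub_exp ENNReal.toReal_nonneg)).liminf_eq.symm
    _ ≤ liminf (fun k => ∫⁻ x, ENNReal.ofReal (φ k x) ∂ρ) atTop :=
        lintegral_liminf_le fun k => (((hr.mul (hlog k)).sub
          ((hlog k).exp.sub_const 1))).ennreal_ofReal
    _ ≤ a := liminf_le_of_frequently_le' (Frequently.of_forall hφ)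

lemma exp_sub_exp_le_exp_mul_abs {a b C : ℝ} (ha : a ≤ C) :
    Real.exp a - Real.exp b ≤ Real.exp C * |a - b| := by
  have hb : Real.exp a * (b - a + 1) ≤ Real.exp b := by
    calc Real.exp a * (b - a + 1) ≤ Real.exp a * Real.exp (b - a) := by
          gcongr
          exact Real.add_one_le_exp _
      _ = Real.exp b := by rw [← Real.exp_add, add_sub_cancel]
  calc Real.exp a - Real.exp b ≤ Real.exp a * (a - b) := by linarith
    _ ≤ Real.exp a * |a - b| := by gcongr; exact le_abs_self _
    _ ≤ Real.exp C * |a - b| := by gcongr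

lemma dvFunctional_le_add {ν ρ : Measure α} [IsFiniteMeasure ν] [IsFiniteMeasure ρ]
    {f g : α → ℝ} (hf : Measurable f) (hg : Measurable g) {C : ℝ} (hfC : ∀ x, |f x| ≤ C)
    (hgC : ∀ x, |g x| ≤ C) :
    dvFunctional ν ρ f ≤
      dvFunctional ν ρ g + (1 + Real.exp C) * ∫ x, |f x - g x| ∂(ν + ρ) := by
  have hf' {m : Measure α} [IsFiniteMeasure m] : Integrable f m := integrable_of_abs_le hf hfC
  have hg' {m : Measure α} [IsFiniteMeasure m] : Integrable g m := integrable_of_abs_le hg hgC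
  have hdist {m : Measure α} [IsFiniteMeasure m] : Integrable (fun x => |f x - g x|) m :=
    (hf'.sub hg').abs
  have hν : ∫ x, f x ∂ν - ∫ x, g x ∂ν ≤ ∫ x, |f x - g x| ∂ν := by
    rw [← integral_sub hf' hg']
    exact integral_mono (hf'.sub hg') hdist fun x => le_abs_self _
  have hρ : ∫ x, (Real.exp (g x) - 1) ∂ρ - ∫ x, (Real.exp (f x) - 1) ∂ρ ≤
      Real.exp C * ∫ x, |f x - g x| ∂ρ := by
    have hexpf := integrable_exp_sub_one_of_abs_le hf hfC (m := ρ)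
    have hexpg := integrable_exp_sub_one_of_abs_le hg hgC (m := ρ)
    rw [← integral_sub hexpg hexpf, ← integral_const_mul]
    refine integral_mono (hexpg.sub hexpf) (hdist.const_mul _) fun x => ?_
    rw [abs_sub_comm]
    linarith [exp_sub_exp_le_exp_mul_abs (b := f x) ((le_abs_self _).trans (hgC x))]
  have hν0 : 0 ≤ ∫ x, |f x - g x| ∂ν := integral_nonneg fun _ => abs_nonneg _
  have hρ0 : 0 ≤ ∫ x, |f x - g x| ∂ρ := integral_nonneg fun _ => abs_nonneg _
  rw [dvFunctional, dvFunctional, integral_add_measure hdist hdist]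
  linarith [mul_nonneg (Real.exp_pos C).le hν0]

variable [TopologicalSpace α] [BorelSpace α]

lemma abs_sub_max_min_le {C a b : ℝ} (ha : |a| ≤ C) : |a - max (-C) (min C b)| ≤ |a - b| := by
  have hclamp : max (-C) (min C a) = a := by
    rw [min_eq_right (abs_le.1 ha).2, max_eq_right (abs_le.1 ha).1]
  calc |a - max (-C) (min C b)| = |max (-C) (min C a) - max (-C) (min C b)| := by rw [hclamp]
    _ ≤ |min C a - min C b| := (abs_max_sub_max_le_max _ _ _ _).trans (by simp)
    _ ≤ |a - b| := (abs_min_sub_min_le_max _ _ _ _).trans (by simp)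

lemma exists_boundedContinuous_integral_abs_sub_le [NormalSpace α] {m : Measure α}
    [IsFiniteMeasure m] [m.WeaklyRegular] {f : α → ℝ} (hf : Measurable f) {C : ℝ≥0}
    (hC : ∀ x, |f x| ≤ C) {ε : ℝ} (hε : 0 < ε) :
    ∃ g : α →ᵇ ℝ, (∀ x, |g x| ≤ C) ∧ ∫ x, |f x - g x| ∂m ≤ ε := by
  obtain ⟨g, hg, hgi⟩ :=
    (integrable_of_abs_le hf hC (m := m)).exists_boundedContinuous_integral_sub_le hε
  refine ⟨.const α (-C : ℝ) ⊔ (.const α (C : ℝ) ⊓ g), fun x => abs_le.2 ⟨le_max_left _ _, ?_⟩, ?_⟩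
  · exact max_le (neg_le_self C.coe_nonneg) (min_le_left _ _)
  · refine (integral_mono_of_nonneg (ae_of_all _ fun x => abs_nonneg _)
      ((integrable_of_abs_le hf hC).sub hgi).norm (ae_of_all _ fun x => ?_)).trans hg
    exact abs_sub_max_min_le (hC x)

theorem exists_boundedContinuous_lt_dvFunctional [NormalSpace α] {ν ρ : Measure α}
    [IsFiniteMeasure ν] [IsFiniteMeasure ρ] [(ν + ρ).WeaklyRegular] {a : ℝ≥0}
    (ha : a < klDiv ν ρ) : ∃ f : α →ᵇ ℝ, (a : ℝ) < dvFunctional ν ρ f := by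
  by_contra! hle
  refine ha.not_ge (klDiv_le_of_forall_dvFunctional_le fun f hf C hC => ?_)
  refine le_of_forall_pos_le_add fun ε hε => ?_
  have hexp : 0 < 1 + Real.exp C := by positivity
  obtain ⟨g, hgC, hfg⟩ := exists_boundedContinuous_integral_abs_sub_le (m := ν + ρ) hf hC
    (div_pos hε hexp)
  calc dvFunctional ν ρ f
      ≤ dvFunctional ν ρ g + (1 + Real.exp C) * ∫ x, |f x - g x| ∂(ν + ρ) :=
        dvFunctional_le_add hf g.continuous.measurable hC hgC
    _ ≤ a + (1 + Real.exp C) * (ε / (1 + Real.exp C)) := by gcongr; exact hle g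
    _ = a + ε := by rw [mul_div_cancel₀ _ hexp.ne']

end Variational

section Entropy

variable {α β : Type*} [MeasurableSpace α] [MeasurableSpace β]

lemma mul_measureReal_le_toReal_klDiv_add {ν ρ : Measure α} [IsFiniteMeasure ν]
    [IsFiniteMeasure ρ] (hfin : klDiv ν ρ ≠ ∞) {s : Set α} (hs : MeasurableSet s) (t : ℝ) :
    t * ν.real s ≤ (klDiv ν ρ).toReal + (Real.exp t - 1) * ρ.real s := by
  have hdv := dvFunctional_le_toReal_klDiv hfin (f := s.indicator fun _ => t)
    (measurable_const.indicator hs) (C := |t|) fun x => by by_cases hx : x ∈ s <;> simp [hx]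
  have hexp : (fun x => Real.exp (s.indicator (fun _ => t) x) - 1) =
      s.indicator fun _ => Real.exp t - 1 := by
    ext x
    by_cases hx : x ∈ s <;> simp [hx]
  rw [dvFunctional, hexp, integral_indicator_const _ hs, integral_indicator_const _ hs,
    smul_eq_mul, smul_eq_mul] at hdv
  linarith

/-- The change of measure behind the large deviation lower bound. -/
lemma ofReal_exp_neg_le_measure {ν ρ : Measure α} [IsProbabilityMeasure ν]
    [IsProbabilityMeasure ρ] (hfin : klDiv ν ρ ≠ ∞) {s : Set α} {q t : ℝ} (hq : 0 ≤ q) (ht : 0 ≤ t)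
    (hs : ν sᶜ ≤ ENNReal.ofReal q) (hqt : (klDiv ν ρ).toReal + 1 ≤ t * (1 - q)) :
    ENNReal.ofReal (Real.exp (-t)) ≤ ρ s := by
  set A := (toMeasurable ν sᶜ)ᶜ with hA
  have hAs : A ⊆ s := compl_subset_comm.1 (subset_toMeasurable ν sᶜ)
  have hνA : 1 - q ≤ ν.real A := by
    have hsq : ν.real (toMeasurable ν sᶜ) ≤ q :=
      ENNReal.toReal_le_of_le_ofReal hq (by rwa [measure_toMeasurable])
    rw [hA, probReal_compl_eq_one_sub (measurableSet_toMeasurable _ _)]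
    linarith
  have hentropy := mul_measureReal_le_toReal_klDiv_add hfin
    (measurableSet_toMeasurable ν sᶜ).compl t
  have hone : 1 ≤ Real.exp t * ρ.real A := by
    nlinarith [mul_le_mul_of_nonneg_left hνA ht, measureReal_nonneg (μ := ρ) (s := A)]
  refine le_trans ?_ (measure_mono hAs)
  rw [← ofReal_measureReal, Real.exp_neg]
  exact ENNReal.ofReal_le_ofReal ((inv_le_iff_one_le_mul₀' (Real.exp_pos t)).2 hone)

lemma klDiv_map_measurableEquiv (ν ρ : Measure α) [IsFiniteMeasure ν] [IsFiniteMeasure ρ]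
    (e : α ≃ᵐ β) : klDiv (ν.map e) (ρ.map e) = klDiv ν ρ := by
  refine le_antisymm (klDiv_map_le ν ρ e.measurable) ?_
  simpa using klDiv_map_le (ν.map e) (ρ.map e) e.symm.measurable

theorem klDiv_prod (ν ρ : Measure α) (ν' ρ' : Measure β) [IsProbabilityMeasure ν]
    [IsFiniteMeasure ρ] [IsProbabilityMeasure ν'] [IsProbabilityMeasure ρ'] :
    klDiv (ν.prod ν') (ρ.prod ρ') = klDiv ν ρ + klDiv ν' ρ' := by
  have hswap : klDiv (ν.prod ν') (ν.prod ρ') = klDiv (ν'.prod ν) (ρ'.prod ν) := by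
    rw [← Measure.prod_swap (μ := ν) (ν := ν'), ← Measure.prod_swap (μ := ν) (ν := ρ')]
    exact (klDiv_map_measurableEquiv _ _ MeasurableEquiv.prodComm).symm
  rw [← Measure.compProd_const, ← Measure.compProd_const, klDiv_compProd_eq_add,
    Measure.compProd_const, Measure.compProd_const, hswap, ← Measure.compProd_const,
    ← Measure.compProd_const, klDiv_compProd_left]

theorem klDiv_pi {n : ℕ} {α : Fin n → Type*} [∀ i, MeasurableSpace (α i)]
    (ν ρ : ∀ i, Measure (α i)) [∀ i, IsProbabilityMeasure (ν i)]
    [∀ i, IsProbabilityMeasure (ρ i)] :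
    klDiv (Measure.pi ν) (Measure.pi ρ) = ∑ i, klDiv (ν i) (ρ i) := by
  induction n with
  | zero => simp [Subsingleton.elim ν ρ]
  | succ n ih =>
    rw [← klDiv_map_measurableEquiv _ _ (MeasurableEquiv.piFinSuccAbove α 0),
      (measurePreserving_piFinSuccAbove ν 0).map_eq, (measurePreserving_piFinSuccAbove ρ 0).map_eq,
      klDiv_prod, ih, Fin.sum_univ_succ]
    rfl

lemma klDiv_restrict_eq_setLIntegral {ν ρ : Measure α} [IsFiniteMeasure ν] [IsFiniteMeasure ρ]
    (hac : ν ≪ ρ) {s : Set α} (hs : MeasurableSet s) :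
    klDiv (ν.restrict s) (ρ.restrict s) =
      ∫⁻ x in s, ENNReal.ofReal (klFun (ν.rnDeriv ρ x).toReal) ∂ρ := by
  have hdensity : ν.restrict s = (ρ.restrict s).withDensity (ν.rnDeriv ρ) := by
    rw [← restrict_withDensity hs, Measure.withDensity_rnDeriv_eq _ _ hac]
  have hrn : (ν.restrict s).rnDeriv (ρ.restrict s) =ᵐ[ρ.restrict s] ν.rnDeriv ρ := by
    rw [hdensity]
    exact Measure.rnDeriv_withDensity _ (Measure.measurable_rnDeriv _ _)
  rw [klDiv_eq_lintegral_klFun_of_ac (hac.restrict s)]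
  refine lintegral_congr_ae ?_
  filter_upwards [hrn] with x hx
  rw [hx]

theorem sum_klDiv_restrict_le {ι : Type*} [Fintype ι] (ν ρ : Measure α) [IsFiniteMeasure ν]
    [IsFiniteMeasure ρ] {s : ι → Set α} (hs : ∀ i, MeasurableSet (s i))
    (hdisj : Pairwise fun i j => Disjoint (s i) (s j)) :
    ∑ i, klDiv (ν.restrict (s i)) (ρ.restrict (s i)) ≤ klDiv ν ρ := by
  by_cases hac : ν ≪ ρ
  · simp_rw [klDiv_restrict_eq_setLIntegral hac (hs _)]
    rw [klDiv_eq_lintegral_klFun_of_ac hac, ← tsum_fintype (L := .unconditional _),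
      ← lintegral_iUnion hs hdisj]
    exact setLIntegral_le_lintegral _ _
  · simp [klDiv_of_not_ac hac]

end Entropy

section ProductMeasures

variable {ι : Type*} [Fintype ι] {α : ι → Type*} {g : ∀ i, α i → ℝ} {C : ℝ}

lemma abs_sum_eval_le (hC : ∀ i x, |g i x| ≤ C) (x : ∀ i, α i) :
    |∑ i, g i (x i)| ≤ Fintype.card ι * C :=
  calc |∑ i, g i (x i)| ≤ ∑ i, |g i (x i)| := Finset.abs_sum_le_sum_abs _ _
    _ ≤ ∑ _i : ι, C := Finset.sum_le_sum fun i _ => hC i (x i)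
    _ = Fintype.card ι * C := by simp

variable [∀ i, MeasurableSpace (α i)] {μ : ∀ i, Measure (α i)} [∀ i, IsProbabilityMeasure (μ i)]

lemma measure_pi_le_sum_eval_le (hg : ∀ i, Measurable (g i)) (hC : ∀ i x, |g i x| ≤ C) (s : ℝ) :
    Measure.pi μ {x | s ≤ ∑ i, g i (x i)} ≤
      ENNReal.ofReal (Real.exp (-s) * ∏ i, ∫ x, Real.exp (g i x) ∂μ i) := by
  have hmgf := measure_ge_le_exp_mul_mgf (μ := Measure.pi μ)
    (X := fun x : ∀ i, α i => ∑ i, g i (x i)) s zero_le_one (by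
      simpa only [one_mul] using
        integrable_exp_of_abs_le (by fun_prop) (abs_sum_eval_le hC))
  simp only [mgf, neg_mul, one_mul, Real.exp_sum] at hmgf
  rw [integral_fintype_prod_eq_prod (fun i x => Real.exp (g i x))] at hmgf
  rw [← ofReal_measureReal]
  exact ENNReal.ofReal_le_ofReal hmgf

lemma integral_sum_eval (hg : ∀ i, Measurable (g i)) (hC : ∀ i x, |g i x| ≤ C) :
    ∫ x, ∑ i, g i (x i) ∂Measure.pi μ = ∑ i, ∫ x, g i x ∂μ i := by
  rw [integral_finsetSum (f := fun i (x : ∀ i, α i) => g i (x i)) _ fun i _ =>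
    integrable_of_abs_le ((hg i).comp (measurable_pi_apply i)) fun x => hC i (x i)]
  exact Finset.sum_congr rfl fun i _ => integral_comp_eval (hg i).aestronglyMeasurable

lemma measure_pi_le_abs_sum_eval_sub_le (hg : ∀ i, Measurable (g i)) (hC : ∀ i x, |g i x| ≤ C)
    {c : ℝ} (hc : 0 < c) :
    Measure.pi μ {x | c ≤ |∑ i, g i (x i) - ∑ i, ∫ x, g i x ∂μ i|} ≤
      ENNReal.ofReal (Fintype.card ι * C ^ 2 / c ^ 2) := by
  have hmem (i : ι) : MemLp (g i) 2 (μ i) :=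
    .of_bound (hg i).aestronglyMeasurable C (ae_of_all _ (hC i))
  have hvar : variance (∑ i, fun x : ∀ i, α i => g i (x i)) (Measure.pi μ) ≤
      Fintype.card ι * C ^ 2 := by
    rw [variance_sum_pi hmem, ← nsmul_eq_mul]
    refine Finset.sum_le_card_nsmul _ _ _ fun i _ => ?_
    refine (variance_le_sq_of_bounded (a := -C) (b := C)
      (ae_of_all _ fun x => abs_le.1 (hC i x)) (hg i).aemeasurable).trans_eq ?_
    ring
  have hsum : (∑ i, fun x : ∀ i, α i => g i (x i)) = fun x => ∑ i, g i (x i) := by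
    ext x
    simp
  have hmem_sum : MemLp (fun x : ∀ i, α i => ∑ i, g i (x i)) 2 (Measure.pi μ) :=
    .of_bound (Measurable.aestronglyMeasurable (by fun_prop)) _ (ae_of_all _ (abs_sum_eval_le hC))
  rw [hsum] at hvar
  rw [← integral_sum_eval hg hC]
  exact (meas_ge_le_variance_div_sq hmem_sum hc).trans (ENNReal.ofReal_le_ofReal (by gcongr))

lemma measure_pi_le_sum_indicator_le {A : ∀ i, Set (α i)} (hA : ∀ i, MeasurableSet (A i)) {t : ℝ}
    (hμA : ∀ i, μ i (A i) ≤ ENNReal.ofReal (Real.exp (-t))) (s : ℝ) :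
    Measure.pi μ {x | s ≤ ∑ i, (A i).indicator (fun _ => t) (x i)} ≤
      ENNReal.ofReal (Real.exp (Fintype.card ι - s)) := by
  have hexp (i : ι) : ∫ x, Real.exp ((A i).indicator (fun _ => t) x) ∂μ i ≤ Real.exp 1 := by
    have hind : (fun x => Real.exp ((A i).indicator (fun _ => t) x)) =
        fun x => 1 + (A i).indicator (fun _ => Real.exp t - 1) x := by
      ext x
      by_cases hx : x ∈ A i <;> simp [hx]
    rw [hind, integral_add (integrable_const _) ((integrable_const _).indicator (hA i)),
      integral_indicator_const _ (hA i)]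
    have hmul : Real.exp t * (μ i).real (A i) ≤ 1 := by
      rw [← le_inv_mul_iff₀ (Real.exp_pos t), ← Real.exp_neg, mul_one]
      exact ENNReal.toReal_le_of_le_ofReal (Real.exp_pos _).le (hμA i)
    simp only [integral_const, probReal_univ, smul_eq_mul, mul_one]
    nlinarith [Real.add_one_le_exp (1 : ℝ), measureReal_nonneg (μ := μ i) (s := A i)]
  refine (measure_pi_le_sum_eval_le (fun i => measurable_const.indicator (hA i)) (C := |t|)
    (fun i x => by by_cases hx : x ∈ A i <;> simp [hx]) s).trans (ENNReal.ofReal_le_ofReal ?_)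
  calc Real.exp (-s) * ∏ i, ∫ x, Real.exp ((A i).indicator (fun _ => t) x) ∂μ i
      ≤ Real.exp (-s) * ∏ _i : ι, Real.exp 1 := by
        gcongr with i
        exact hexp i
    _ = Real.exp (Fintype.card ι - s) := by
        rw [Finset.prod_const, ← Real.exp_nat_mul, ← Real.exp_add, Finset.card_univ]
        ring_nf

end ProductMeasures

section Cells

variable {n i : ℕ}

/-- The `i`-th of the cells `(i/n, (i+1)/n]`, `i < n`, into which `(0, 1]` is divided. -/
def cell (n i : ℕ) : Set ℝ := Ioc (i / n) ((i + 1) / n)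

lemma mem_cell_iff (hn : 0 < n) {u : ℝ} : u ∈ cell n i ↔ ⌈u * n⌉₊ = i + 1 := by
  have hn' : (0 : ℝ) < n := mod_cast hn
  rw [cell, mem_Ioc, div_lt_iff₀ hn', le_div_iff₀ hn', Nat.ceil_eq_iff i.succ_ne_zero]
  simp

lemma measurableSet_cell : MeasurableSet (cell n i) := measurableSet_Ioc

lemma pairwise_disjoint_cell (hn : 0 < n) :
    Pairwise fun i j : Fin n => Disjoint (cell n i) (cell n j) := fun i j hij => by
  refine Set.disjoint_left.2 fun u hi hj => ?_
  rw [mem_cell_iff hn] at hi hj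
  omega

lemma iUnion_cell (hn : 0 < n) : ⋃ i : Fin n, cell n i = Ioc 0 1 := by
  have hn' : (0 : ℝ) < n := mod_cast hn
  ext u
  have hpos : 0 < u ↔ 0 < ⌈u * n⌉₊ := by rw [Nat.ceil_pos, mul_pos_iff_of_pos_right hn']
  have hle : u ≤ 1 ↔ ⌈u * n⌉₊ ≤ n := by rw [Nat.ceil_le, mul_le_iff_le_one_left hn']
  simp only [mem_iUnion, mem_cell_iff hn, mem_Ioc, hpos, hle]
  exact ⟨fun ⟨i, hi⟩ => by omega, fun h => ⟨⟨⌈u * n⌉₊ - 1, by omega⟩, by simp; omega⟩⟩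

lemma volume_cell (hn : 0 < n) : volume (cell n i) = (n : ℝ≥0∞)⁻¹ := by
  rw [cell, Real.volume_Ioc, ← sub_div, add_sub_cancel_left, one_div,
    ENNReal.ofReal_inv_of_pos (mod_cast hn), ENNReal.ofReal_natCast]

lemma natCast_mul_inv_cancel (hn : 0 < n) : (n : ℝ≥0∞) * (n : ℝ≥0∞)⁻¹ = 1 :=
  ENNReal.mul_inv_cancel (mod_cast hn.ne') (ENNReal.natCast_ne_top n)

lemma unif01_eq_restrict_Ioc : unif01 = volume.restrict (Ioc 0 1) :=
  Measure.restrict_congr_set Ioc_ae_eq_Icc.symm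

lemma unif01_restrict_cell (hn : 0 < n) (i : Fin n) :
    unif01.restrict (cell n i) = volume.restrict (cell n i) := by
  rw [unif01_eq_restrict_Ioc, Measure.restrict_restrict measurableSet_cell,
    inter_eq_left.2 (iUnion_cell hn ▸ subset_iUnion (fun i : Fin n => cell n i) i)]

lemma sum_volume_restrict_cell (hn : 0 < n) :
    ∑ i : Fin n, volume.restrict (cell n i) = unif01 := by
  rw [unif01_eq_restrict_Ioc, ← iUnion_cell hn,
    Measure.restrict_iUnion (pairwise_disjoint_cell hn) fun _ => measurableSet_cell,
    Measure.sum_fintype]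

variable {X : Type*} [MeasurableSpace X] {ν : Measure (ℝ × X)}

/-- The conditional law of the second coordinate under `ν`, given that the first one lies in
`cell n i`; the normalization is that of measures whose first marginal is uniform. -/
noncomputable def cellLaw (n : ℕ) (ν : Measure (ℝ × X)) (i : ℕ) : Measure X :=
  (n : ℝ≥0∞) • (ν.restrict (Prod.fst ⁻¹' cell n i)).map Prod.snd

lemma inTM_unif01_prod (μ : Measure X) [IsProbabilityMeasure μ] : inTM (unif01.prod μ) :=
  ⟨inferInstance, by simp [Measure.map_fst_prod]⟩

lemma inTM.ae_mem_Ioc (hν : inTM ν) : ∀ᵐ z ∂ν, z.1 ∈ Ioc (0 : ℝ) 1 := by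
  refine ae_of_ae_map measurable_fst.aemeasurable (p := fun u => u ∈ Ioc (0 : ℝ) 1) ?_
  rw [hν.2, unif01_eq_restrict_Ioc]
  exact ae_restrict_mem measurableSet_Ioc

lemma inTM.sum_restrict_cell (hν : inTM ν) (hn : 0 < n) :
    ∑ i : Fin n, ν.restrict (Prod.fst ⁻¹' cell n i) = ν := by
  rw [← Measure.sum_fintype, ← Measure.restrict_iUnion
      (fun i j hij => (pairwise_disjoint_cell hn hij).preimage Prod.fst)
      fun i => measurable_fst measurableSet_cell,
    ← preimage_iUnion, iUnion_cell hn]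
  exact Measure.restrict_eq_self_of_ae_mem hν.ae_mem_Ioc

lemma inTM.isProbabilityMeasure_cellLaw (hν : inTM ν) (i : Fin n) :
    IsProbabilityMeasure (cellLaw n ν i) := by
  have hn : 0 < n := i.pos
  refine ⟨?_⟩
  rw [cellLaw, Measure.smul_apply, Measure.map_apply measurable_snd .univ, preimage_univ,
    Measure.restrict_apply_univ, ← Measure.map_apply measurable_fst measurableSet_cell, hν.2,
    ← Measure.restrict_apply_univ, unif01_restrict_cell hn, Measure.restrict_apply_univ,
    volume_cell hn, smul_eq_mul, natCast_mul_inv_cancel hn]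

lemma cellLaw_unif01_prod (μ : Measure X) [IsProbabilityMeasure μ] (i : Fin n) :
    cellLaw n (unif01.prod μ) i = μ := by
  have hn : 0 < n := i.pos
  rw [cellLaw, ← prod_univ, ← Measure.prod_restrict, Measure.map_snd_prod,
    unif01_restrict_cell hn, Measure.restrict_apply_univ, volume_cell hn, Measure.restrict_univ,
    smul_smul, natCast_mul_inv_cancel hn, one_smul]

lemma integral_cellLaw {g : X → ℝ} (hg : Measurable g) :
    ∫ x, g x ∂cellLaw n ν i = n * ∫ z in Prod.fst ⁻¹' cell n i, g z.2 ∂ν := by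
  rw [cellLaw, integral_smul_measure, integral_map measurable_snd.aemeasurable
    hg.aestronglyMeasurable, ENNReal.toReal_natCast, smul_eq_mul]

lemma measurable_apply_ceil_sub_one {g : ℕ → X → ℝ} (hg : ∀ i, Measurable (g i)) (n : ℕ) :
    Measurable fun z : ℝ × X => g (⌈z.1 * n⌉₊ - 1) z.2 := by
  have huncurry : Measurable fun p : ℕ × X => g p.1 p.2 := measurable_from_prod_countable_right hg
  exact huncurry.comp (f := fun z : ℝ × X => (⌈z.1 * n⌉₊ - 1, z.2)) (by fun_prop)

lemma inTM.sum_integral_cellLaw (hν : inTM ν) (hn : 0 < n) {g : ℕ → X → ℝ}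
    (hg : ∀ i, Measurable (g i)) {C : ℝ} (hC : ∀ i x, |g i x| ≤ C) :
    (n : ℝ)⁻¹ * ∑ i : Fin n, ∫ x, g i x ∂cellLaw n ν i =
      ∫ z, g (⌈z.1 * n⌉₊ - 1) z.2 ∂ν := by
  have := hν.1
  have hcell (i : Fin n) : ∫ z in Prod.fst ⁻¹' cell n i, g (⌈z.1 * n⌉₊ - 1) z.2 ∂ν =
      ∫ z in Prod.fst ⁻¹' cell n i, g i z.2 ∂ν :=
    setIntegral_congr_fun (measurable_fst measurableSet_cell) fun z hz => by
      simp [(mem_cell_iff hn).1 hz]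
  conv_rhs => rw [← hν.sum_restrict_cell hn]
  rw [integral_finsetSum_measure fun i _ =>
    integrable_of_abs_le (measurable_apply_ceil_sub_one hg n) fun z => hC _ _]
  simp_rw [hcell, integral_cellLaw (hg _), ← Finset.mul_sum]
  rw [inv_mul_cancel_left₀ (mod_cast hn.ne')]

lemma inTM.sum_klDiv_cellLaw_le (hν : inTM ν) (μ : Measure X) [IsProbabilityMeasure μ] :
    ∑ i : Fin n, klDiv (cellLaw n ν i) μ ≤ n * klDiv ν (unif01.prod μ) := by
  have := hν.1
  rcases n.eq_zero_or_pos with rfl | hn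
  · simp
  calc ∑ i : Fin n, klDiv (cellLaw n ν i) μ
      = ∑ i : Fin n, klDiv (cellLaw n ν i) (cellLaw n (unif01.prod μ) i) := by
        simp_rw [cellLaw_unif01_prod]
    _ ≤ ∑ i : Fin n, n * klDiv (ν.restrict (Prod.fst ⁻¹' cell n i))
          ((unif01.prod μ).restrict (Prod.fst ⁻¹' cell n i)) := by
        gcongr with i
        exact (klDiv_smul_same (n : ℝ≥0)).trans_le
          (mul_le_mul_right (klDiv_map_le _ _ measurable_snd) _)
    _ ≤ n * klDiv ν (unif01.prod μ) := by
        rw [← Finset.mul_sum]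
        gcongr
        exact sum_klDiv_restrict_le _ _ (fun i => measurable_fst measurableSet_cell)
          fun i j hij => (pairwise_disjoint_cell hn hij).preimage Prod.fst

lemma inTM.klDiv_pi_cellLaw_le (hν : inTM ν) (μ : Measure X) [IsProbabilityMeasure μ] :
    klDiv (Measure.pi fun i : Fin n => cellLaw n ν i) (Measure.pi fun _ => μ) ≤
      n * klDiv ν (unif01.prod μ) := by
  have (i : Fin n) := hν.isProbabilityMeasure_cellLaw i
  exact (klDiv_pi _ _).trans_le (hν.sum_klDiv_cellLaw_le μ)

end Cells

section SmearedEmpiricalMeasures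

variable {X : Type*}

/-- The average over the time coordinate, with respect to `κ`, of a function of time and space. -/
noncomputable def timeAverage (κ : Measure ℝ) (f : ℝ × X → ℝ) (x : X) : ℝ :=
  ∫ u, f (u, x) ∂κ

section TimeAverage

variable {κ : Measure ℝ} [IsProbabilityMeasure κ] {f : ℝ × X → ℝ} {C : ℝ}

lemma abs_timeAverage_le (hC : ∀ z, |f z| ≤ C) (x : X) : |timeAverage κ f x| ≤ C := by
  simpa [timeAverage] using norm_integral_le_of_norm_le_const (μ := κ) (f := fun u => f (u, x))
    (ae_of_all _ fun u => hC (u, x))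

variable [MeasurableSpace X]

lemma measurable_timeAverage (hf : Measurable f) : Measurable (timeAverage κ f) :=
  hf.stronglyMeasurable.integral_prod_left'.measurable

lemma exp_timeAverage_le (hf : Measurable f) (hC : ∀ z, |f z| ≤ C) (x : X) :
    Real.exp (timeAverage κ f x) ≤ timeAverage κ (fun z => Real.exp (f z)) x := by
  have hfx : Measurable fun u => f (u, x) := hf.comp measurable_prodMk_right
  exact convexOn_exp.map_integral_le Real.continuous_exp.continuousOn isClosed_univ (by simp)
    (integrable_of_abs_le hfx fun u => hC _) (integrable_exp_of_abs_le hfx fun u => hC _)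

end TimeAverage

variable [MeasurableSpace X]

/-- The measures `κ i` are probability measures living on the closed cells `[i/n, (i+1)/n]`. -/
structure IsCellKernel (n : ℕ) (κ : ℕ → Measure ℝ) : Prop where
  isProbabilityMeasure : ∀ i, IsProbabilityMeasure (κ i)
  ae_mem_Icc : ∀ i : ℕ, ∀ᵐ u ∂κ i, u ∈ Icc ((i : ℝ) / n) ((i + 1) / n)

/-- The bivariate empirical measure of a sample, with the time of observation `i` (counted from
zero) drawn from `κ i`. Point masses at `(i+1)/n` give `𝔏_n`, uniform laws on cells give `𝔏̃_n`. -/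
noncomputable def smearedEmpirical (n : ℕ) (κ : ℕ → Measure ℝ) (x : Fin n → X) :
    Measure (ℝ × X) :=
  (n : ℝ≥0∞)⁻¹ • ∑ i : Fin n, (κ i).prod (Measure.dirac (x i))

lemma integral_smearedEmpirical {n : ℕ} {κ : ℕ → Measure ℝ} [∀ i, IsProbabilityMeasure (κ i)]
    {f : ℝ × X → ℝ} {C : ℝ} (hf : Measurable f) (hC : ∀ z, |f z| ≤ C) (x : Fin n → X) :
    ∫ z, f z ∂smearedEmpirical n κ x =
      (n : ℝ)⁻¹ * ∑ i : Fin n, timeAverage (κ i) f (x i) := by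
  have hdirac (i : Fin n) :
      ∫ z, f z ∂(κ i).prod (Measure.dirac (x i)) = timeAverage (κ i) f (x i) := by
    rw [integral_prod _ (integrable_of_abs_le hf hC), timeAverage]
    congr with u
    exact integral_dirac' _ _ (hf.comp measurable_prodMk_left).stronglyMeasurable
  rw [smearedEmpirical, integral_smul_measure,
    integral_finsetSum_measure fun i _ => integrable_of_abs_le hf hC]
  simp [hdirac]

lemma abs_integral_sub_le {α : Type*} [MeasurableSpace α] {m : Measure α} [IsProbabilityMeasure m]
    {g : α → ℝ} (hg : Integrable g m) {a δ : ℝ} (hδ : ∀ᵐ x ∂m, |g x - a| ≤ δ) :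
    |∫ x, g x ∂m - a| ≤ δ := by
  have hint : ∫ x, g x ∂m - a = ∫ x, (g x - a) ∂m := by simp [integral_sub hg]
  simpa [hint] using norm_integral_le_of_norm_le_const (f := fun x => g x - a) hδ

lemma tendsto_integral_of_ae_abs_sub_le {κ : ℕ → Measure ℝ} {g : ℝ → ℝ} {u : ℝ}
    (hg : ContinuousAt g u) (hκ : ∀ᶠ n in atTop, IsProbabilityMeasure (κ n) ∧
      Integrable g (κ n) ∧ ∀ᵐ v ∂κ n, |v - u| ≤ (n : ℝ)⁻¹) :
    Tendsto (fun n => ∫ v, g v ∂κ n) atTop (𝓝 (g u)) := by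
  rw [Metric.tendsto_nhds]
  intro δ hδ
  obtain ⟨η, hη, hgη⟩ := Metric.continuousAt_iff.1 hg (δ / 2) (half_pos hδ)
  filter_upwards [hκ, (tendsto_inv_atTop_nhds_zero_nat (𝕜 := ℝ)).eventually_lt_const hη]
    with n ⟨_, hint, hsupp⟩ hn
  refine (abs_integral_sub_le hint ?_).trans_lt (half_lt_self hδ)
  filter_upwards [hsupp] with v hv
  exact (hgη (hv.trans_lt hn)).le

variable {κ : ℕ → ℕ → Measure ℝ} {f : ℝ × X → ℝ} {C : ℝ}

lemma IsCellKernel.ae_abs_sub_le {n i : ℕ} {κ : ℕ → Measure ℝ} (hκ : IsCellKernel n κ) {u : ℝ}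
    (hu : u ∈ cell n i) : ∀ᵐ v ∂κ i, |v - u| ≤ (n : ℝ)⁻¹ := by
  filter_upwards [hκ.ae_mem_Icc i] with v hv
  have hlength : ((i : ℝ) + 1) / n = i / n + (n : ℝ)⁻¹ := by ring
  rw [abs_le]
  constructor <;> linarith [hu.1, hu.2, hv.1, hv.2]

lemma tendsto_timeAverage_ceil_sub_one (hκ : ∀ n, 0 < n → IsCellKernel n (κ n))
    (hf : Measurable f) (hcont : ∀ x, Continuous fun u => f (u, x)) (hC : ∀ z, |f z| ≤ C)
    {z : ℝ × X} (hz : 0 < z.1) :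
    Tendsto (fun n : ℕ => timeAverage (κ n (⌈z.1 * n⌉₊ - 1)) f z.2) atTop (𝓝 (f z)) := by
  refine tendsto_integral_of_ae_abs_sub_le (hcont z.2).continuousAt ?_
  filter_upwards [eventually_gt_atTop 0] with n hn
  have := (hκ n hn).isProbabilityMeasure
  refine ⟨inferInstance, integrable_of_abs_le (hf.comp measurable_prodMk_right) fun u => hC _,
    (hκ n hn).ae_abs_sub_le ((mem_cell_iff hn).2 (Nat.sub_add_cancel ?_).symm)⟩
  exact Nat.ceil_pos.2 (mul_pos hz (mod_cast hn))

theorem inTM.tendsto_sum_integral_timeAverage {ν : Measure (ℝ × X)} (hν : inTM ν)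
    (hκ : ∀ n, 0 < n → IsCellKernel n (κ n)) (hf : Measurable f)
    (hcont : ∀ x, Continuous fun u => f (u, x)) (hC : ∀ z, |f z| ≤ C) :
    Tendsto (fun n : ℕ => (n : ℝ)⁻¹ *
        ∑ i : Fin n, ∫ x, timeAverage (κ n i) f x ∂cellLaw n ν i) atTop
      (𝓝 (∫ z, f z ∂ν)) := by
  have := hν.1
  have hlim : Tendsto (fun n : ℕ => ∫ z, timeAverage (κ n (⌈z.1 * n⌉₊ - 1)) f z.2 ∂ν) atTop
      (𝓝 (∫ z, f z ∂ν)) := by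
    refine tendsto_integral_filter_of_dominated_convergence (fun _ => C) ?_ ?_
      (integrable_const C) ?_
    · filter_upwards [eventually_gt_atTop 0] with n hn
      have := (hκ n hn).isProbabilityMeasure
      exact (measurable_apply_ceil_sub_one
        (fun _ => measurable_timeAverage hf) n).aestronglyMeasurable
    · filter_upwards [eventually_gt_atTop 0] with n hn
      have := (hκ n hn).isProbabilityMeasure
      exact ae_of_all _ fun z => abs_timeAverage_le hC _
    · filter_upwards [hν.ae_mem_Ioc] with z hz
      exact tendsto_timeAverage_ceil_sub_one hκ hf hcont hC hz.1
  refine hlim.congr' ?_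
  filter_upwards [eventually_gt_atTop 0] with n hn
  have := (hκ n hn).isProbabilityMeasure
  exact (hν.sum_integral_cellLaw hn (fun _ => measurable_timeAverage hf)
    fun _ => abs_timeAverage_le hC).symm

theorem tendsto_sum_integral_timeAverage (μ : Measure X) [IsProbabilityMeasure μ]
    (hκ : ∀ n, 0 < n → IsCellKernel n (κ n)) (hf : Measurable f)
    (hcont : ∀ x, Continuous fun u => f (u, x)) (hC : ∀ z, |f z| ≤ C) :
    Tendsto (fun n : ℕ => (n : ℝ)⁻¹ * ∑ i : Fin n, ∫ x, timeAverage (κ n i) f x ∂μ) atTop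
      (𝓝 (∫ z, f z ∂unif01.prod μ)) := by
  simpa only [cellLaw_unif01_prod] using
    (inTM_unif01_prod μ).tendsto_sum_integral_timeAverage hκ hf hcont hC

end SmearedEmpiricalMeasures

section UpperBound

variable {X : Type*} [MeasurableSpace X]

lemma measure_pi_le_sum_timeAverage_le {ι : Type*} [Fintype ι] {κ : ι → Measure ℝ}
    [∀ i, IsProbabilityMeasure (κ i)] {μ : Measure X} [IsProbabilityMeasure μ]
    {f : ℝ × X → ℝ} {C : ℝ} (hf : Measurable f) (hC : ∀ z, |f z| ≤ C) (s : ℝ) :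
    Measure.pi (fun _ : ι => μ) {x | s ≤ ∑ i, timeAverage (κ i) f (x i)} ≤ ENNReal.ofReal
      (Real.exp (∑ i, (∫ x, timeAverage (κ i) (fun z => Real.exp (f z)) x ∂μ - 1) - s)) := by
  have hexpC (z : ℝ × X) : |Real.exp (f z)| ≤ Real.exp C := by
    rw [Real.abs_exp]
    exact Real.exp_le_exp.2 (abs_le.1 (hC z)).2
  have hjensen (i : ι) : ∫ x, Real.exp (timeAverage (κ i) f x) ∂μ ≤
      Real.exp (∫ x, timeAverage (κ i) (fun z => Real.exp (f z)) x ∂μ - 1) :=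
    calc ∫ x, Real.exp (timeAverage (κ i) f x) ∂μ
        ≤ ∫ x, timeAverage (κ i) (fun z => Real.exp (f z)) x ∂μ :=
          integral_mono
            (integrable_exp_of_abs_le (measurable_timeAverage hf) (abs_timeAverage_le hC))
            (integrable_of_abs_le (measurable_timeAverage hf.exp) (abs_timeAverage_le hexpC))
            (exp_timeAverage_le hf hC)
      _ ≤ _ := by
          simpa using Real.add_one_le_exp
            (∫ x, timeAverage (κ i) (fun z => Real.exp (f z)) x ∂μ - 1)
  refine (measure_pi_le_sum_eval_le (fun _ => measurable_timeAverage hf)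
    (fun _ => abs_timeAverage_le hC) s).trans (ENNReal.ofReal_le_ofReal ?_)
  rw [sub_eq_neg_add, Real.exp_add, Real.exp_sum]
  refine mul_le_mul_of_nonneg_left ?_ (Real.exp_pos _).le
  exact Finset.prod_le_prod (fun i _ => integral_nonneg fun x => (Real.exp_pos _).le)
    fun i _ => hjensen i

lemma tendsto_sum_integral_cellKernel {κ : ℕ → ℕ → Measure ℝ}
    (hκ : ∀ n, 0 < n → IsCellKernel n (κ n)) (g : ℝ →ᵇ ℝ) :
    Tendsto (fun n : ℕ => (n : ℝ)⁻¹ * ∑ i : Fin n, ∫ u, g u ∂κ n i) atTop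
      (𝓝 (∫ u, g u ∂unif01)) := by
  simpa [timeAverage, integral_fun_fst (μ := unif01)] using
    tendsto_sum_integral_timeAverage (f := fun z : ℝ × Unit => g z.1) (Measure.dirac ()) hκ
      (g.continuous.measurable.comp measurable_fst) (fun _ => g.continuous)
      fun z => g.norm_coe_le_norm z.1

variable [TopologicalSpace X] [PolishSpace X] [BorelSpace X] {κ : ℕ → ℕ → Measure ℝ}
  {T : ∀ n : ℕ, (Fin n → X) → ProbabilityMeasure (ℝ × X)} {ν : ProbabilityMeasure (ℝ × X)}

lemma exists_nhds_measure_pi_mem_le_of_lt_klDiv (hκ : ∀ n, 0 < n → IsCellKernel n (κ n))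
    (hT : ∀ n, 0 < n → ∀ x, (T n x : Measure (ℝ × X)) = smearedEmpirical n (κ n) x)
    {μ : Measure X} [IsProbabilityMeasure μ] {a : ℝ≥0} (ha : a < klDiv ν (unif01.prod μ)) :
    ∃ V ∈ 𝓝 ν, ∀ᶠ n : ℕ in atTop, Measure.pi (fun _ : Fin n => μ) {x | T n x ∈ V} ≤
      ENNReal.ofReal (Real.exp (-(n * a))) := by
  obtain ⟨f, hf⟩ := exists_boundedContinuous_lt_dvFunctional ha
  have hfm : Measurable f := f.continuous.measurable
  have hexp (z : ℝ × X) : |Real.exp (f z)| ≤ Real.exp ‖f‖ := by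
    rw [Real.abs_exp]
    exact Real.exp_le_exp.2 (f.apply_le_norm z)
  rw [dvFunctional, integral_sub (integrable_of_abs_le hfm.exp hexp) (integrable_const 1)] at hf
  simp only [integral_const, probReal_univ, smul_eq_mul, mul_one] at hf
  obtain ⟨c, hac, hcν⟩ := exists_between (lt_sub_iff_add_lt.1 hf)
  refine ⟨{ν' | c < ∫ z, f z ∂ν'}, (isOpen_lt continuous_const
    (ProbabilityMeasure.continuous_integral_boundedContinuousFunction f)).mem_nhds hcν, ?_⟩
  have hlim := tendsto_sum_integral_timeAverage μ hκ hfm.exp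
    (fun x => by fun_prop) hexp
  have hlt : ∫ z, Real.exp (f z) ∂unif01.prod μ < c - a + 1 := by linarith
  filter_upwards [hlim.eventually_lt_const hlt, eventually_gt_atTop 0] with n hmean hn
  have := (hκ n hn).isProbabilityMeasure
  have hn' : (0 : ℝ) < n := mod_cast hn
  rw [inv_mul_lt_iff₀ hn'] at hmean
  refine (measure_mono fun x (hx : c < _) => ?_).trans
    ((measure_pi_le_sum_timeAverage_le (κ := fun i : Fin n => κ n i) hfm
      f.norm_coe_le_norm (n * c)).trans
      (ENNReal.ofReal_le_ofReal (Real.exp_le_exp.2 ?_)))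
  · rw [hT n hn x, integral_smearedEmpirical hfm f.norm_coe_le_norm, lt_inv_mul_iff₀ hn'] at hx
    exact hx.le
  · simp only [Finset.sum_sub_distrib, Finset.sum_const, Finset.card_univ, Fintype.card_fin,
      nsmul_eq_mul, mul_one]
    linarith

lemma exists_nhds_eventually_notMem_of_not_inTM (hκ : ∀ n, 0 < n → IsCellKernel n (κ n))
    (hT : ∀ n, 0 < n → ∀ x, (T n x : Measure (ℝ × X)) = smearedEmpirical n (κ n) x)
    (hν : ¬inTM (ν : Measure (ℝ × X))) :
    ∃ V ∈ 𝓝 ν, ∀ᶠ n in atTop, ∀ x, T n x ∉ V := by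
  have hmarginal : (ν : Measure (ℝ × X)).map Prod.fst ≠ unif01 := fun h => hν ⟨inferInstance, h⟩
  obtain ⟨g, hg⟩ : ∃ g : ℝ →ᵇ ℝ, ∫ z, g z.1 ∂(ν : Measure (ℝ × X)) ≠ ∫ u, g u ∂unif01 := by
    contrapose! hmarginal
    have := Measure.isProbabilityMeasure_map (μ := (ν : Measure (ℝ × X)))
      measurable_fst.aemeasurable
    refine ext_of_forall_integral_eq_of_IsFiniteMeasure fun g => ?_
    rw [integral_map measurable_fst.aemeasurable g.continuous.aestronglyMeasurable, hmarginal g]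
  obtain ⟨U, hU, W, hW, hUW⟩ := Filter.disjoint_iff.1 (disjoint_nhds_nhds.2 hg)
  have hcont : Continuous fun ν' : ProbabilityMeasure (ℝ × X) =>
      ∫ z : ℝ × X, g z.1 ∂ν' :=
    ProbabilityMeasure.continuous_integral_boundedContinuousFunction
      (g.compContinuous ⟨Prod.fst, continuous_fst⟩)
  -- The first marginal of `T n x` does not depend on the sample `x`.
  refine ⟨_, hcont.continuousAt.preimage_mem_nhds hU, ?_⟩
  filter_upwards [(tendsto_sum_integral_cellKernel hκ g).eventually_mem hW,
    eventually_gt_atTop 0] with n hnW hn x hx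
  have := (hκ n hn).isProbabilityMeasure
  rw [mem_preimage, hT n hn x, integral_smearedEmpirical (f := fun z => g z.1)
    (g.continuous.measurable.comp measurable_fst) (fun z => g.norm_coe_le_norm z.1)] at hx
  exact disjoint_left.1 hUW hx hnW

end UpperBound

section LowerBound

lemma tendsto_measure_notMem_of_mem_nhds {E ι : Type*} [TopologicalSpace E] [MeasurableSpace E]
    [OpensMeasurableSpace E] {Ω : ι → Type*} [∀ n, MeasurableSpace (Ω n)]
    {Q : ∀ n, Measure (Ω n)} {T : ∀ n, Ω n → ProbabilityMeasure E} {ν : ProbabilityMeasure E}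
    {l : Filter ι}
    (h : ∀ (f : E →ᵇ ℝ) (δ : ℝ), 0 < δ →
      Tendsto (fun n => Q n {ω | δ ≤ |∫ z, f z ∂T n ω - ∫ z, f z ∂ν|}) l (𝓝 0))
    {V : Set (ProbabilityMeasure E)} (hV : V ∈ 𝓝 ν) :
    Tendsto (fun n => Q n {ω | T n ω ∉ V}) l (𝓝 0) := by
  -- The sets `V` satisfying the conclusion form a filter, which converges to `ν`.
  let F : Filter (ProbabilityMeasure E) := Filter.comk
    (fun A => Tendsto (fun n => Q n {ω | T n ω ∈ A}) l (𝓝 0))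
    (by simpa using tendsto_const_nhds)
    (fun B hB A hAB => tendsto_of_tendsto_of_tendsto_of_le_of_le tendsto_const_nhds hB
      (fun _ => zero_le) fun n => measure_mono fun ω hω => hAB hω)
    (fun A hA B hB => by
      have hAB : Tendsto (fun n => Q n {ω | T n ω ∈ A} + Q n {ω | T n ω ∈ B}) l (𝓝 0) := by
        simpa only [add_zero] using Tendsto.add hA hB
      exact tendsto_of_tendsto_of_tendsto_of_le_of_le tendsto_const_nhds hAB
        (fun _ => zero_le) fun n => measure_union_le _ _)
  have hF : Tendsto id F (𝓝 ν) := by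
    refine ProbabilityMeasure.tendsto_iff_forall_integral_tendsto.2 fun f =>
      Metric.tendsto_nhds.2 fun δ hδ => ?_
    simpa only [F, Filter.Eventually, mem_comk, mem_compl_iff, mem_ofPred_eq, not_lt, Real.dist_eq,
      id] using h f δ hδ
  exact hF hV

variable {X : Type*} [MeasurableSpace X] [TopologicalSpace X] [PolishSpace X] [BorelSpace X]
  {κ : ℕ → ℕ → Measure ℝ} {T : ∀ n : ℕ, (Fin n → X) → ProbabilityMeasure (ℝ × X)}
  {ν : ProbabilityMeasure (ℝ × X)}

lemma inTM.tendsto_measure_pi_cellLaw_le_abs_sub (hν : inTM (ν : Measure (ℝ × X)))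
    (hκ : ∀ n, 0 < n → IsCellKernel n (κ n))
    (hT : ∀ n, 0 < n → ∀ x, (T n x : Measure (ℝ × X)) = smearedEmpirical n (κ n) x)
    (f : ℝ × X →ᵇ ℝ) {δ : ℝ} (hδ : 0 < δ) :
    Tendsto (fun n : ℕ => Measure.pi (fun i : Fin n => cellLaw n ν i)
      {x | δ ≤ |∫ z, f z ∂T n x - ∫ z, f z ∂ν|}) atTop (𝓝 0) := by
  have hfm : Measurable f := f.continuous.measurable
  have hbound : Tendsto (fun n : ℕ => ENNReal.ofReal (‖f‖ ^ 2 / (δ / 2) ^ 2 * (n : ℝ)⁻¹)) atTop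
      (𝓝 0) := by
    simpa using ENNReal.tendsto_ofReal
      ((tendsto_inv_atTop_nhds_zero_nat (𝕜 := ℝ)).const_mul (‖f‖ ^ 2 / (δ / 2) ^ 2))
  have hmean := hν.tendsto_sum_integral_timeAverage hκ hfm (fun x => by fun_prop)
    f.norm_coe_le_norm
  refine tendsto_of_tendsto_of_tendsto_of_le_of_le' tendsto_const_nhds hbound
    (.of_forall fun _ => zero_le) ?_
  filter_upwards [Metric.tendsto_nhds.1 hmean (δ / 2) (half_pos hδ), eventually_gt_atTop 0]
    with n hmean hn
  have := (hκ n hn).isProbabilityMeasure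
  have := fun i : Fin n => hν.isProbabilityMeasure_cellLaw i
  have hn' : (0 : ℝ) < n := mod_cast hn
  refine (measure_mono fun x (hx : δ ≤ _) => ?_).trans
    ((measure_pi_le_abs_sum_eval_sub_le (g := fun i : Fin n => timeAverage (κ n i) f)
      (fun _ => measurable_timeAverage hfm) (fun _ => abs_timeAverage_le f.norm_coe_le_norm)
      (c := n * (δ / 2)) (by positivity)).trans_eq ?_)
  · rw [hT n hn x, integral_smearedEmpirical hfm f.norm_coe_le_norm] at hx
    have htriangle := hx.trans (abs_sub_le _ _ _) |>.trans (add_le_add_right hmean.le _)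
    rw [← mul_sub, abs_mul, abs_of_pos (inv_pos.2 hn')] at htriangle
    rw [mem_ofPred_eq, ← le_inv_mul_iff₀ hn']
    linarith
  · rw [Fintype.card_fin]
    congr 1
    field_simp

theorem inTM.eventually_le_measure_pi_mem (hν : inTM (ν : Measure (ℝ × X)))
    (hκ : ∀ n, 0 < n → IsCellKernel n (κ n))
    (hT : ∀ n, 0 < n → ∀ x, (T n x : Measure (ℝ × X)) = smearedEmpirical n (κ n) x)
    {μ : Measure X} [IsProbabilityMeasure μ] (hfin : klDiv ν (unif01.prod μ) ≠ ∞)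
    {V : Set (ProbabilityMeasure (ℝ × X))} (hV : V ∈ 𝓝 ν) {ε : ℝ} (hε : 0 < ε) :
    ∀ᶠ n : ℕ in atTop, ENNReal.ofReal
      (Real.exp (-(n * ((klDiv ν (unif01.prod μ)).toReal + ε)))) ≤
        Measure.pi (fun _ : Fin n => μ) {x | T n x ∈ V} := by
  set D := (klDiv ν (unif01.prod μ)).toReal
  have hD : 0 ≤ D := ENNReal.toReal_nonneg
  -- With this `q`, the requirement `n * D + 1 ≤ n * (D + ε) * (1 - q)` reads `1 ≤ n * (ε / 2)`.
  set q : ℝ := ε / (2 * (D + ε)) with hq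
  have hqε : (D + ε) * q = ε / 2 := by
    rw [hq]
    field_simp
  have hconc := tendsto_measure_notMem_of_mem_nhds
    (fun f δ hδ => hν.tendsto_measure_pi_cellLaw_le_abs_sub hκ hT f hδ) hV
  filter_upwards [hconc.eventually_le_const (ENNReal.ofReal_pos.2 (by positivity : 0 < q)),
    eventually_ge_atTop ⌈2 / ε⌉₊] with n hnq hn
  have hnε : 1 ≤ n * (ε / 2) := by
    have := (div_le_iff₀ hε).1 (Nat.ceil_le.1 hn)
    linarith
  have := fun i : Fin n => hν.isProbabilityMeasure_cellLaw i
  have hkl := hν.klDiv_pi_cellLaw_le (n := n) μ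
  have hfin_mul : (n : ℝ≥0∞) * klDiv ν (unif01.prod μ) ≠ ∞ :=
    ENNReal.mul_ne_top (ENNReal.natCast_ne_top n) hfin
  refine ofReal_exp_neg_le_measure (ne_top_of_le_ne_top hfin_mul hkl) (by positivity)
    (by positivity) hnq ?_
  have htoReal := ENNReal.toReal_mono hfin_mul hkl
  rw [ENNReal.toReal_mul, ENNReal.toReal_natCast] at htoReal
  linear_combination htoReal + hnε + n * hqε

end LowerBound

section ExponentialTightness

variable {X : Type*} [MeasurableSpace X]

lemma exists_seq_isCompact_measure_compl_le [TopologicalSpace X] [PolishSpace X] [BorelSpace X]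
    (μ : Measure X) [IsFiniteMeasure μ] {δ : ℕ → ℝ≥0∞} (hδ : ∀ k, 0 < δ k) :
    ∃ C : ℕ → Set X, ∀ k, IsCompact (C k) ∧ μ (C k)ᶜ ≤ δ k := by
  have htight := isTightMeasureSet_iff_exists_isCompact_measure_compl_le.1
    (isTightMeasureSet_singleton (μ := μ))
  choose C hC using fun k => htight (δ k) (hδ k)
  exact ⟨C, fun k => ⟨(hC k).1, (hC k).2 μ rfl⟩⟩

lemma measure_iUnion_le_of_le_mul_two_inv_pow {m : Measure X} {A : ℕ → Set X} {c : ℝ≥0∞}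
    (hA : ∀ k, m (A k) ≤ c * 2⁻¹ ^ (k + 1)) : m (⋃ k, A k) ≤ c :=
  calc m (⋃ k, A k) ≤ ∑' k, m (A k) := measure_iUnion_le A
    _ ≤ ∑' k, c * 2⁻¹ ^ (k + 1) := ENNReal.tsum_le_tsum hA
    _ = c := by
      rw [ENNReal.tsum_mul_left, ENNReal.tsum_geometric_add_one, ENNReal.one_sub_inv_two, inv_inv,
        ENNReal.inv_mul_cancel two_ne_zero ENNReal.ofNat_ne_top, mul_one]

lemma ofReal_exp_neg_mul_add_le {n : ℕ} (hn : 0 < n) (M : ℝ) (k : ℕ) :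
    ENNReal.ofReal (Real.exp (-(n * (M + (k + 1))))) ≤
      ENNReal.ofReal (Real.exp (-(n * M))) * 2⁻¹ ^ (k + 1) := by
  have htwo : Real.exp (-1) ≤ 2⁻¹ := by
    rw [Real.exp_neg]
    exact inv_anti₀ two_pos (by linarith [Real.add_one_le_exp (1 : ℝ)])
  have hinv : (2⁻¹ : ℝ≥0∞) = ENNReal.ofReal 2⁻¹ := by
    rw [ENNReal.ofReal_inv_of_pos two_pos, ENNReal.ofReal_ofNat]
  rw [hinv, ← ENNReal.ofReal_pow (by positivity), ← ENNReal.ofReal_mul (Real.exp_pos _).le]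
  refine ENNReal.ofReal_le_ofReal ?_
  calc Real.exp (-(n * (M + (k + 1))))
      = Real.exp (-(n * M)) * Real.exp (-(n * (k + 1))) := by
        rw [← Real.exp_add]
        ring_nf
    _ ≤ Real.exp (-(n * M)) * Real.exp (-(1 * (k + 1))) := by
        gcongr
        exact mod_cast hn
    _ = Real.exp (-(n * M)) * Real.exp (-1) ^ (k + 1) := by
        rw [← Real.exp_nat_mul]
        push_cast
        ring_nf
    _ ≤ Real.exp (-(n * M)) * 2⁻¹ ^ (k + 1) := by gcongr

lemma IsCellKernel.ae_mem_Icc_zero_one {n : ℕ} {κ : ℕ → Measure ℝ} (hκ : IsCellKernel n κ)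
    (i : Fin n) : ∀ᵐ u ∂κ i, u ∈ Icc (0 : ℝ) 1 := by
  have hn : (0 : ℝ) < n := mod_cast i.pos
  filter_upwards [hκ.ae_mem_Icc i] with u hu
  refine ⟨le_trans (by positivity) hu.1, hu.2.trans ((div_le_one hn).2 ?_)⟩
  exact mod_cast i.2

lemma IsCellKernel.measureReal_smearedEmpirical_compl_le {n : ℕ} {κ : ℕ → Measure ℝ}
    (hκ : IsCellKernel n κ) {C : Set X} (hC : MeasurableSet C) (x : Fin n → X) :
    (smearedEmpirical n κ x).real (Icc (0 : ℝ) 1 ×ˢ C)ᶜ ≤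
      (n : ℝ)⁻¹ * ∑ i, Cᶜ.indicator (fun _ => 1) (x i) := by
  have hS : MeasurableSet (Icc (0 : ℝ) 1 ×ˢ C)ᶜ := (measurableSet_Icc.prod hC).compl
  have := hκ.isProbabilityMeasure
  have hbound (z : ℝ × X) : |(Icc (0 : ℝ) 1 ×ˢ C)ᶜ.indicator 1 z| ≤ (1 : ℝ) := by
    by_cases hz : z ∈ (Icc (0 : ℝ) 1 ×ˢ C)ᶜ <;> simp [hz]
  rw [← integral_indicator_one hS,
    integral_smearedEmpirical (measurable_one.indicator hS) hbound]
  gcongr with i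
  by_cases hxi : x i ∈ C
  · refine (integral_eq_zero_of_ae ?_).trans_le (indicator_nonneg (fun _ _ => zero_le_one) _)
    filter_upwards [hκ.ae_mem_Icc_zero_one i] with u hu
    exact indicator_of_notMem (notMem_compl_iff.2 (mk_mem_prod hu hxi)) _
  · simpa [hxi] using (abs_le.1 (abs_timeAverage_le (κ := κ i) hbound (x i))).2

lemma IsCellKernel.measure_pi_lt_smearedEmpirical_compl_le {n : ℕ} (hn : 0 < n)
    {κ : ℕ → Measure ℝ} (hκ : IsCellKernel n κ) {μ : Measure X} [IsProbabilityMeasure μ]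
    {C : Set X} (hC : MeasurableSet C) {t : ℝ} (ht : 0 ≤ t)
    (hμC : μ Cᶜ ≤ ENNReal.ofReal (Real.exp (-t))) (b : ℝ) :
    Measure.pi (fun _ : Fin n => μ)
        {x | b < (smearedEmpirical n κ x).real (Icc (0 : ℝ) 1 ×ˢ C)ᶜ} ≤
      ENNReal.ofReal (Real.exp (n - n * (t * b))) := by
  have hcount := measure_pi_le_sum_indicator_le (ι := Fin n) (fun _ => hC.compl) (fun _ => hμC)
    (n * (t * b))
  rw [Fintype.card_fin] at hcount
  refine (measure_mono fun x (hx : b < _) => ?_).trans hcount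
  have hbx := hx.trans_le (hκ.measureReal_smearedEmpirical_compl_le hC x)
  rw [lt_inv_mul_iff₀ (mod_cast hn)] at hbx
  calc n * (t * b) = t * (n * b) := by ring
    _ ≤ t * ∑ i, Cᶜ.indicator (fun _ => 1) (x i) := by gcongr
    _ = ∑ i, Cᶜ.indicator (fun _ => t) (x i) := by
      classical simp only [Finset.mul_sum, indicator_apply, mul_ite, mul_one, mul_zero]

variable [TopologicalSpace X] [PolishSpace X] [BorelSpace X] {κ : ℕ → ℕ → Measure ℝ}
  {T : ∀ n : ℕ, (Fin n → X) → ProbabilityMeasure (ℝ × X)}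

theorem exponentiallyTight_smearedEmpirical (hκ : ∀ n, 0 < n → IsCellKernel n (κ n))
    (hT : ∀ n, 0 < n → ∀ x, (T n x : Measure (ℝ × X)) = smearedEmpirical n (κ n) x)
    (μ : Measure X) [IsProbabilityMeasure μ] :
    ExponentiallyTight (fun n => Measure.pi fun _ : Fin n => μ) T := by
  intro M
  set t : ℕ → ℝ := fun k => (M + k + 2) * (k + 1) with ht
  obtain ⟨C, hC⟩ := exists_seq_isCompact_measure_compl_le μ (δ := fun k =>
    ENNReal.ofReal (Real.exp (-t k))) fun k => ENNReal.ofReal_pos.2 (Real.exp_pos _)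
  refine ⟨{ν | ∀ k, ν (Icc (0 : ℝ) 1 ×ˢ C k)ᶜ ≤ 1 / ((k : ℝ≥0) + 1)},
    isCompact_setOfPred_probabilityMeasure_mass_eq_compl_isCompact_le
      tendsto_one_div_add_atTop_nhds_zero_nat (fun k => isCompact_Icc.prod (hC k).1)
      (Or.inl inferInstance), ?_⟩
  filter_upwards [eventually_gt_atTop 0] with n hn
  have hsub : {x | ¬∀ k, T n x (Icc (0 : ℝ) 1 ×ˢ C k)ᶜ ≤ 1 / ((k : ℝ≥0) + 1)} ⊆
      ⋃ k : ℕ, {x | 1 / ((k : ℝ) + 1) <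
        (smearedEmpirical n (κ n) x).real (Icc (0 : ℝ) 1 ×ˢ C k)ᶜ} := by
    intro x hx
    obtain ⟨k, hk⟩ := not_forall.1 hx
    refine mem_iUnion.2 ⟨k, ?_⟩
    rw [mem_ofPred_eq, ← hT n hn x]
    simpa using NNReal.coe_lt_coe.2 (not_le.1 hk)
  refine (measure_mono hsub).trans (measure_iUnion_le_of_le_mul_two_inv_pow fun k => ?_)
  refine (((hκ n hn).measure_pi_lt_smearedEmpirical_compl_le hn (hC k).1.measurableSet
    (by positivity) (hC k).2 _).trans_eq ?_).trans (ofReal_exp_neg_mul_add_le hn M k)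
  rw [ht]
  congr 2
  field_simp
  ring

end ExponentialTightness

theorem satisfiesLDP_smearedEmpirical {X : Type*} [MeasurableSpace X] [TopologicalSpace X]
    [PolishSpace X] [BorelSpace X] {κ : ℕ → ℕ → Measure ℝ}
    (hκ : ∀ n, 0 < n → IsCellKernel n (κ n))
    {T : ∀ n : ℕ, (Fin n → X) → ProbabilityMeasure (ℝ × X)}
    (hT : ∀ n, 0 < n → ∀ x, (T n x : Measure (ℝ × X)) = smearedEmpirical n (κ n) x)
    (μ : Measure X) [IsProbabilityMeasure μ] :
    SatisfiesLDP (fun n => Measure.pi fun _ : Fin n => μ) T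
      (fun ν : ProbabilityMeasure (ℝ × X) => sanovRate μ ν) := by
  refine satisfiesLDP_of_local_bounds (fun ν a ha => ?_) (fun ν hfin V hV ε hε => ?_)
    (exponentiallyTight_smearedEmpirical hκ hT μ)
  all_goals by_cases hν : inTM (ν : Measure (ℝ × X))
  · rw [sanovRate, if_pos hν, KLdiv_eq_klDiv] at ha
    exact exists_nhds_measure_pi_mem_le_of_lt_klDiv hκ hT ha
  · obtain ⟨V, hV, hempty⟩ := exists_nhds_eventually_notMem_of_not_inTM hκ hT hν
    refine ⟨V, hV, hempty.mono fun n hn => ?_⟩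
    simp [hn]
  · simp only [sanovRate, if_pos hν, KLdiv_eq_klDiv] at hfin ⊢
    exact hν.eventually_le_measure_pi_mem hκ hT hfin hV hε
  · exact absurd (if_neg hν) hfin

section EmpiricalMeasures

variable {X : Type*} [MeasurableSpace X] {n : ℕ}

lemma isProbabilityMeasure_smearedEmpirical (hn : 0 < n) {κ : ℕ → Measure ℝ}
    [∀ i, IsProbabilityMeasure (κ i)] (x : Fin n → X) :
    IsProbabilityMeasure (smearedEmpirical n κ x) := by
  constructor
  rw [smearedEmpirical, Measure.smul_apply, Measure.finsetSum_apply, smul_eq_mul]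
  simpa [mul_comm] using natCast_mul_inv_cancel hn

lemma isCellKernel_dirac (n : ℕ) :
    IsCellKernel n (fun i : ℕ => Measure.dirac (((i : ℝ) + 1) / n)) where
  isProbabilityMeasure _ := inferInstance
  ae_mem_Icc i := (ae_dirac_iff measurableSet_Icc).2 <| right_mem_Icc.2 <| by
    gcongr
    exact le_add_of_nonneg_right zero_le_one

lemma isCellKernel_volume_restrict_cell (hn : 0 < n) :
    IsCellKernel n (fun i => (n : ℝ≥0∞) • volume.restrict (cell n i)) where
  isProbabilityMeasure _ := ⟨by
    rw [Measure.smul_apply, Measure.restrict_apply_univ, volume_cell hn, smul_eq_mul,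
      natCast_mul_inv_cancel hn]⟩
  ae_mem_Icc _ := Measure.ae_smul_measure ((ae_restrict_mem measurableSet_cell).mono
    fun _ hu => Ioc_subset_Icc_self hu) _

lemma empMeas_eq_smearedEmpirical (x : Fin n → X) :
    empMeas n x = smearedEmpirical n (fun i : ℕ => Measure.dirac (((i : ℝ) + 1) / n)) x := by
  simp only [empMeas, smearedEmpirical, Measure.dirac_prod_dirac]

lemma tildeL_eq_smearedEmpirical (hn : 0 < n) (x : Fin n → X) (d : Measure (ℝ × X)) :
    tildeL n x d = smearedEmpirical n (fun i => (n : ℝ≥0∞) • volume.restrict (cell n i)) x := by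
  have hx : Measurable fun u : ℝ => x ⟨min (n - 1) (⌈u * n⌉₊ - 1), by lia⟩ :=
    (Measurable.of_discrete (f := fun k => x ⟨min (n - 1) (k - 1), by lia⟩)).comp
      (Nat.measurable_ceil.comp (measurable_id.mul_const _))
  have hgraph : Measurable fun u : ℝ => (u, x ⟨min (n - 1) (⌈u * n⌉₊ - 1), by lia⟩) :=
    measurable_id.prodMk hx
  rw [tildeL, dif_pos hn, ← sum_volume_restrict_cell hn,
    Measure.map_finset_sum' hgraph.aemeasurable, smearedEmpirical,
    Finset.smul_sum]
  refine Finset.sum_congr rfl fun i _ => ?_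
  rw [Measure.prod_smul_left, smul_smul, mul_comm, natCast_mul_inv_cancel hn, one_smul,
    Measure.prod_dirac]
  refine Measure.map_congr ((ae_restrict_mem measurableSet_cell).mono fun u hu => ?_)
  have hindex : min (n - 1) (⌈u * n⌉₊ - 1) = i := by
    rw [(mem_cell_iff hn).1 hu]
    lia
  simp only [hindex]

lemma map_fst_smearedEmpirical (n : ℕ) (κ : ℕ → Measure ℝ) (x : Fin n → X) :
    (smearedEmpirical n κ x).map Prod.fst = (n : ℝ≥0∞)⁻¹ • ∑ i : Fin n, κ i := by
  rw [smearedEmpirical, Measure.map_smul, Measure.map_finset_sum' measurable_fst.aemeasurable]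
  simp only [Measure.map_fst_prod, measure_univ, one_smul]

lemma inTM_tildeL (hn : 0 < n) (x : Fin n → X) (d : Measure (ℝ × X)) : inTM (tildeL n x d) := by
  have := (isCellKernel_volume_restrict_cell hn).isProbabilityMeasure
  rw [tildeL_eq_smearedEmpirical hn]
  refine ⟨isProbabilityMeasure_smearedEmpirical hn x, ?_⟩
  rw [map_fst_smearedEmpirical, ← Finset.smul_sum, smul_smul, mul_comm,
    natCast_mul_inv_cancel hn, one_smul, sum_volume_restrict_cell hn]

lemma coe_toProb {α : Type*} [MeasurableSpace α] (d : ProbabilityMeasure α) (ν : Measure α)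
    [hν : IsProbabilityMeasure ν] : (toProb d ν : Measure α) = ν :=
  congrArg ProbabilityMeasure.toMeasure (dif_pos hν)

lemma coe_toTMsub (d : {ν : ProbabilityMeasure (ℝ × X) // ν.toMeasure.map Prod.fst = unif01})
    {ν : Measure (ℝ × X)} (hν : inTM ν) : (toTMsub d ν).1.toMeasure = ν :=
  congrArg (fun ν' : {ν : ProbabilityMeasure (ℝ × X) // ν.toMeasure.map Prod.fst = unif01} =>
    ν'.1.toMeasure) (dif_pos hν)

end EmpiricalMeasures

/-- Lemma 2.1: LDP for the bivariate empirical measures `𝔏_n`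
on `ℳ`, and for their continuous counterparts `𝔏̃_n` on `𝒯ℳ`. -/
theorem bivariate_sanov
    {X : Type*} [MeasurableSpace X] [TopologicalSpace X] [PolishSpace X] [BorelSpace X]
    (μ : Measure X) [IsProbabilityMeasure μ] :
    SatisfiesLDP (fun n => Measure.pi fun _ : Fin n => μ)
      (fun n x => toProb (rhoP μ) (empMeas n x))
      (fun ν : ProbabilityMeasure (ℝ × X) => sanovRate μ ν.toMeasure) ∧
    SatisfiesLDP (fun n => Measure.pi fun _ : Fin n => μ)
      (fun n x => toTMsub (rhoTM μ) (tildeL n x (unif01.prod μ)))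
      (fun ν : {ν : ProbabilityMeasure (ℝ × X) // ν.toMeasure.map Prod.fst = unif01} =>
        KLdiv ν.1.toMeasure (unif01.prod μ)) := by
  constructor
  · refine satisfiesLDP_smearedEmpirical (fun n _ => isCellKernel_dirac n) (fun n hn x => ?_) μ
    have := isProbabilityMeasure_smearedEmpirical hn
      (κ := fun i : ℕ => Measure.dirac (((i : ℝ) + 1) / n)) x
    rw [empMeas_eq_smearedEmpirical, coe_toProb]
  · have hrate (ν : {ν : ProbabilityMeasure (ℝ × X) // ν.toMeasure.map Prod.fst = unif01}) :
        KLdiv ν.1.toMeasure (unif01.prod μ) = sanovRate μ ν.1.toMeasure :=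
      (if_pos ⟨inferInstance, ν.2⟩).symm
    simp only [hrate]
    refine satisfiesLDP_of_subtypeVal
      (I := fun ν : ProbabilityMeasure (ℝ × X) => sanovRate μ ν.toMeasure)
      (fun ν hν => if_neg fun h => hν h.2) ?_
    refine satisfiesLDP_smearedEmpirical
      (fun n hn => isCellKernel_volume_restrict_cell hn) (fun n hn x => ?_) μ
    rw [coe_toTMsub _ (inTM_tildeL hn x _), tildeL_eq_smearedEmpirical hn]
end

section
/- Let H be a finite simple graph with v vertices, edge set E(H) and maximum degree Δ, and fix q>1. For measurable f=(f₁,…,f_v) with each f_a:[0,1]→[−1,1], define t(H,W,f) = ∫_{[0,1]^v} Π_{(a,b)∈E(H)} W(x_a,x_b) Π_{a=1}^v f_a(x_a) dx_a. (i) If W is a symmetric kernel with ‖W‖_{qΔ}<∞, then t(H,W,f) is well-defined and |t(H,W,f)| ≤ ‖W‖_{qΔ}^{|E(H)|}. (ii) If {Wₙ} and W are symmetric kernels with limsup_{n→∞}‖Wₙ‖_{qΔ}<∞, ‖W‖_{qΔ}<∞, and ‖Wₙ−W‖_□ → 0, then sup over all such f of |t(H,Wₙ,f) − t(H,W,f)|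 → 0 as n→∞. -/
open MeasureTheory Filter Set
open scoped ENNReal NNReal

/-- `t(H,W,f) = ∫_{[0,1]^v} ∏_{(a,b) ∈ E(H)} W(x_a,x_b) ∏_a f_a(x_a) dx`. -/
noncomputable def tHWf {v : ℕ} (G : SimpleGraph (Fin v)) [DecidableRel G.Adj]
    (W : ℝ → ℝ → ℝ) (f : Fin v → ℝ → ℝ) : ℝ :=
  ∫ x : Fin v → ℝ, edgeProd G (fun a b => W (x a) (x b)) * ∏ a, f a (x a)
    ∂(Measure.pi fun _ : Fin v => unif01)

/-!
Finner's inequality with weight `1 / Δ` on every edge bounds `∫ ∏ |W(x_a, x_b)|` by the product of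
the `L^Δ` norms of the kernels, because each vertex lies on at most `Δ` edges.

For the counting lemma the kernels are exchanged one edge at a time, so that `Wₙ - W` sits on a
single edge `(a, b)`. Truncating the kernels on the other edges at `M` costs `O(M ^ (1 - q))`: where
some `|W| > M` one has `|W| ≤ M ^ (1 - q) |W| ^ q`, and `‖|W| ^ q‖_Δ = ‖W‖_{qΔ} ^ q`. After the
truncation, once all other variables are frozen, what multiplies `(Wₙ - W)(x_a, x_b)` is a bounded
function of `x_a` times a bounded function of `x_b`, so the integral is at most `O(‖Wₙ - W‖_□)` for
fixed `M`. Let `n → ∞` first and `M → ∞` afterwards.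
-/

theorem abs_piecewise_sub_le {κ : Type*} [DecidableEq κ] {γ : κ → Type*} (Φ : (∀ e, γ e) → ℝ)
    (u v : ∀ e, γ e) (E : Finset κ) {β : ℝ}
    (hΦ : ∀ e ∈ E, ∀ s : Finset κ, |Φ (Function.update (s.piecewise u v) e (u e)) -
      Φ (Function.update (s.piecewise u v) e (v e))| ≤ β) :
    |Φ (E.piecewise u v) - Φ v| ≤ E.card * β := by
  induction E using Finset.induction_on with
  | empty => simp
  | insert e s hes ih =>
    have hv : Function.update (s.piecewise u v) e (v e) = s.piecewise u v := by
      rw [Function.update_eq_self_iff, Finset.piecewise_eq_of_notMem _ _ _ hes]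
    have hstep := hΦ e (Finset.mem_insert_self e s) s
    rw [hv] at hstep
    rw [Finset.piecewise_insert, Finset.card_insert_of_notMem hes, Nat.cast_succ, add_one_mul,
      add_comm]
    exact (abs_sub_le _ _ _).trans
      (add_le_add hstep (ih fun p hp => hΦ p (Finset.mem_insert_of_mem hp)))

theorem apply_update_of_dependsOn {ι γ : Type*} [DecidableEq ι] {X : ι → Type*} {s : Set ι}
    {g : (∀ i, X i) → γ} (hg : DependsOn g s) {i : ι} (hi : i ∉ s) (x : ∀ i, X i) (y : X i) :
    g (Function.update x i y) = g x :=
  hg fun _ hj => Function.update_of_ne (ne_of_mem_of_not_mem hj hi) _ _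

section Finner

variable {κ : Type*} (E : Finset κ) {w : κ → ℝ}

theorem lintegral_prod_rpow_le_prod_lintegral_rpow {Ω : Type*} [MeasurableSpace Ω] {μ : Measure Ω}
    [IsProbabilityMeasure μ] {f : κ → Ω → ℝ≥0∞} (hf : ∀ e ∈ E, AEMeasurable (f e) μ)
    (hw : ∀ e ∈ E, 0 ≤ w e) (hw_sum : ∑ e ∈ E, w e ≤ 1) :
    ∫⁻ x, ∏ e ∈ E, f e x ^ w e ∂μ ≤ ∏ e ∈ E, (∫⁻ x, f e x ∂μ) ^ w e := by
  simpa using ENNReal.lintegral_mul_prod_norm_pow_le E (g := fun _ => 1) aemeasurable_const hf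
    (1 - ∑ e ∈ E, w e) (sub_add_cancel _ _) (sub_nonneg.2 hw_sum) hw

theorem lintegral_prod_rpow_le_of_const {Ω : Type*} [MeasurableSpace Ω] {μ : Measure Ω}
    [IsProbabilityMeasure μ] {f : κ → Ω → ℝ≥0∞} (hf : ∀ e ∈ E, Measurable (f e))
    (hw : ∀ e ∈ E, 0 ≤ w e) (J : κ → Prop) [DecidablePred J] (hw_sum : ∑ e ∈ E with J e, w e ≤ 1)
    (hconst : ∀ e ∈ E, ¬ J e → ∀ x y, f e x = f e y) :
    ∫⁻ x, ∏ e ∈ E, f e x ^ w e ∂μ ≤ ∏ e ∈ E, (∫⁻ x, f e x ∂μ) ^ w e := by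
  have hconst_prod (x : Ω) :
      ∏ e ∈ E with ¬ J e, f e x ^ w e = ∏ e ∈ E with ¬ J e, (∫⁻ y, f e y ∂μ) ^ w e := by
    refine Finset.prod_congr rfl fun e he => ?_
    obtain ⟨heE, heJ⟩ := Finset.mem_filter.1 he
    simp only [hconst e heE heJ _ x, lintegral_const, measure_univ, mul_one]
  simp_rw [← Finset.prod_filter_mul_prod_filter_not E J, hconst_prod]
  rw [lintegral_mul_const _ <| Finset.measurable_prod _ fun e he =>
    (hf e (Finset.mem_filter.1 he).1).pow_const _]
  gcongr
  exact lintegral_prod_rpow_le_prod_lintegral_rpow _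
    (fun e he => (hf e (Finset.mem_filter.1 he).1).aemeasurable)
    (fun e he => hw e (Finset.mem_filter.1 he).1) hw_sum

variable {ι : Type*} [DecidableEq ι] {X : ι → Type*} [∀ i, MeasurableSpace (X i)]
  (μ : ∀ i, Measure (X i)) [∀ i, IsProbabilityMeasure (μ i)]

theorem lmarginal_update_eq_of_dependsOn {g : (∀ i, X i) → ℝ≥0∞} (hg : Measurable g)
    {A s : Finset ι} (hgA : DependsOn g A) {i : ι} (hiA : i ∉ A) (his : i ∉ s)
    (x : ∀ i, X i) (y : X i) :
    (∫⋯∫⁻_s, g ∂μ) (Function.update x i y) = (∫⋯∫⁻_s, g ∂μ) x := by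
  have hupdate : g ∘ (Function.update · i y) = g := funext fun z =>
    apply_update_of_dependsOn hgA hiA z y
  rw [lmarginal_update_of_notMem hg his, hupdate]

theorem lmarginal_prod_rpow_le_prod_lmarginal_rpow {g : κ → (∀ i, X i) → ℝ≥0∞}
    (hg : ∀ e, Measurable (g e)) {A : κ → Finset ι} (hgA : ∀ e, DependsOn (g e) (A e))
    (hw : ∀ e ∈ E, 0 ≤ w e) (hw_sum : ∀ i, ∑ e ∈ E with i ∈ A e, w e ≤ 1)
    (s : Finset ι) (x : ∀ i, X i) :
    (∫⋯∫⁻_s, (fun z => ∏ e ∈ E, g e z ^ w e) ∂μ) x ≤ ∏ e ∈ E, (∫⋯∫⁻_s, g e ∂μ) x ^ w e := by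
  induction s using Finset.induction_on generalizing x with
  | empty => simp only [lmarginal_empty, le_refl]
  | insert i s his ih =>
    rw [lmarginal_insert _ (Finset.measurable_prod _ fun e _ => (hg e).pow_const _) his]
    simp_rw [lmarginal_insert _ (hg _) his]
    refine (lintegral_mono fun y => ih _).trans ?_
    refine lintegral_prod_rpow_le_of_const E
      (fun e _ => ((hg e).lmarginal μ).comp (measurable_update x)) hw (i ∈ A ·) (hw_sum i) ?_
    intro e _ hie y z
    simp only [lmarginal_update_eq_of_dependsOn μ (hg e) (hgA e) hie his]

/-- Finner's inequality: Hölder's inequality on a product space, for factors that each depend on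
few coordinates. -/
theorem lintegral_pi_prod_rpow_le_prod_lintegral_rpow [Fintype ι] {g : κ → (∀ i, X i) → ℝ≥0∞}
    (hg : ∀ e, Measurable (g e)) {A : κ → Finset ι} (hgA : ∀ e, DependsOn (g e) (A e))
    (hw : ∀ e ∈ E, 0 ≤ w e) (hw_sum : ∀ i, ∑ e ∈ E with i ∈ A e, w e ≤ 1) :
    ∫⁻ x, ∏ e ∈ E, g e x ^ w e ∂Measure.pi μ ≤ ∏ e ∈ E, (∫⁻ x, g e x ∂Measure.pi μ) ^ w e := by
  obtain ⟨x⟩ := nonempty_of_isProbabilityMeasure (Measure.pi μ)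
  simpa only [lmarginal_univ] using
    lmarginal_prod_rpow_le_prod_lmarginal_rpow E μ hg hgA hw hw_sum Finset.univ x

end Finner

section Resampling

variable {ι : Type*} [Fintype ι] {X : ι → Type*} [∀ i, MeasurableSpace (X i)]
  (μ : ∀ i, Measure (X i)) [∀ i, IsProbabilityMeasure (μ i)]

theorem measurePreserving_eval_prodMk {a b : ι} (hab : a ≠ b) :
    MeasurePreserving (fun x : ∀ i, X i => (x a, x b)) (Measure.pi μ) ((μ a).prod (μ b)) := by
  refine ⟨by fun_prop, ?_⟩
  have hindep : ProbabilityTheory.IndepFun (fun x : ∀ i, X i => x a) (fun x => x b)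
      (Measure.pi μ) :=
    (ProbabilityTheory.iIndepFun_pi (X := fun _ => id) fun _ => aemeasurable_id).indepFun hab
  rw [hindep.map_prod_eq_prod_map_map (measurable_pi_apply a).aemeasurable
      (measurable_pi_apply b).aemeasurable,
    (measurePreserving_eval μ a).map_eq, (measurePreserving_eval μ b).map_eq]

theorem measurePreserving_update_prod [DecidableEq ι] (a : ι) :
    MeasurePreserving (fun z : (∀ i, X i) × X a => Function.update z.1 a z.2)
      ((Measure.pi μ).prod (μ a)) (Measure.pi μ) := by
  refine ⟨measurable_update', (Measure.pi_eq fun s hs => ?_).symm⟩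
  have hpreimage : (fun z : (∀ i, X i) × X a => Function.update z.1 a z.2) ⁻¹' univ.pi s =
      univ.pi (Function.update s a univ) ×ˢ s a := by
    ext z
    simp only [mem_preimage, mem_prod, mem_univ_pi]
    rw [Function.forall_update_iff z.1 (fun i y => y ∈ s i),
      Function.forall_update_iff s (fun i t => z.1 i ∈ t)]
    simp only [mem_univ, true_and, and_comm]
  rw [Measure.map_apply measurable_update' (.univ_pi hs), hpreimage, Measure.prod_prod,
    Measure.pi_pi, ← Finset.prod_erase_mul _ _ (Finset.mem_univ a),
    ← Finset.prod_erase_mul Finset.univ (fun i => μ i (s i)) (Finset.mem_univ a),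
    Function.update_self, measure_univ, mul_one]
  congr 1
  exact Finset.prod_congr rfl fun i hi => by
    rw [Function.update_of_ne (Finset.ne_of_mem_erase hi)]

theorem measurePreserving_update_update_prod [DecidableEq ι] (a b : ι) :
    MeasurePreserving
      (fun z : (∀ i, X i) × X a × X b => Function.update (Function.update z.1 a z.2.1) b z.2.2)
      ((Measure.pi μ).prod ((μ a).prod (μ b))) (Measure.pi μ) :=
  (measurePreserving_update_prod μ b).comp <|
    ((measurePreserving_update_prod μ a).prod (.id (μ b))).comp
      (MeasurePreserving.symm MeasurableEquiv.prodAssoc (measurePreserving_prodAssoc _ _ _))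

theorem ae_ae_update_of_ae_pi [DecidableEq ι] {p : (∀ i, X i) → Prop}
    (hp : ∀ᵐ x ∂Measure.pi μ, p x) (a : ι) :
    ∀ᵐ x ∂Measure.pi μ, ∀ᵐ y ∂μ a, p (Function.update x a y) :=
  Measure.ae_ae_of_ae_prod ((measurePreserving_update_prod μ a).quasiMeasurePreserving.ae hp)

theorem ae_pi_forall_of_forall_ae {p : ∀ i, X i → Prop} (hp : ∀ i, ∀ᵐ y ∂μ i, p i y) :
    ∀ᵐ x ∂Measure.pi μ, ∀ i, p i (x i) :=
  eventually_all.2 fun i => Measure.tendsto_eval_ae_ae.eventually (hp i)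

theorem ae_pi_abs_prod_le_one {f : ∀ i, X i → ℝ} (hf : ∀ i, ∀ᵐ y ∂μ i, |f i y| ≤ 1)
    (s : Finset ι) : ∀ᵐ x ∂Measure.pi μ, |∏ i ∈ s, f i (x i)| ≤ 1 := by
  filter_upwards [ae_pi_forall_of_forall_ae μ hf] with x hx
  rw [Finset.abs_prod]
  exact Finset.prod_le_one (fun _ _ => abs_nonneg _) fun i _ => hx i

theorem lintegral_enorm_mul_prod_le {f : ∀ i, X i → ℝ} (hf : ∀ i, ∀ᵐ y ∂μ i, |f i y| ≤ 1)
    (φ : (∀ i, X i) → ℝ) :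
    ∫⁻ x, ‖φ x * ∏ i, f i (x i)‖ₑ ∂Measure.pi μ ≤ ∫⁻ x, ‖φ x‖ₑ ∂Measure.pi μ := by
  refine lintegral_mono_ae ?_
  filter_upwards [ae_pi_abs_prod_le_one μ hf Finset.univ] with x hx
  rw [enorm_mul]
  refine mul_le_of_le_one_right' ?_
  rwa [Real.enorm_eq_ofReal_abs, ENNReal.ofReal_le_one]

end Resampling

section CutNorm

variable {α β : Type*} [MeasurableSpace α] [MeasurableSpace β] {μ : Measure α} {ν : Measure β}

/-- `‖D‖_□ ≤ k`. Stating the bound on every rectangle avoids the junk value of a real supremum. -/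
def CutNormLE (μ : Measure α) (ν : Measure β) (D : α × β → ℝ) (k : ℝ) : Prop :=
  ∀ ⦃S : Set α⦄ ⦃T : Set β⦄, MeasurableSet S → MeasurableSet T →
    |∫ z in S ×ˢ T, D z ∂μ.prod ν| ≤ k

theorem CutNormLE.mono {D : α × β → ℝ} {k l : ℝ} (h : CutNormLE μ ν D k) (hkl : k ≤ l) :
    CutNormLE μ ν D l :=
  fun _ _ hS hT => (h hS hT).trans hkl

theorem integral_abs_le_of_abs_setIntegral_le {φ : α → ℝ} (hφ : Integrable φ μ) {k : ℝ}
    (hk : ∀ S, MeasurableSet S → |∫ x in S, φ x ∂μ| ≤ k) : ∫ x, |φ x| ∂μ ≤ 2 * k := by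
  have hk_null (S : Set α) (hS : NullMeasurableSet S μ) : |∫ x in S, φ x ∂μ| ≤ k := by
    obtain ⟨T, -, hT, hTS⟩ := hS.exists_measurable_superset_ae_eq
    rw [← setIntegral_congr_set hTS]
    exact hk T hT
  have hpos := hk_null {x | 0 ≤ φ x} (nullMeasurableSet_le aemeasurable_const hφ.aemeasurable)
  have hneg := hk_null {x | φ x ≤ 0} (nullMeasurableSet_le hφ.aemeasurable aemeasurable_const)
  calc ∫ x, |φ x| ∂μ = ∫ x in {x | 0 ≤ φ x}, φ x ∂μ - ∫ x in {x | φ x ≤ 0}, φ x ∂μ :=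
        integral_norm_eq_pos_sub_neg hφ
    _ ≤ 2 * k := by linarith [(abs_le.1 hpos).2, (abs_le.1 hneg).1]

theorem abs_integral_mul_le_of_abs_setIntegral_le {φ g : α → ℝ} (hφ : Integrable φ μ) {A k : ℝ}
    (hA : 0 ≤ A) (hg : ∀ᵐ x ∂μ, |g x| ≤ A)
    (hk : ∀ S, MeasurableSet S → |∫ x in S, φ x ∂μ| ≤ k) :
    |∫ x, φ x * g x ∂μ| ≤ 2 * A * k := by
  calc |∫ x, φ x * g x ∂μ| ≤ ∫ x, A * |φ x| ∂μ := by
        rw [← Real.norm_eq_abs]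
        refine norm_integral_le_of_norm_le (hφ.abs.const_mul A) (hg.mono fun x hx => ?_)
        rw [Real.norm_eq_abs, abs_mul, mul_comm]
        gcongr
    _ = A * ∫ x, |φ x| ∂μ := integral_const_mul _ _
    _ ≤ A * (2 * k) := by gcongr; exact integral_abs_le_of_abs_setIntegral_le hφ hk
    _ = 2 * A * k := by ring

theorem CutNormLE.abs_integral_mul_le [SFinite μ] [SFinite ν] {D : α × β → ℝ} {k : ℝ}
    (hD : CutNormLE μ ν D k) (hD_int : Integrable D (μ.prod ν)) {g : α → ℝ} {h : β → ℝ}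
    (hg : AEStronglyMeasurable g μ) (hh : AEStronglyMeasurable h ν) {A B : ℝ}
    (hA : 0 ≤ A) (hB : 0 ≤ B) (hgA : ∀ᵐ y ∂μ, |g y| ≤ A) (hhB : ∀ᵐ z ∂ν, |h z| ≤ B) :
    |∫ z, D z * (g z.1 * h z.2) ∂μ.prod ν| ≤ 4 * (A * B) * k := by
  have hDh_int : Integrable (fun z : α × β => D z * h z.2) (μ.prod ν) :=
    hD_int.mul_bdd hh.comp_snd (Measure.quasiMeasurePreserving_snd.ae hhB)
  have hDgh_int : Integrable (fun z : α × β => D z * (g z.1 * h z.2)) (μ.prod ν) := by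
    refine (hDh_int.mul_bdd hg.comp_fst (Measure.quasiMeasurePreserving_fst.ae hgA)).congr
      (ae_of_all _ fun z => ?_)
    ring
  have hsection (S : Set α) (hS : MeasurableSet S) :
      |∫ y in S, ∫ z, D (y, z) * h z ∂ν ∂μ| ≤ 2 * B * k := by
    have hDS_int : Integrable D ((μ.restrict S).prod ν) :=
      hD_int.mono_measure (Measure.prod_mono Measure.restrict_le_self le_rfl)
    have hDhS_int : Integrable (fun z : α × β => D z * h z.2) ((μ.restrict S).prod ν) :=
      hDh_int.mono_measure (Measure.prod_mono Measure.restrict_le_self le_rfl)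
    rw [integral_integral_swap hDhS_int]
    simp_rw [integral_mul_const]
    refine abs_integral_mul_le_of_abs_setIntegral_le hDS_int.integral_prod_right hB hhB
      fun T hT => ?_
    have hDST_int : Integrable D ((μ.restrict S).prod (ν.restrict T)) :=
      hDS_int.mono_measure (Measure.prod_mono le_rfl Measure.restrict_le_self)
    rw [← integral_prod_symm D hDST_int, Measure.prod_restrict]
    exact hD hS hT
  rw [integral_prod _ hDgh_int]
  calc |∫ y, ∫ z, D (y, z) * (g y * h z) ∂ν ∂μ|
      = |∫ y, (∫ z, D (y, z) * h z ∂ν) * g y ∂μ| := by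
        simp_rw [← integral_mul_const, mul_left_comm, mul_comm]
    _ ≤ 2 * A * (2 * B * k) :=
        abs_integral_mul_le_of_abs_setIntegral_le hDh_int.integral_prod_left hA hgA hsection
    _ = 4 * (A * B) * k := by ring

theorem CutNormLE.abs_integral_pi_le {ι : Type*} [Fintype ι] {X : ι → Type*}
    [∀ i, MeasurableSpace (X i)] {μ : ∀ i, Measure (X i)} [∀ i, IsProbabilityMeasure (μ i)]
    {a b : ι} (hab : a ≠ b) {D : X a × X b → ℝ} {k : ℝ} (hD : CutNormLE (μ a) (μ b) D k)
    (hD_int : Integrable D ((μ a).prod (μ b))) {g h : (∀ i, X i) → ℝ}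
    (hg : Measurable g) (hh : Measurable h) (hgb : DependsOn g {b}ᶜ) (hha : DependsOn h {a}ᶜ)
    {A B : ℝ} (hA : 0 ≤ A) (hB : 0 ≤ B) (hgA : ∀ᵐ x ∂Measure.pi μ, |g x| ≤ A)
    (hhB : ∀ᵐ x ∂Measure.pi μ, |h x| ≤ B) :
    |∫ x, D (x a, x b) * (g x * h x) ∂Measure.pi μ| ≤ 4 * (A * B) * k := by
  classical
  have hint : Integrable (fun x => D (x a, x b) * (g x * h x)) (Measure.pi μ) := by
    refine (measurePreserving_eval_prodMk μ hab).integrable_comp_of_integrable hD_int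
      |>.mul_bdd (c := A * B) (hg.mul hh).aestronglyMeasurable ?_
    filter_upwards [hgA, hhB] with x hxA hxB
    rw [norm_mul]
    exact mul_le_mul hxA hxB (norm_nonneg _) hA
  have hresample (x : ∀ i, X i) (y : X a) (z : X b) :
      D (Function.update (Function.update x a y) b z a,
          Function.update (Function.update x a y) b z b) *
        (g (Function.update (Function.update x a y) b z) *
          h (Function.update (Function.update x a y) b z)) =
      D (y, z) * (g (Function.update x a y) * h (Function.update x b z)) := by
    rw [apply_update_of_dependsOn hgb (notMem_compl_iff.2 rfl), Function.update_self,
      Function.update_of_ne hab, Function.update_self, Function.update_comm hab,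
      apply_update_of_dependsOn hha (notMem_compl_iff.2 rfl)]
  have hmp := measurePreserving_update_update_prod μ a b
  rw [← hmp.map_eq] at hint
  have hint_resample := hint.comp_aemeasurable hmp.aemeasurable
  simp only [Function.comp_def, hresample] at hint_resample
  rw [← hmp.map_eq, integral_map hmp.aemeasurable hint.1]
  simp_rw [hresample]
  rw [integral_prod _ hint_resample]
  have hbound : ∀ᵐ x ∂Measure.pi μ, ‖∫ z, D z * (g (Function.update x a z.1) *
      h (Function.update x b z.2)) ∂(μ a).prod (μ b)‖ ≤ 4 * (A * B) * k := by
    filter_upwards [ae_ae_update_of_ae_pi μ hgA a, ae_ae_update_of_ae_pi μ hhB b] with x hxA hxB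
    exact hD.abs_integral_mul_le hD_int
      (hg.comp (measurable_update x)).aestronglyMeasurable
      (hh.comp (measurable_update x)).aestronglyMeasurable hA hB hxA hxB
  simpa using norm_integral_le_of_norm_le_const hbound

theorem cutNormLE_cutDist {U V : ℝ → ℝ → ℝ}
    (hUV : Integrable (Function.uncurry U - Function.uncurry V) (unif01.prod unif01)) :
    CutNormLE unif01 unif01 (Function.uncurry U - Function.uncurry V) (cutDist U V) := by
  set D := Function.uncurry U - Function.uncurry V
  have hrect (S T : {S : Set ℝ // MeasurableSet S}) :
      ∫ x in Set.Icc (0 : ℝ) 1 ∩ S.1, ∫ y in Set.Icc (0 : ℝ) 1 ∩ T.1, (U x y - V x y) =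
        ∫ z in S.1 ×ˢ T.1, D z ∂unif01.prod unif01 := by
    rw [inter_comm _ S.1, inter_comm _ T.1, ← Measure.restrict_restrict S.2,
      ← Measure.restrict_restrict T.2, setIntegral_prod D hUV.integrableOn]
    rfl
  have hrect_le (S T : {S : Set ℝ // MeasurableSet S}) :
      |∫ z in S.1 ×ˢ T.1, D z ∂unif01.prod unif01| ≤ ∫ z, |D z| ∂unif01.prod unif01 :=
    abs_integral_le_integral_abs.trans <|
      setIntegral_le_integral hUV.abs (ae_of_all _ fun z => abs_nonneg _)
  have : Nonempty {S : Set ℝ // MeasurableSet S} := ⟨⟨∅, .empty⟩⟩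
  intro S T hS hT
  simp only [cutDist, hrect]
  refine le_ciSup_of_le ⟨∫ z, |D z| ∂unif01.prod unif01, ?_⟩ ⟨S, hS⟩ <|
    le_ciSup (f := fun T : {T : Set ℝ // MeasurableSet T} =>
      |∫ z in S ×ˢ T.1, D z ∂unif01.prod unif01|) ⟨∫ z, |D z| ∂unif01.prod unif01, ?_⟩ ⟨T, hT⟩
  · rintro _ ⟨S, rfl⟩
    exact ciSup_le (hrect_le S)
  · rintro _ ⟨T, rfl⟩
    exact hrect_le ⟨S, hS⟩ T

end CutNorm

section Truncation

variable {κ : Type*} (E : Finset κ) (c : κ → ℝ)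

theorem enorm_finsetProd : ‖∏ e ∈ E, c e‖ₑ = ∏ e ∈ E, ‖c e‖ₑ := by
  simp only [enorm_eq_nnnorm, nnnorm_prod, ENNReal.ofNNReal_finsetProd]

theorem enorm_le_ofReal_rpow_mul_enorm_rpow {M q t : ℝ} (hM : 0 < M) (hq : 1 ≤ q) (ht : M ≤ |t|) :
    ‖t‖ₑ ≤ ENNReal.ofReal (M ^ (1 - q)) * ‖t‖ₑ ^ q := by
  have ht0 : 0 < |t| := hM.trans_le ht
  rw [Real.enorm_eq_ofReal_abs, ENNReal.ofReal_rpow_of_pos ht0,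
    ← ENNReal.ofReal_mul (Real.rpow_nonneg hM.le _)]
  refine ENNReal.ofReal_le_ofReal ?_
  calc |t| = |t| ^ (1 - q) * |t| ^ q := by
        rw [← Real.rpow_add ht0, sub_add_cancel, Real.rpow_one]
    _ ≤ M ^ (1 - q) * |t| ^ q :=
        mul_le_mul_of_nonneg_right (Real.rpow_le_rpow_of_nonpos hM ht (sub_nonpos.2 hq))
          (by positivity)

theorem enorm_prod_sub_prod_le [DecidableEq κ] {c' : κ → ℝ} {M q : ℝ} (hM : 0 < M) (hq : 1 ≤ q)
    (hc : ∀ e ∈ E, c' e = c e ∨ c' e = 0 ∧ M ≤ |c e|) :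
    ‖∏ e ∈ E, c e - ∏ e ∈ E, c' e‖ₑ ≤
      ∑ e ∈ E, ENNReal.ofReal (M ^ (1 - q)) * ∏ p ∈ E, ‖c p‖ₑ ^ (if p = e then q else 1) := by
  by_cases heq : ∀ e ∈ E, c' e = c e
  · rw [Finset.prod_congr rfl heq, sub_self, enorm_zero]
    exact zero_le
  push Not at heq
  obtain ⟨e, he, hne⟩ := heq
  obtain ⟨hce, hMe⟩ := (hc e he).resolve_left hne
  rw [Finset.prod_eq_zero he hce, sub_zero, enorm_finsetProd]
  refine le_trans ?_ (Finset.single_le_sum (fun _ _ => zero_le) he)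
  rw [← Finset.mul_prod_erase E _ he, ← Finset.mul_prod_erase E (fun p => ‖c p‖ₑ ^ _) he,
    if_pos rfl, ← mul_assoc]
  refine mul_le_mul' (enorm_le_ofReal_rpow_mul_enorm_rpow hM hq hMe) (le_of_eq ?_)
  refine Finset.prod_congr rfl fun p hp => ?_
  rw [if_neg (Finset.ne_of_mem_erase hp), ENNReal.rpow_one]

theorem truncation_eq_self_or_eq_zero {α : Type*} (φ : α → ℝ) (M : ℝ) (z : α) :
    ProbabilityTheory.truncation φ M z = φ z ∨
      ProbabilityTheory.truncation φ M z = 0 ∧ M ≤ |φ z| := by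
  by_cases hz : φ z ∈ Ioc (-M) M
  · exact .inl (indicator_of_mem hz _)
  · refine .inr ⟨indicator_of_notMem hz _, ?_⟩
    contrapose! hz
    exact ⟨(abs_lt.1 hz).1, (abs_lt.1 hz).2.le⟩

theorem eLpNorm_enorm_rpow_le {α : Type*} [MeasurableSpace α] {μ : Measure α}
    [IsProbabilityMeasure μ] {D : α → ℝ} (hD : AEStronglyMeasurable D μ) {p C : ℝ≥0∞} {q r : ℝ}
    (hr : 0 < r) (hrq : r ≤ q) (hC : 1 ≤ C) (hDC : eLpNorm D (ENNReal.ofReal q * p) μ ≤ C) :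
    eLpNorm (fun z => ‖D z‖ₑ ^ r) p μ ≤ C ^ q := by
  have hexp : p * ENNReal.ofReal r ≤ ENNReal.ofReal q * p := by
    rw [mul_comm]
    gcongr
  rw [eLpNorm_enorm_rpow D hr]
  calc eLpNorm D (p * ENNReal.ofReal r) μ ^ r
      ≤ C ^ r := by
        gcongr
        exact (eLpNorm_le_eLpNorm_of_exponent_le hexp hD).trans hDC
    _ ≤ C ^ q := ENNReal.rpow_le_rpow_of_exponent_le hC hrq

theorem eLpNorm_le_eLpNorm_ofReal_mul {α : Type*} [MeasurableSpace α] {μ : Measure α}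
    [IsProbabilityMeasure μ] {D : α → ℝ} (hD : AEStronglyMeasurable D μ) (p : ℝ≥0∞) {q : ℝ}
    (hq : 1 ≤ q) : eLpNorm D p μ ≤ eLpNorm D (ENNReal.ofReal q * p) μ :=
  eLpNorm_le_eLpNorm_of_exponent_le (le_mul_of_one_le_left' (ENNReal.one_le_ofReal.2 hq)) hD

end Truncation

section DecoratedProd

variable {V Ω : Type*} {s : Finset (V × V)} {t : Finset V} {K : V × V → Ω × Ω → ℝ} {f : V → Ω → ℝ}

/-- The integrand of `t(H,W,f)`, restricted to a set `s` of edges and a set `t` of vertices, with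
its own kernel `K p` on every edge `p`, so that kernels can be exchanged one edge at a time. -/
def decoratedProd (s : Finset (V × V)) (t : Finset V) (K : V × V → Ω × Ω → ℝ) (f : V → Ω → ℝ)
    (x : V → Ω) : ℝ :=
  (∏ p ∈ s, K p (x p.1, x p.2)) * ∏ a ∈ t, f a (x a)

theorem decoratedProd_congr {K' : V × V → Ω × Ω → ℝ} (h : ∀ p ∈ s, K p = K' p) :
    decoratedProd s t K f = decoratedProd s t K' f :=
  funext fun _ => congr_arg (· * _) <| Finset.prod_congr rfl fun p hp => congr_fun (h p hp) _

theorem decoratedProd_update [DecidableEq V] {e : V × V} (he : e ∈ s) (U : Ω × Ω → ℝ)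
    (x : V → Ω) :
    decoratedProd s t (Function.update K e U) f x =
      U (x e.1, x e.2) * decoratedProd (s.erase e) t K f x := by
  rw [decoratedProd, ← Finset.mul_prod_erase s _ he, Function.update_self, mul_assoc,
    ← decoratedProd, decoratedProd_congr fun p hp =>
      Function.update_of_ne (Finset.ne_of_mem_erase hp) _ _]

theorem dependsOn_decoratedProd {A : Set V} (hs : ∀ p ∈ s, p.1 ∈ A ∧ p.2 ∈ A)
    (ht : ∀ a ∈ t, a ∈ A) : DependsOn (decoratedProd s t K f) A := by
  intro x y hxy
  refine congr_arg₂ (· * ·) (Finset.prod_congr rfl fun p hp => ?_)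
    (Finset.prod_congr rfl fun a ha => by rw [hxy a (ht a ha)])
  rw [hxy _ (hs p hp).1, hxy _ (hs p hp).2]

variable [MeasurableSpace Ω]

theorem measurable_decoratedProd (hK : ∀ p, Measurable (K p)) (hf : ∀ a, Measurable (f a)) :
    Measurable (decoratedProd s t K f) := by
  unfold decoratedProd
  fun_prop

theorem ae_abs_decoratedProd_le [Fintype V] {μ : Measure Ω} [IsProbabilityMeasure μ]
    (hf1 : ∀ a, ∀ᵐ u ∂μ, |f a u| ≤ 1) {M : ℝ} (hM : 0 ≤ M) (hKM : ∀ p ∈ s, ∀ z, |K p z| ≤ M) :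
    ∀ᵐ x ∂Measure.pi fun _ => μ, |decoratedProd s t K f x| ≤ M ^ s.card := by
  filter_upwards [ae_pi_abs_prod_le_one (fun _ => μ) hf1 t] with x hx
  rw [decoratedProd, abs_mul, Finset.abs_prod]
  calc (∏ p ∈ s, |K p (x p.1, x p.2)|) * |∏ a ∈ t, f a (x a)| ≤ M ^ s.card * 1 := by
        gcongr
        exact (Finset.prod_le_prod (fun _ _ => abs_nonneg _) fun p hp => hKM p hp _).trans_eq
          (Finset.prod_const M)
    _ = M ^ s.card := mul_one _

end DecoratedProd

section GraphDensity

variable {V : Type*} [Fintype V] [LinearOrder V] (G : SimpleGraph V) [DecidableRel G.Adj]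
  {Ω : Type*} [MeasurableSpace Ω] (μ : Measure Ω) [IsProbabilityMeasure μ]

/-- The edges of `G`, each listed once as the pair of its endpoints in increasing order. -/
def orderedEdges : Finset (V × V) :=
  Finset.univ.filter fun p : V × V => G.Adj p.1 p.2 ∧ p.1 < p.2

theorem lt_of_mem_orderedEdges {p : V × V} (hp : p ∈ orderedEdges G) : p.1 < p.2 :=
  (Finset.mem_filter.1 hp).2.2

theorem injOn_sym2Mk_orderedEdges :
    InjOn (fun p : V × V => s(p.1, p.2)) (orderedEdges G) := by
  intro p hp p' hp' heq
  rcases Sym2.eq_iff.1 heq with ⟨h1, h2⟩ | ⟨h1, h2⟩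
  · exact Prod.ext h1 h2
  · have hlt := lt_of_mem_orderedEdges G hp
    rw [h1, h2] at hlt
    exact absurd hlt (lt_of_mem_orderedEdges G hp').not_gt

theorem ne_snd_of_mem_orderedEdges {e p : V × V} (he : e ∈ orderedEdges G)
    (hp : p ∈ orderedEdges G) (hpe : p ≠ e) (hp_fst : p.1 = e.1 ∨ p.2 = e.1) :
    p.1 ≠ e.2 ∧ p.2 ≠ e.2 := by
  have hlt_e := lt_of_mem_orderedEdges G he
  have hlt_p := lt_of_mem_orderedEdges G hp
  rcases hp_fst with h1 | h2
  · exact ⟨h1.trans_ne hlt_e.ne, fun h2 => hpe (Prod.ext h1 h2)⟩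
  · exact ⟨fun h1 => by order, h2.trans_ne hlt_e.ne⟩

theorem card_filter_orderedEdges_le_maxDegree (i : V) :
    ({p ∈ orderedEdges G | i ∈ ({p.1, p.2} : Finset V)} : Finset (V × V)).card ≤ G.maxDegree := by
  refine le_trans ?_ (G.degree_le_maxDegree i)
  rw [← G.card_incidenceFinset_eq_degree]
  refine Finset.card_le_card_of_injOn (fun p => s(p.1, p.2)) (fun p hp => ?_)
    ((injOn_sym2Mk_orderedEdges G).mono (Finset.coe_subset.2 (Finset.filter_subset _ _)))
  obtain ⟨hpE, hip⟩ := Finset.mem_filter.1 hp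
  simpa [SimpleGraph.mem_incidenceFinset, SimpleGraph.mk'_mem_incidenceSet_iff, eq_comm] using
    ⟨(Finset.mem_filter.1 hpE).2.1, by simpa [eq_comm] using hip⟩

theorem maxDegree_pos_of_mem_orderedEdges {p : V × V} (hp : p ∈ orderedEdges G) :
    0 < G.maxDegree :=
  (card_filter_orderedEdges_le_maxDegree G p.1).trans_lt' <|
    Finset.card_pos.2 ⟨p, Finset.mem_filter.2 ⟨hp, Finset.mem_insert_self _ _⟩⟩

theorem lintegral_prod_orderedEdges_le {g : V × V → Ω × Ω → ℝ≥0∞} (hg : ∀ p, Measurable (g p)) :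
    ∫⁻ x, ∏ p ∈ orderedEdges G, g p (x p.1, x p.2) ∂Measure.pi (fun _ => μ) ≤
      ∏ p ∈ orderedEdges G, eLpNorm (g p) G.maxDegree (μ.prod μ) := by
  obtain hE | ⟨e, he⟩ := (orderedEdges G).eq_empty_or_nonempty
  · simp only [hE, Finset.prod_empty, lintegral_one, measure_univ, le_refl]
  set d : ℝ := (G.maxDegree : ℝ)
  have hd : 0 < d := Nat.cast_pos.2 (maxDegree_pos_of_mem_orderedEdges G he)
  have hg_pow (p : V × V) : Measurable fun z => g p z ^ d := (hg p).pow_const d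
  have hsupport (p : V × V) :
      DependsOn (fun x : V → Ω => g p (x p.1, x p.2) ^ d) ({p.1, p.2} : Finset V) :=
    fun x y hxy => by simp only [hxy p.1 (by simp), hxy p.2 (by simp)]
  have hweight (i : V) : ∑ p ∈ orderedEdges G with i ∈ ({p.1, p.2} : Finset V), d⁻¹ ≤ 1 := by
    rw [Finset.sum_const, nsmul_eq_mul, ← div_eq_mul_inv, div_le_one hd]
    exact Nat.cast_le.2 (card_filter_orderedEdges_le_maxDegree G i)
  calc ∫⁻ x, ∏ p ∈ orderedEdges G, g p (x p.1, x p.2) ∂Measure.pi (fun _ => μ)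
      = ∫⁻ x, ∏ p ∈ orderedEdges G, (g p (x p.1, x p.2) ^ d) ^ d⁻¹ ∂Measure.pi (fun _ => μ) := by
        simp only [ENNReal.rpow_rpow_inv hd.ne']
    _ ≤ ∏ p ∈ orderedEdges G, (∫⁻ x, g p (x p.1, x p.2) ^ d ∂Measure.pi (fun _ => μ)) ^ d⁻¹ :=
        lintegral_pi_prod_rpow_le_prod_lintegral_rpow _ (fun _ => μ)
          (fun p => (hg_pow p).comp (by fun_prop)) hsupport (fun _ _ => inv_nonneg.2 hd.le) hweight
    _ = ∏ p ∈ orderedEdges G, eLpNorm (g p) G.maxDegree (μ.prod μ) := by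
        refine Finset.prod_congr rfl fun p hp => ?_
        rw [(measurePreserving_eval_prodMk (fun _ => μ) (lt_of_mem_orderedEdges G hp).ne
            ).lintegral_comp (hg_pow p),
          eLpNorm_eq_lintegral_rpow_enorm_toReal
            (Nat.cast_ne_zero.2 (maxDegree_pos_of_mem_orderedEdges G hp).ne')
            (ENNReal.natCast_ne_top _), one_div, ENNReal.toReal_natCast]
        rfl

/-- The functional `t(H,W,f)` with its own kernel `K p` on every edge `p`. -/
noncomputable def decoratedDensity (K : V × V → Ω × Ω → ℝ) (f : V → Ω → ℝ) : ℝ :=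
  ∫ x, decoratedProd (orderedEdges G) Finset.univ K f x ∂Measure.pi fun _ => μ

variable {μ} {K K' : V × V → Ω × Ω → ℝ} {f : V → Ω → ℝ}

theorem lintegral_enorm_decoratedProd_le (hK : ∀ p, Measurable (K p))
    (hf1 : ∀ a, ∀ᵐ u ∂μ, |f a u| ≤ 1) :
    ∫⁻ x, ‖decoratedProd (orderedEdges G) Finset.univ K f x‖ₑ ∂Measure.pi (fun _ => μ) ≤
      ∏ p ∈ orderedEdges G, eLpNorm (K p) G.maxDegree (μ.prod μ) := by
  refine (lintegral_enorm_mul_prod_le _ hf1 _).trans ?_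
  simp_rw [enorm_finsetProd]
  simpa only [eLpNorm_enorm] using
    lintegral_prod_orderedEdges_le G μ fun p => (hK p).enorm

theorem integrable_decoratedProd (hK : ∀ p, Measurable (K p))
    (hK_top : ∀ p ∈ orderedEdges G, eLpNorm (K p) G.maxDegree (μ.prod μ) ≠ ⊤)
    (hf : ∀ a, Measurable (f a)) (hf1 : ∀ a, ∀ᵐ u ∂μ, |f a u| ≤ 1) :
    Integrable (decoratedProd (orderedEdges G) Finset.univ K f) (Measure.pi fun _ => μ) :=
  ⟨(measurable_decoratedProd hK hf).aestronglyMeasurable,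
    (lintegral_enorm_decoratedProd_le G hK hf1).trans_lt
      (ENNReal.prod_lt_top fun p hp => (hK_top p hp).lt_top)⟩

theorem enorm_decoratedDensity_le (hK : ∀ p, Measurable (K p))
    (hf1 : ∀ a, ∀ᵐ u ∂μ, |f a u| ≤ 1) :
    ‖decoratedDensity G μ K f‖ₑ ≤ ∏ p ∈ orderedEdges G, eLpNorm (K p) G.maxDegree (μ.prod μ) :=
  (enorm_integral_le_lintegral_enorm _).trans (lintegral_enorm_decoratedProd_le G hK hf1)

theorem lintegral_enorm_prod_sub_prod_le (hK : ∀ p, Measurable (K p)) {M q : ℝ} (hM : 0 < M)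
    (hq : 1 ≤ q) {C : ℝ≥0∞} (hC : 1 ≤ C)
    (hKC : ∀ p ∈ orderedEdges G, eLpNorm (K p) (ENNReal.ofReal q * G.maxDegree) (μ.prod μ) ≤ C)
    (hKK' : ∀ p ∈ orderedEdges G, ∀ z, K' p z = K p z ∨ K' p z = 0 ∧ M ≤ |K p z|) :
    ∫⁻ x, ‖∏ p ∈ orderedEdges G, K p (x p.1, x p.2) - ∏ p ∈ orderedEdges G, K' p (x p.1, x p.2)‖ₑ
        ∂Measure.pi (fun _ => μ) ≤
      (orderedEdges G).card *
        (ENNReal.ofReal (M ^ (1 - q)) * (C ^ q) ^ (orderedEdges G).card) := by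
  set E := orderedEdges G
  have hmeas (e p) : Measurable fun z => ‖K p z‖ₑ ^ (if p = e then q else 1) :=
    (hK p).enorm.pow_const _
  have hmeas_prod (e) : Measurable fun x : V → Ω =>
      ∏ p ∈ E, ‖K p (x p.1, x p.2)‖ₑ ^ (if p = e then q else 1) :=
    Finset.measurable_prod _ fun p _ => (hmeas e p).comp (by fun_prop)
  have hfactor (e p) (hp : p ∈ E) :
      eLpNorm (fun z => ‖K p z‖ₑ ^ (if p = e then q else 1)) G.maxDegree (μ.prod μ) ≤ C ^ q := by
    refine eLpNorm_enorm_rpow_le (hK p).aestronglyMeasurable ?_ ?_ hC (hKC p hp) <;>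
      split_ifs <;> linarith
  calc ∫⁻ x, ‖∏ p ∈ E, K p (x p.1, x p.2) - ∏ p ∈ E, K' p (x p.1, x p.2)‖ₑ
        ∂Measure.pi (fun _ => μ)
      ≤ ∫⁻ x, ∑ e ∈ E, ENNReal.ofReal (M ^ (1 - q)) *
          ∏ p ∈ E, ‖K p (x p.1, x p.2)‖ₑ ^ (if p = e then q else 1) ∂Measure.pi fun _ => μ :=
        lintegral_mono fun x => enorm_prod_sub_prod_le E _ hM hq fun p hp => hKK' p hp _
    _ = ∑ e ∈ E, ENNReal.ofReal (M ^ (1 - q)) * ∫⁻ x,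
          ∏ p ∈ E, ‖K p (x p.1, x p.2)‖ₑ ^ (if p = e then q else 1) ∂Measure.pi fun _ => μ := by
        rw [lintegral_finsetSum _ fun e _ => (hmeas_prod e).const_mul _]
        simp_rw [lintegral_const_mul _ (hmeas_prod _)]
    _ ≤ ∑ _e ∈ E, ENNReal.ofReal (M ^ (1 - q)) * ∏ _p ∈ E, C ^ q := by
        gcongr
        exact (lintegral_prod_orderedEdges_le G μ (hmeas _)).trans
          (Finset.prod_le_prod' (hfactor _))
    _ = E.card * (ENNReal.ofReal (M ^ (1 - q)) * (C ^ q) ^ E.card) := by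
        rw [Finset.sum_const, Finset.prod_const, nsmul_eq_mul]

theorem enorm_decoratedDensity_sub_le (hK : ∀ p, Measurable (K p))
    (hK' : ∀ p, Measurable (K' p)) (hf : ∀ a, Measurable (f a))
    (hf1 : ∀ a, ∀ᵐ u ∂μ, |f a u| ≤ 1) {M q : ℝ} (hM : 0 < M) (hq : 1 ≤ q) {C : ℝ≥0∞}
    (hC : 1 ≤ C) (hC_top : C ≠ ⊤)
    (hKC : ∀ p ∈ orderedEdges G, eLpNorm (K p) (ENNReal.ofReal q * G.maxDegree) (μ.prod μ) ≤ C)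
    (hKK' : ∀ p ∈ orderedEdges G, ∀ z, K' p z = K p z ∨ K' p z = 0 ∧ M ≤ |K p z|) :
    ‖decoratedDensity G μ K f - decoratedDensity G μ K' f‖ₑ ≤
      (orderedEdges G).card *
        (ENNReal.ofReal (M ^ (1 - q)) * (C ^ q) ^ (orderedEdges G).card) := by
  have hK_top (p) (hp : p ∈ orderedEdges G) : eLpNorm (K p) G.maxDegree (μ.prod μ) ≠ ⊤ :=
    ne_top_of_le_ne_top hC_top <|
      (eLpNorm_le_eLpNorm_ofReal_mul (hK p).aestronglyMeasurable _ hq).trans (hKC p hp)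
  have hK'_top (p) (hp : p ∈ orderedEdges G) : eLpNorm (K' p) G.maxDegree (μ.prod μ) ≠ ⊤ :=
    ne_top_of_le_ne_top (hK_top p hp) <| eLpNorm_mono fun z => by
      rcases hKK' p hp z with h | ⟨h, -⟩ <;> simp [h]
  rw [decoratedDensity, decoratedDensity,
    ← integral_sub (integrable_decoratedProd G hK hK_top hf hf1)
      (integrable_decoratedProd G hK' hK'_top hf hf1)]
  simp_rw [decoratedProd, ← sub_mul]
  exact (enorm_integral_le_lintegral_enorm _).trans <| (lintegral_enorm_mul_prod_le _ hf1 _).trans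
    (lintegral_enorm_prod_sub_prod_le G hK hM hq hC hKC hKK')

theorem abs_decoratedDensity_le_of_cutNormLE {e : V × V} (he : e ∈ orderedEdges G)
    (hK : ∀ p, Measurable (K p)) (hKe_int : Integrable (K e) (μ.prod μ))
    (hf : ∀ a, Measurable (f a)) (hf1 : ∀ a, ∀ᵐ u ∂μ, |f a u| ≤ 1) {M k : ℝ} (hM : 0 ≤ M)
    (hKM : ∀ p ≠ e, ∀ z, |K p z| ≤ M) (hk : CutNormLE μ μ (K e) k) :
    |decoratedDensity G μ K f| ≤ 4 * M ^ ((orderedEdges G).card - 1) * k := by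
  set Ea := {p ∈ (orderedEdges G).erase e | p.1 = e.1 ∨ p.2 = e.1}
  set Eb := {p ∈ (orderedEdges G).erase e | ¬ (p.1 = e.1 ∨ p.2 = e.1)}
  set g := decoratedProd Ea {e.1} K f
  set h := decoratedProd Eb (Finset.univ.erase e.1) K f
  have hsplit (x : V → Ω) : decoratedProd (orderedEdges G) Finset.univ K f x =
      K e (x e.1, x e.2) * (g x * h x) := by
    simp only [decoratedProd, g, h, Finset.prod_singleton]
    rw [← Finset.mul_prod_erase _ _ he, ← Finset.mul_prod_erase _ _ (Finset.mem_univ e.1),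
      ← Finset.prod_filter_mul_prod_filter_not (Finset.erase _ e) fun p => p.1 = e.1 ∨ p.2 = e.1]
    ring
  have hcard : Ea.card + Eb.card = (orderedEdges G).card - 1 := by
    rw [Finset.card_filter_add_card_filter_not, Finset.card_erase_of_mem he]
  have hne : e.1 ≠ e.2 := (lt_of_mem_orderedEdges G he).ne
  have hg : DependsOn g {e.2}ᶜ := dependsOn_decoratedProd
    (fun p hp => by
      obtain ⟨hpE, hpa⟩ := Finset.mem_filter.1 hp
      exact ne_snd_of_mem_orderedEdges G he (Finset.mem_of_mem_erase hpE)
        (Finset.ne_of_mem_erase hpE) hpa)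
    (fun a ha => by rwa [Finset.mem_singleton.1 ha])
  have hh : DependsOn h {e.1}ᶜ := dependsOn_decoratedProd
    (fun p hp => not_or.1 (Finset.mem_filter.1 hp).2) (fun a ha => Finset.ne_of_mem_erase ha)
  have hKM_erase (p) (hp : p ∈ (orderedEdges G).erase e) := hKM p (Finset.ne_of_mem_erase hp)
  simp only [decoratedDensity, hsplit]
  rw [← hcard, pow_add]
  exact hk.abs_integral_pi_le (μ := fun _ => μ) hne hKe_int (measurable_decoratedProd hK hf)
    (measurable_decoratedProd hK hf) hg hh (pow_nonneg hM _) (pow_nonneg hM _)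
    (ae_abs_decoratedProd_le hf1 hM fun p hp => hKM_erase p (Finset.filter_subset _ _ hp))
    (ae_abs_decoratedProd_le hf1 hM fun p hp => hKM_erase p (Finset.filter_subset _ _ hp))

theorem one_le_ofReal_mul_maxDegree {e : V × V} (he : e ∈ orderedEdges G) {q : ℝ} (hq : 1 ≤ q) :
    1 ≤ ENNReal.ofReal q * G.maxDegree :=
  one_le_mul (ENNReal.one_le_ofReal.2 hq)
    (Nat.one_le_cast.2 (maxDegree_pos_of_mem_orderedEdges G he))

/-- The bound on `t` when one of the `N` kernels has cut norm at most `k` and all of them have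
`L^(qΔ)` norm at most `C`: the cost of truncating the others at `M`, and the cut norm estimate for
the truncated product. -/
noncomputable def exchangeError (N : ℕ) (q : ℝ) (C : ℝ≥0) (M k : ℝ) : ℝ :=
  N * (M ^ (1 - q) * ((C : ℝ) ^ q) ^ N) + 4 * M ^ (N - 1) * k

theorem abs_decoratedDensity_le_of_eLpNorm_le_of_cutNormLE {e : V × V} (he : e ∈ orderedEdges G)
    (hK : ∀ p, Measurable (K p)) (hf : ∀ a, Measurable (f a)) (hf1 : ∀ a, ∀ᵐ u ∂μ, |f a u| ≤ 1)
    {q : ℝ} (hq : 1 ≤ q) {C : ℝ≥0} (hC : 1 ≤ C)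
    (hKC : ∀ p ∈ orderedEdges G, eLpNorm (K p) (ENNReal.ofReal q * G.maxDegree) (μ.prod μ) ≤ C)
    {k : ℝ} (hk : CutNormLE μ μ (K e) k) {M : ℝ} (hM : 0 < M) :
    |decoratedDensity G μ K f| ≤ exchangeError (orderedEdges G).card q C M k := by
  set K' : V × V → Ω × Ω → ℝ :=
    Function.update (fun p => ProbabilityTheory.truncation (K p) M) e (K e)
  have hK'e : K' e = K e := Function.update_self ..
  have hK'_ne (p) (hp : p ≠ e) : K' p = ProbabilityTheory.truncation (K p) M :=
    Function.update_of_ne hp ..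
  have hK'_meas (p) : Measurable (K' p) := by
    obtain rfl | hp := eq_or_ne p e
    · exact hK'e ▸ hK p
    · rw [hK'_ne p hp]
      exact (measurable_id.indicator measurableSet_Ioc).comp (hK p)
  have hKe_int : Integrable (K' e) (μ.prod μ) := hK'e ▸ MemLp.integrable
    (one_le_ofReal_mul_maxDegree G he hq)
    ⟨(hK e).aestronglyMeasurable, (hKC e he).trans_lt ENNReal.coe_lt_top⟩
  have htrunc (p) (z) : K' p z = K p z ∨ K' p z = 0 ∧ M ≤ |K p z| := by
    obtain rfl | hp := eq_or_ne p e
    · exact .inl (congr_fun hK'e z)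
    · rw [hK'_ne p hp]
      exact truncation_eq_self_or_eq_zero (K p) M z
  have herror := ENNReal.toReal_mono (by finiteness) <| enorm_decoratedDensity_sub_le G hK hK'_meas
    hf hf1 hM hq (by exact_mod_cast hC) ENNReal.coe_ne_top hKC fun p _ => htrunc p
  have hcut := abs_decoratedDensity_le_of_cutNormLE G he hK'_meas hKe_int hf hf1 hM.le
    (fun p hp z => by
      rw [hK'_ne p hp]
      exact (ProbabilityTheory.abs_truncation_le_bound _ _ _).trans_eq (abs_of_pos hM))
    (hK'e.symm ▸ hk)
  rw [toReal_enorm, Real.norm_eq_abs] at herror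
  simp only [ENNReal.toReal_mul, ENNReal.toReal_natCast, ENNReal.toReal_pow,
    ← ENNReal.toReal_rpow, ENNReal.coe_toReal,
    ENNReal.toReal_ofReal (Real.rpow_nonneg hM.le _)] at herror
  rw [exchangeError]
  linarith [abs_sub_abs_le_abs_sub (decoratedDensity G μ K f) (decoratedDensity G μ K' f)]

theorem decoratedDensity_update_sub {e : V × V} (he : e ∈ orderedEdges G)
    (hK : ∀ p, Measurable (K p))
    (hK_top : ∀ p ∈ orderedEdges G, eLpNorm (K p) G.maxDegree (μ.prod μ) ≠ ⊤)
    (hf : ∀ a, Measurable (f a)) (hf1 : ∀ a, ∀ᵐ u ∂μ, |f a u| ≤ 1) {U W : Ω × Ω → ℝ}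
    (hU : Measurable U) (hW : Measurable W) (hU_top : eLpNorm U G.maxDegree (μ.prod μ) ≠ ⊤)
    (hW_top : eLpNorm W G.maxDegree (μ.prod μ) ≠ ⊤) :
    decoratedDensity G μ (Function.update K e U) f -
      decoratedDensity G μ (Function.update K e W) f =
        decoratedDensity G μ (Function.update K e (U - W)) f := by
  have hint {D : Ω × Ω → ℝ} (hD : Measurable D) (hD_top : eLpNorm D G.maxDegree (μ.prod μ) ≠ ⊤) :=
    integrable_decoratedProd G (K := Function.update K e D)
      ((Function.forall_update_iff K fun _ => Measurable).2 ⟨hD, fun p _ => hK p⟩)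
      (fun p hp => by
        obtain rfl | hpe := eq_or_ne p e
        · rwa [Function.update_self]
        · rw [Function.update_of_ne hpe]
          exact hK_top p hp) hf hf1
  rw [decoratedDensity, decoratedDensity, ← integral_sub (hint hU hU_top) (hint hW hW_top)]
  simp only [decoratedDensity, decoratedProd_update he, Pi.sub_apply, sub_mul]

theorem abs_decoratedDensity_sub_le (hK : ∀ p, Measurable (K p)) (hK' : ∀ p, Measurable (K' p))
    (hf : ∀ a, Measurable (f a)) (hf1 : ∀ a, ∀ᵐ u ∂μ, |f a u| ≤ 1) {q : ℝ} (hq : 1 ≤ q) {C : ℝ≥0}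
    (hC : 1 ≤ C)
    (hKC : ∀ p ∈ orderedEdges G, eLpNorm (K p) (ENNReal.ofReal q * G.maxDegree) (μ.prod μ) ≤ C)
    (hKC' : ∀ p ∈ orderedEdges G, eLpNorm (K' p) (ENNReal.ofReal q * G.maxDegree) (μ.prod μ) ≤ C)
    (hsub : ∀ p ∈ orderedEdges G,
      eLpNorm (K p - K' p) (ENNReal.ofReal q * G.maxDegree) (μ.prod μ) ≤ C)
    {k : ℝ} (hk : ∀ p ∈ orderedEdges G, CutNormLE μ μ (K p - K' p) k) {M : ℝ} (hM : 0 < M) :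
    |decoratedDensity G μ K f - decoratedDensity G μ K' f| ≤
      (orderedEdges G).card * exchangeError (orderedEdges G).card q C M k := by
  have htop {D : Ω × Ω → ℝ} (hD : Measurable D)
      (hDC : eLpNorm D (ENNReal.ofReal q * G.maxDegree) (μ.prod μ) ≤ C) :
      eLpNorm D G.maxDegree (μ.prod μ) ≠ ⊤ :=
    ne_top_of_le_ne_top ENNReal.coe_ne_top <|
      (eLpNorm_le_eLpNorm_ofReal_mul hD.aestronglyMeasurable _ hq).trans hDC
  have hK_piecewise : decoratedDensity G μ ((orderedEdges G).piecewise K K') f =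
      decoratedDensity G μ K f := by
    simp only [decoratedDensity, decoratedProd_congr fun _ =>
      Finset.piecewise_eq_of_mem (orderedEdges G) K K']
  rw [← hK_piecewise]
  refine abs_piecewise_sub_le (decoratedDensity G μ · f) K K' (orderedEdges G) fun e he s => ?_
  have hmix (p) : Measurable (s.piecewise K K' p) :=
    s.piecewise_cases K K' (p := Measurable) (hK p) (hK' p)
  have hmixC (p) (hp : p ∈ orderedEdges G) :
      eLpNorm (s.piecewise K K' p) (ENNReal.ofReal q * G.maxDegree) (μ.prod μ) ≤ C :=
    s.piecewise_cases K K' (p := fun D => eLpNorm D _ _ ≤ C) (hKC p hp) (hKC' p hp)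
  rw [decoratedDensity_update_sub G he hmix (fun p hp => htop (hmix p) (hmixC p hp)) hf hf1
    (hK e) (hK' e) (htop (hK e) (hKC e he)) (htop (hK' e) (hKC' e he))]
  refine abs_decoratedDensity_le_of_eLpNorm_le_of_cutNormLE G he ?_ hf hf1 hq hC ?_ ?_ hM
  · exact (Function.forall_update_iff _ fun _ => Measurable).2
      ⟨(hK e).sub (hK' e), fun p _ => hmix p⟩
  · intro p hp
    obtain rfl | hpe := eq_or_ne p e
    · rw [Function.update_self]
      exact hsub p hp
    · rw [Function.update_of_ne hpe]
      exact hmixC p hp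
  · rw [Function.update_self]
    exact hk e he

theorem exists_mul_exchangeError_le (N : ℕ) {q : ℝ} (hq : 1 < q) (C : ℝ≥0) {ε : ℝ} (hε : 0 < ε) :
    ∃ M > 0, ∃ δ > 0, N * exchangeError N q C M δ ≤ ε := by
  have hM_tendsto : Tendsto (fun M => N * exchangeError N q C M 0) atTop (nhds 0) := by
    have hrpow := (tendsto_rpow_neg_atTop (sub_pos.2 hq)).mul_const (((C : ℝ) ^ q) ^ N)
    simpa [exchangeError] using (hrpow.const_mul (N : ℝ)).const_mul (N : ℝ)
  obtain ⟨M, hMε, hM⟩ := ((hM_tendsto.eventually_lt_const hε).and (eventually_gt_atTop 0)).exists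
  have hδ_cont : Continuous fun δ => N * exchangeError N q C M δ := by
    unfold exchangeError
    fun_prop
  have hδ_lt : ∀ᶠ δ in nhdsWithin 0 (Ioi 0), N * exchangeError N q C M δ < ε :=
    nhdsWithin_le_nhds (hδ_cont.continuousAt.eventually_lt_const hMε)
  obtain ⟨δ, hδε, hδ⟩ := (hδ_lt.and self_mem_nhdsWithin).exists
  exact ⟨M, hM, δ, hδ, hδε.le⟩

theorem exists_forall_abs_decoratedDensity_sub_le {q : ℝ} (hq : 1 < q) (C : ℝ≥0) {ε : ℝ}
    (hε : 0 < ε) :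
    ∃ δ > 0, ∀ {K K' : V × V → Ω × Ω → ℝ} {f : V → Ω → ℝ},
      (∀ p, Measurable (K p)) → (∀ p, Measurable (K' p)) →
      (∀ a, Measurable (f a)) → (∀ a, ∀ᵐ u ∂μ, |f a u| ≤ 1) →
      (∀ p ∈ orderedEdges G, eLpNorm (K p) (ENNReal.ofReal q * G.maxDegree) (μ.prod μ) ≤ C) →
      (∀ p ∈ orderedEdges G, eLpNorm (K' p) (ENNReal.ofReal q * G.maxDegree) (μ.prod μ) ≤ C) →
      (∀ p ∈ orderedEdges G, CutNormLE μ μ (K p - K' p) δ) →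
      |decoratedDensity G μ K f - decoratedDensity G μ K' f| ≤ ε := by
  obtain ⟨M, hM, δ, hδ, hδε⟩ :=
    exists_mul_exchangeError_le (orderedEdges G).card hq (1 + (C + C)) hε
  refine ⟨δ, hδ, fun {K K' f} hK hK' hf hf1 hKC hKC' hcut => ?_⟩
  have hCC : (C : ℝ≥0∞) + C ≤ (1 + (C + C) : ℝ≥0) := by
    exact_mod_cast le_add_self
  have hC : (C : ℝ≥0∞) ≤ (1 + (C + C) : ℝ≥0) := le_self_add.trans hCC
  refine (abs_decoratedDensity_sub_le G hK hK' hf hf1 hq.le le_self_add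
    (fun p hp => (hKC p hp).trans hC) (fun p hp => (hKC' p hp).trans hC) (fun p hp => ?_)
    hcut hM).trans hδε
  exact (eLpNorm_sub_le (hK p).aestronglyMeasurable (hK' p).aestronglyMeasurable
    (one_le_ofReal_mul_maxDegree G hp hq.le)).trans
      ((add_le_add (hKC p hp) (hKC' p hp)).trans hCC)

end GraphDensity

theorem ae_unif01_abs_le_one {g : ℝ → ℝ} (hg : ∀ u ∈ Icc (0 : ℝ) 1, g u ∈ Icc (-1 : ℝ) 1) :
    ∀ᵐ u ∂unif01, |g u| ≤ 1 :=
  ae_restrict_of_forall_mem measurableSet_Icc fun u hu => abs_le.2 (hg u hu)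

theorem kerNorm_le_kerNorm_ofReal_mul {W : ℝ → ℝ → ℝ} (hW : Measurable (Function.uncurry W))
    (p : ℝ≥0∞) {q : ℝ} (hq : 1 ≤ q) : kerNorm W p ≤ kerNorm W (ENNReal.ofReal q * p) :=
  eLpNorm_le_eLpNorm_ofReal_mul hW.aestronglyMeasurable p hq

section KernelDensity

variable {v : ℕ} (G : SimpleGraph (Fin v)) [DecidableRel G.Adj]

theorem edgeProd_mul_prod_eq_decoratedProd (W : ℝ → ℝ → ℝ) (f : Fin v → ℝ → ℝ) :
    (fun x : Fin v → ℝ => edgeProd G (fun a b => W (x a) (x b)) * ∏ a, f a (x a)) =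
      decoratedProd (orderedEdges G) Finset.univ (fun _ => Function.uncurry W) f :=
  rfl

theorem tHWf_eq_decoratedDensity (W : ℝ → ℝ → ℝ) (f : Fin v → ℝ → ℝ) :
    tHWf G W f = decoratedDensity G unif01 (fun _ => Function.uncurry W) f :=
  rfl

theorem integrable_edgeProd_mul_prod {W : ℝ → ℝ → ℝ} (hW : Measurable (Function.uncurry W))
    (hW_top : kerNorm W G.maxDegree ≠ ⊤) {f : Fin v → ℝ → ℝ} (hf : ∀ a, Measurable (f a))
    (hf1 : ∀ a, ∀ u ∈ Icc (0 : ℝ) 1, f a u ∈ Icc (-1 : ℝ) 1) :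
    Integrable (fun x : Fin v → ℝ => edgeProd G (fun a b => W (x a) (x b)) * ∏ a, f a (x a))
      (Measure.pi fun _ : Fin v => unif01) := by
  rw [edgeProd_mul_prod_eq_decoratedProd]
  exact integrable_decoratedProd G (fun _ => hW) (fun _ _ => hW_top) hf
    fun a => ae_unif01_abs_le_one (hf1 a)

theorem ofReal_abs_tHWf_le {W : ℝ → ℝ → ℝ} (hW : Measurable (Function.uncurry W))
    {f : Fin v → ℝ → ℝ} (hf1 : ∀ a, ∀ u ∈ Icc (0 : ℝ) 1, f a u ∈ Icc (-1 : ℝ) 1) :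
    ENNReal.ofReal |tHWf G W f| ≤ kerNorm W G.maxDegree ^ edgeCard G := by
  rw [← Real.enorm_eq_ofReal_abs, tHWf_eq_decoratedDensity]
  exact (enorm_decoratedDensity_le G (fun _ => hW) fun a => ae_unif01_abs_le_one (hf1 a)).trans_eq
    (Finset.prod_const _)

theorem exists_forall_abs_tHWf_sub_le {q : ℝ} (hq : 1 < q) (C : ℝ≥0) {ε : ℝ} (hε : 0 < ε) :
    ∃ δ > 0, ∀ {U W : ℝ → ℝ → ℝ},
      Measurable (Function.uncurry U) → Measurable (Function.uncurry W) →
      kerNorm U (ENNReal.ofReal q * G.maxDegree) ≤ C →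
      kerNorm W (ENNReal.ofReal q * G.maxDegree) ≤ C → cutDist U W ≤ δ →
      ∀ {f : Fin v → ℝ → ℝ}, (∀ a, Measurable (f a)) →
        (∀ a, ∀ u ∈ Icc (0 : ℝ) 1, f a u ∈ Icc (-1 : ℝ) 1) → |tHWf G U f - tHWf G W f| ≤ ε := by
  obtain ⟨δ, hδ, hcount⟩ := exists_forall_abs_decoratedDensity_sub_le G (μ := unif01) hq C hε
  refine ⟨δ, hδ, fun {U W} hU hW hUC hWC hcut {f} hf hf1 => ?_⟩
  rw [tHWf_eq_decoratedDensity, tHWf_eq_decoratedDensity]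
  refine hcount (fun _ => hU) (fun _ => hW) hf (fun a => ae_unif01_abs_le_one (hf1 a))
    (fun _ _ => hUC) (fun _ _ => hWC) fun p hp => ?_
  have hint {D : ℝ → ℝ → ℝ} (hD : Measurable (Function.uncurry D))
      (hDC : kerNorm D (ENNReal.ofReal q * G.maxDegree) ≤ C) :
      Integrable (Function.uncurry D) (unif01.prod unif01) :=
    MemLp.integrable (one_le_ofReal_mul_maxDegree G hp hq.le)
      ⟨hD.aestronglyMeasurable, hDC.trans_lt ENNReal.coe_lt_top⟩
  exact (cutNormLE_cutDist ((hint hU hUC).sub (hint hW hWC))).mono hcut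

theorem tendsto_iSup_abs_tHWf_sub {q : ℝ} (hq : 1 < q) {Wseq : ℕ → ℝ → ℝ → ℝ} {W : ℝ → ℝ → ℝ}
    (hWseq : ∀ n, Measurable (Function.uncurry (Wseq n))) (hW : Measurable (Function.uncurry W))
    (hlimsup : atTop.limsup (fun n => kerNorm (Wseq n) (ENNReal.ofReal q * G.maxDegree)) ≠ ⊤)
    (hW_top : kerNorm W (ENNReal.ofReal q * G.maxDegree) ≠ ⊤)
    (hcut : Tendsto (fun n => cutDist (Wseq n) W) atTop (nhds 0)) :
    Tendsto (fun n => ⨆ f : {f : Fin v → ℝ → ℝ // (∀ a, Measurable (f a)) ∧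
        ∀ a, ∀ u ∈ Icc (0 : ℝ) 1, f a u ∈ Icc (-1 : ℝ) 1},
      |tHWf G (Wseq n) f.1 - tHWf G W f.1|) atTop (nhds 0) := by
  obtain ⟨c, hc, -⟩ := ENNReal.lt_iff_exists_nnreal_btwn.1 hlimsup.lt_top
  obtain ⟨w, hw, -⟩ := ENNReal.lt_iff_exists_nnreal_btwn.1 hW_top.lt_top
  rw [Metric.nhds_basis_closedBall.tendsto_right_iff]
  intro ε hε
  obtain ⟨δ, hδ, hcount⟩ := exists_forall_abs_tHWf_sub_le G hq (max c w) hε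
  filter_upwards [eventually_lt_of_limsup_lt hc, hcut.eventually_le_const hδ]
    with n hnc hnδ
  rw [mem_closedBall_zero_iff, Real.norm_of_nonneg (Real.iSup_nonneg fun _ => abs_nonneg _)]
  exact Real.iSup_le (fun f => hcount (hWseq n) hW
    (hnc.le.trans (ENNReal.coe_le_coe.2 (le_max_left c w)))
    (hw.le.trans (ENNReal.coe_le_coe.2 (le_max_right c w))) hnδ f.2.1 f.2.2) hε.le

theorem tHWf_bound_and_counting_general (q : ℝ) (hq : 1 < q) :
    (∀ W : ℝ → ℝ → ℝ, Measurable (Function.uncurry W) → kerNorm W G.maxDegree ≠ ⊤ →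
      ∀ f : Fin v → ℝ → ℝ, (∀ a, Measurable (f a)) →
        (∀ a, ∀ u ∈ Icc (0 : ℝ) 1, f a u ∈ Icc (-1 : ℝ) 1) →
        Integrable
          (fun x : Fin v → ℝ => edgeProd G (fun a b => W (x a) (x b)) * ∏ a, f a (x a))
          (Measure.pi fun _ : Fin v => unif01) ∧
        ENNReal.ofReal |tHWf G W f| ≤ kerNorm W G.maxDegree ^ edgeCard G) ∧
    (∀ (Wseq : ℕ → ℝ → ℝ → ℝ) (W : ℝ → ℝ → ℝ),
      (∀ n, Measurable (Function.uncurry (Wseq n))) → Measurable (Function.uncurry W) →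
      atTop.limsup (fun n => kerNorm (Wseq n) (ENNReal.ofReal q * G.maxDegree)) ≠ ⊤ →
      kerNorm W (ENNReal.ofReal q * G.maxDegree) ≠ ⊤ →
      Tendsto (fun n => cutDist (Wseq n) W) atTop (nhds 0) →
      Tendsto (fun n => ⨆ f : {f : Fin v → ℝ → ℝ // (∀ a, Measurable (f a)) ∧
            ∀ a, ∀ u ∈ Icc (0 : ℝ) 1, f a u ∈ Icc (-1 : ℝ) 1},
          |tHWf G (Wseq n) f.1 - tHWf G W f.1|) atTop (nhds 0)) :=
  ⟨fun _ hW hW_top _ hf hf1 =>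
      ⟨integrable_edgeProd_mul_prod G hW hW_top hf hf1, ofReal_abs_tHWf_le G hW hf1⟩,
    fun _ _ hWseq hW => tendsto_iSup_abs_tHWf_sub G hq hWseq hW⟩

end KernelDensity

/-- Proposition 3.1: boundedness and a counting lemma for `t(H,W,f)`. -/
theorem tHWf_bound_and_counting
    {v : ℕ} (G : SimpleGraph (Fin v)) [DecidableRel G.Adj] (q : ℝ) (hq : 1 < q) :
    (∀ W : ℝ → ℝ → ℝ, Measurable (Function.uncurry W) → (∀ x y, W x y = W y x) →
      kerNorm W (ENNReal.ofReal q * (G.maxDegree : ℝ≥0∞)) ≠ ⊤ →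
      ∀ f : Fin v → ℝ → ℝ, (∀ a, Measurable (f a)) →
        (∀ a, ∀ u ∈ Set.Icc (0 : ℝ) 1, f a u ∈ Set.Icc (-1 : ℝ) 1) →
        Integrable
          (fun x : Fin v → ℝ => edgeProd G (fun a b => W (x a) (x b)) * ∏ a, f a (x a))
          (Measure.pi fun _ : Fin v => unif01) ∧
        ENNReal.ofReal |tHWf G W f| ≤
          kerNorm W (ENNReal.ofReal q * (G.maxDegree : ℝ≥0∞)) ^ edgeCard G) ∧
    (∀ (Wseq : ℕ → ℝ → ℝ → ℝ) (W : ℝ → ℝ → ℝ),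
      (∀ n, Measurable (Function.uncurry (Wseq n))) →
      (∀ n x y, Wseq n x y = Wseq n y x) →
      Measurable (Function.uncurry W) → (∀ x y, W x y = W y x) →
      Filter.atTop.limsup
          (fun n => kerNorm (Wseq n) (ENNReal.ofReal q * (G.maxDegree : ℝ≥0∞))) ≠ ⊤ →
      kerNorm W (ENNReal.ofReal q * (G.maxDegree : ℝ≥0∞)) ≠ ⊤ →
      Tendsto (fun n => cutDist (Wseq n) W) atTop (nhds 0) →
      Tendsto (fun n => ⨆ f : {f : Fin v → ℝ → ℝ // (∀ a, Measurable (f a)) ∧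
            ∀ a, ∀ u ∈ Set.Icc (0 : ℝ) 1, f a u ∈ Set.Icc (-1 : ℝ) 1},
          |tHWf G (Wseq n) f.1 - tHWf G W f.1|) atTop (nhds 0)) := by
  obtain ⟨hbound, hcounting⟩ := tHWf_bound_and_counting_general G q hq
  refine ⟨fun W hW _ hW_top f hf hf1 => ?_,
    fun Wseq W hWseq _ hW _ => hcounting Wseq W hWseq hW⟩
  have hle := kerNorm_le_kerNorm_ofReal_mul hW G.maxDegree hq.le
  obtain ⟨hint, habs⟩ := hbound W hW (ne_top_of_le_ne_top hW_top hle) f hf hf1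
  exact ⟨hint, habs.trans (pow_le_pow_left' hle _)⟩
end

section
/- Let H be a finite simple graph with v vertices, edge set E(H) and maximum degree Δ; let 𝒳 be a Polish space, φ:𝒳^v→ℝ measurable, W a symmetric kernel on [0,1]², and ν ∈ 𝒯ℳ. Then for any p ≥ 1 and q > 1 with 1/p + 1/q ≤ 1: E[ |φ(B₁,…,B_v)| Π_{(a,b)∈E(H)} |W(A_a,A_b)| ] ≤ ‖W‖_{qΔ}^{|E(H)|} · ( E_{(ν^{(2)})^{⊗v}}[ |φ(B₁,…,B_v)|^p ] )^{1/p}, where on the left (A_a,B_a), a=1,…,v, are i.i.d. with law ν, and on the right B₁,…,B_v are i.i.d. with law ν^{(2)}. -/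
open MeasureTheory Filter Set
open scoped ENNReal NNReal

/-! Finner's inequality: give functions `f e` of independent variables `z i` exponents `w e` such
that, for each `i`, the exponents of those `f e` which depend on `z i` add up to at most one. Then
`E ∏ f e ^ w e ≤ ∏ (E (f e)) ^ w e`, by applying Hölder's inequality in one variable at a time.
Here `|φ| ^ p` gets the exponent `1 / p` and `|W| ^ (q Δ)`, one copy for each edge, gets
`1 / (q Δ)`: a vertex lies on at most `Δ` edges, so its exponents add up to at most
`1 / p + 1 / q ≤ 1`. -/

section Finner

variable {ι κ : Type*} {E : Finset κ} {w : κ → ℝ}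

theorem lintegral_prod_rpow_le_of_sum_le_one {α : Type*} [MeasurableSpace α] {μ : Measure α}
    [IsProbabilityMeasure μ] {f : κ → α → ℝ≥0∞} (hf : ∀ e ∈ E, AEMeasurable (f e) μ)
    (hw : ∀ e ∈ E, 0 ≤ w e) (hsum : ∑ e ∈ E, w e ≤ 1) :
    ∫⁻ x, ∏ e ∈ E, f e x ^ w e ∂μ ≤ ∏ e ∈ E, (∫⁻ x, f e x ∂μ) ^ w e := by
  -- The constant function `1` absorbs the missing weight.
  simpa using ENNReal.lintegral_mul_prod_norm_pow_le E (g := fun _ => 1) aemeasurable_const hf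
    (1 - ∑ e ∈ E, w e) (sub_add_cancel _ _) (sub_nonneg.2 hsum) hw

theorem lintegral_prod_rpow_le_of_const_off {α : Type*} [MeasurableSpace α] {μ : Measure α}
    [IsProbabilityMeasure μ] {f : κ → α → ℝ≥0∞} (P : κ → Prop) [DecidablePred P]
    (hf : ∀ e ∈ E, Measurable (f e)) (hw : ∀ e ∈ E, 0 ≤ w e)
    (hconst : ∀ e ∈ E, ¬ P e → ∀ x y, f e x = f e y) (hsum : ∑ e ∈ E with P e, w e ≤ 1) :
    ∫⁻ x, ∏ e ∈ E, f e x ^ w e ∂μ ≤ ∏ e ∈ E, (∫⁻ x, f e x ∂μ) ^ w e := by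
  have eq_mean : ∀ e ∈ E, ¬ P e → ∀ x, f e x = ∫⁻ y, f e y ∂μ := fun e he hPe x => by
    simp [lintegral_congr fun y => hconst e he hPe y x]
  calc ∫⁻ x, ∏ e ∈ E, f e x ^ w e ∂μ
    _ = ∫⁻ x, (∏ e ∈ E with P e, f e x ^ w e) *
          ∏ e ∈ E with ¬ P e, (∫⁻ y, f e y ∂μ) ^ w e ∂μ := by
        refine lintegral_congr fun x => ?_
        rw [← Finset.prod_filter_mul_prod_filter_not E P]
        congr 1
        refine Finset.prod_congr rfl fun e he => ?_
        obtain ⟨heE, hPe⟩ := Finset.mem_filter.1 he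
        rw [eq_mean e heE hPe x]
    _ = (∫⁻ x, ∏ e ∈ E with P e, f e x ^ w e ∂μ) *
          ∏ e ∈ E with ¬ P e, (∫⁻ y, f e y ∂μ) ^ w e :=
        lintegral_mul_const _ <| Finset.measurable_fun_prod _ fun e he =>
          (hf e (Finset.mem_of_mem_filter e he)).pow_const _
    _ ≤ (∏ e ∈ E with P e, (∫⁻ x, f e x ∂μ) ^ w e) *
          ∏ e ∈ E with ¬ P e, (∫⁻ y, f e y ∂μ) ^ w e := by
        gcongr
        exact lintegral_prod_rpow_le_of_sum_le_one
          (fun e he => (hf e (Finset.mem_of_mem_filter e he)).aemeasurable)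
          (fun e he => hw e (Finset.mem_of_mem_filter e he)) hsum
    _ = ∏ e ∈ E, (∫⁻ x, f e x ∂μ) ^ w e := Finset.prod_filter_mul_prod_filter_not E P _

variable [DecidableEq ι] {α : ι → Type*}

theorem dependsOn_update_eq {β : Type*} {f : (∀ i, α i) → β} {S : Set ι} (hf : DependsOn f S)
    {i : ι} (hi : i ∉ S) (x : ∀ i, α i) (y : α i) : f (Function.update x i y) = f x :=
  hf fun _ hj => Function.update_of_ne (ne_of_mem_of_not_mem hj hi) _ _

variable [∀ i, MeasurableSpace (α i)] (μ : ∀ i, Measure (α i))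

theorem dependsOn_lmarginal {f : (∀ i, α i) → ℝ≥0∞} {S : Set ι} (hf : DependsOn f S)
    (s : Finset ι) : DependsOn (∫⋯∫⁻_s, f ∂μ) S := by
  intro x x' hxx'
  refine lintegral_congr fun y => hf fun j hj => ?_
  simp only [Function.updateFinset, hxx' j hj]

variable [∀ i, IsProbabilityMeasure (μ i)] {f : κ → (∀ i, α i) → ℝ≥0∞} {S : κ → Finset ι}

theorem lmarginal_prod_rpow_le (hf : ∀ e ∈ E, Measurable (f e))
    (hfS : ∀ e ∈ E, DependsOn (f e) (S e)) (hw : ∀ e ∈ E, 0 ≤ w e)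
    (hsum : ∀ i, ∑ e ∈ E with i ∈ S e, w e ≤ 1) (s : Finset ι) (x : ∀ i, α i) :
    (∫⋯∫⁻_s, (fun z => ∏ e ∈ E, f e z ^ w e) ∂μ) x ≤ ∏ e ∈ E, (∫⋯∫⁻_s, f e ∂μ) x ^ w e := by
  induction s using Finset.induction generalizing x with
  | empty => simp
  | insert i s hi ih =>
    have meas_prod : Measurable fun z => ∏ e ∈ E, f e z ^ w e :=
      Finset.measurable_fun_prod _ fun e he => (hf e he).pow_const _
    calc (∫⋯∫⁻_insert i s, (fun z => ∏ e ∈ E, f e z ^ w e) ∂μ) x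
      _ = ∫⁻ y, (∫⋯∫⁻_s, (fun z => ∏ e ∈ E, f e z ^ w e) ∂μ) (Function.update x i y) ∂μ i :=
          lmarginal_insert _ meas_prod hi x
      _ ≤ ∫⁻ y, ∏ e ∈ E, (∫⋯∫⁻_s, f e ∂μ) (Function.update x i y) ^ w e ∂μ i :=
          lintegral_mono fun y => ih _
      _ ≤ ∏ e ∈ E, (∫⁻ y, (∫⋯∫⁻_s, f e ∂μ) (Function.update x i y) ∂μ i) ^ w e := by
          refine lintegral_prod_rpow_le_of_const_off (fun e => i ∈ S e)
            (fun e he => ((hf e he).lmarginal μ).comp (measurable_update x)) hw ?_ (hsum i)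
          intro e he hie y y'
          have hdep := dependsOn_lmarginal μ (hfS e he) s
          rw [dependsOn_update_eq hdep hie, dependsOn_update_eq hdep hie]
      _ = ∏ e ∈ E, (∫⋯∫⁻_insert i s, f e ∂μ) x ^ w e :=
          Finset.prod_congr rfl fun e he => by rw [lmarginal_insert _ (hf e he) hi]

variable [Fintype ι]

theorem lintegral_pi_prod_rpow_le (hf : ∀ e ∈ E, Measurable (f e))
    (hfS : ∀ e ∈ E, DependsOn (f e) (S e)) (hw : ∀ e ∈ E, 0 ≤ w e)
    (hsum : ∀ i, ∑ e ∈ E with i ∈ S e, w e ≤ 1) :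
    ∫⁻ z, ∏ e ∈ E, f e z ^ w e ∂Measure.pi μ ≤ ∏ e ∈ E, (∫⁻ z, f e z ∂Measure.pi μ) ^ w e := by
  have hne : ∀ i, Nonempty (α i) := fun i => nonempty_of_isProbabilityMeasure (μ i)
  simpa only [lmarginal_univ] using
    lmarginal_prod_rpow_le μ hf hfS hw hsum Finset.univ fun i => (hne i).some

theorem lintegral_pi_mul_prod_rpow_le {g : (∀ i, α i) → ℝ≥0∞} (hg : Measurable g)
    (hf : ∀ e ∈ E, Measurable (f e)) (hfS : ∀ e ∈ E, DependsOn (f e) (S e))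
    {u : ℝ} (hu : 0 ≤ u) (hw : ∀ e ∈ E, 0 ≤ w e)
    (hsum : ∀ i, u + ∑ e ∈ E with i ∈ S e, w e ≤ 1) :
    ∫⁻ z, g z ^ u * ∏ e ∈ E, f e z ^ w e ∂Measure.pi μ ≤
      (∫⁻ z, g z ∂Measure.pi μ) ^ u * ∏ e ∈ E, (∫⁻ z, f e z ∂Measure.pi μ) ^ w e := by
  have finner := lintegral_pi_prod_rpow_le μ (E := Finset.insertNone E)
    (f := fun o => o.elim g f) (S := fun o => o.elim Finset.univ S) (w := fun o => o.elim u w)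
    (Finset.forall_mem_insertNone.2 ⟨hg, hf⟩)
    (Finset.forall_mem_insertNone.2 ⟨by simpa using dependsOn_univ g, hfS⟩)
    (Finset.forall_mem_insertNone.2 ⟨hu, hw⟩)
    fun i => by
      have filter_eq : {o ∈ E.insertNone | i ∈ o.elim Finset.univ S} =
          Finset.insertNone {e ∈ E | i ∈ S e} := by
        ext (_ | e) <;> simp
      rw [filter_eq, Finset.sum_insertNone]
      exact hsum i
  simpa only [Finset.prod_insertNone, Option.elim] using finner

end Finner

theorem measurePreserving_pi_eval_prodMk {ι : Type*} [Fintype ι] {α : ι → Type*}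
    [∀ i, MeasurableSpace (α i)] (μ : ∀ i, Measure (α i)) [∀ i, IsProbabilityMeasure (μ i)]
    {a b : ι} (hab : a ≠ b) :
    MeasurePreserving (fun z : ∀ i, α i => (z a, z b)) (Measure.pi μ) ((μ a).prod (μ b)) := by
  have indep := (ProbabilityTheory.iIndepFun_pi (μ := μ) (X := fun _ => id)
    fun _ => aemeasurable_id).indepFun hab
  refine ⟨by fun_prop, ?_⟩
  rw [← (measurePreserving_eval μ a).map_eq, ← (measurePreserving_eval μ b).map_eq]
  exact (ProbabilityTheory.indepFun_iff_map_prod_eq_prod_map_map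
    (measurable_pi_apply a).aemeasurable (measurable_pi_apply b).aemeasurable).1 indep

theorem eLpNorm_ofReal_eq_lintegral_rpow {α : Type*} [MeasurableSpace α] {μ : Measure α}
    {f : α → ℝ≥0∞} {r : ℝ} (hr : 0 < r) :
    eLpNorm f (ENNReal.ofReal r) μ = (∫⁻ x, f x ^ r ∂μ) ^ (1 / r) := by
  rw [eLpNorm_eq_lintegral_rpow_enorm_toReal (by simpa using hr) ENNReal.ofReal_ne_top,
    ENNReal.toReal_ofReal hr.le]
  rfl

section EdgePairs

variable {V : Type*} [Fintype V] [LinearOrder V] (G : SimpleGraph V) [DecidableRel G.Adj]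

/-- The edges of `G`, each listed once, as the ordered pair of its endpoints in increasing order:
the index set of `edgeProd` and `edgeCard`. -/
def edgePairs : Finset (V × V) :=
  Finset.univ.filter fun e => G.Adj e.1 e.2 ∧ e.1 < e.2

theorem mem_edgePairs {e : V × V} : e ∈ edgePairs G ↔ G.Adj e.1 e.2 ∧ e.1 < e.2 := by
  simp [edgePairs]

theorem card_edgePairs_filter_mem_le_degree (i : V) :
    ((edgePairs G).filter fun e => i ∈ ({e.1, e.2} : Finset V)).card ≤ G.degree i := by
  rw [← G.card_incidenceFinset_eq_degree]
  refine Finset.card_le_card_of_injOn (fun e => s(e.1, e.2)) ?_ ?_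
  · intro e he
    simp only [Finset.coe_filter, mem_edgePairs, Finset.mem_insert, Finset.mem_singleton,
      Set.mem_ofPred_eq] at he
    simpa [SimpleGraph.incidenceSet, he.1.1] using he.2
  · rintro ⟨a, b⟩ he ⟨c, d⟩ he' hs
    simp only [Finset.coe_filter, mem_edgePairs, Set.mem_ofPred_eq] at he he'
    rcases Sym2.eq_iff.1 hs with ⟨rfl, rfl⟩ | ⟨rfl, rfl⟩
    · rfl
    · exact absurd he'.1.2 he.1.2.not_gt

theorem maxDegree_pos_of_mem_edgePairs {e : V × V} (he : e ∈ edgePairs G) : 0 < G.maxDegree :=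
  ((G.degree_pos_iff_exists_adj e.1).2 ⟨e.2, ((mem_edgePairs G).1 he).1⟩).trans_le
    (G.degree_le_maxDegree e.1)

variable {Ω : Type*} [MeasurableSpace Ω] {μ : Measure Ω} [IsProbabilityMeasure μ]
  {F : (V → Ω) → ℝ≥0∞} {K : Ω → Ω → ℝ≥0∞}

theorem lintegral_pi_rpow_mul_prod_edgePairs_rpow_le (hF : Measurable F)
    (hK : Measurable (Function.uncurry K)) {u w : ℝ} (hu : 0 ≤ u) (hw : 0 ≤ w)
    (huw : u + G.maxDegree * w ≤ 1) :
    ∫⁻ z, F z ^ u * ∏ e ∈ edgePairs G, K (z e.1) (z e.2) ^ w ∂(Measure.pi fun _ => μ) ≤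
      (∫⁻ z, F z ∂(Measure.pi fun _ => μ)) ^ u *
        ((∫⁻ s, Function.uncurry K s ∂(μ.prod μ)) ^ w) ^ (edgePairs G).card := by
  have vertex_weight : ∀ i, u + ∑ e ∈ edgePairs G with i ∈ ({e.1, e.2} : Finset V), w ≤ 1 := by
    intro i
    refine le_trans ?_ huw
    rw [Finset.sum_const, nsmul_eq_mul]
    gcongr
    exact (card_edgePairs_filter_mem_le_degree G i).trans (G.degree_le_maxDegree i)
  have meas_edge : ∀ e : V × V, Measurable fun z : V → Ω => K (z e.1) (z e.2) := fun e =>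
    hK.comp (f := fun z : V → Ω => (z e.1, z e.2)) (by fun_prop)
  have depends_edge : ∀ e : V × V,
      DependsOn (fun z : V → Ω => K (z e.1) (z e.2)) ({e.1, e.2} : Finset V) := by
    intro e x y hxy
    simp only [hxy e.1 (by simp), hxy e.2 (by simp)]
  calc ∫⁻ z, F z ^ u * ∏ e ∈ edgePairs G, K (z e.1) (z e.2) ^ w ∂(Measure.pi fun _ => μ)
    _ ≤ (∫⁻ z, F z ∂(Measure.pi fun _ => μ)) ^ u *
          ∏ e ∈ edgePairs G, (∫⁻ z, K (z e.1) (z e.2) ∂(Measure.pi fun _ => μ)) ^ w :=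
        lintegral_pi_mul_prod_rpow_le (fun _ => μ) (E := edgePairs G) hF
          (fun e _ => meas_edge e) (fun e _ => depends_edge e) hu (fun _ _ => hw) vertex_weight
    _ = (∫⁻ z, F z ∂(Measure.pi fun _ => μ)) ^ u *
          ((∫⁻ s, Function.uncurry K s ∂(μ.prod μ)) ^ w) ^ (edgePairs G).card := by
        rw [← Finset.prod_const]
        congr 1
        refine Finset.prod_congr rfl fun e he => ?_
        rw [← (measurePreserving_pi_eval_prodMk (fun _ : V => μ)
          ((mem_edgePairs G).1 he).2.ne).lintegral_comp hK]
        rfl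

theorem lintegral_pi_mul_prod_edgePairs_le (hF : Measurable F)
    (hK : Measurable (Function.uncurry K)) {p q : ℝ} (hp : 0 < p) (hq : 0 < q)
    (hpq : 1 / p + 1 / q ≤ 1) :
    ∫⁻ z, F z * ∏ e ∈ edgePairs G, K (z e.1) (z e.2) ∂(Measure.pi fun _ => μ) ≤
      eLpNorm (Function.uncurry K) (ENNReal.ofReal q * G.maxDegree) (μ.prod μ) ^
          (edgePairs G).card *
        (∫⁻ z, F z ^ p ∂(Measure.pi fun _ => μ)) ^ (1 / p) := by
  obtain ⟨r, hr⟩ : ∃ r : ℝ, r = q * G.maxDegree := ⟨_, rfl⟩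
  have r_pos : ∀ e ∈ edgePairs G, 0 < r := fun e he =>
    hr ▸ mul_pos hq (Nat.cast_pos.2 (maxDegree_pos_of_mem_edgePairs G he))
  have weight_le : 1 / p + G.maxDegree * (1 / r) ≤ 1 := by
    refine le_trans ?_ hpq
    calc 1 / p + G.maxDegree * (1 / r)
      _ = 1 / p + G.maxDegree / G.maxDegree * (1 / q) := by rw [hr]; ring
      _ ≤ 1 / p + 1 * (1 / q) := by gcongr; exact div_self_le_one _
      _ = 1 / p + 1 / q := by rw [one_mul]
  calc ∫⁻ z, F z * ∏ e ∈ edgePairs G, K (z e.1) (z e.2) ∂(Measure.pi fun _ => μ)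
    _ = ∫⁻ z, (F z ^ p) ^ (1 / p) * ∏ e ∈ edgePairs G, (K (z e.1) (z e.2) ^ r) ^ (1 / r)
          ∂(Measure.pi fun _ => μ) := by
        refine lintegral_congr fun z => ?_
        rw [one_div, ENNReal.rpow_rpow_inv hp.ne']
        congr 1
        refine Finset.prod_congr rfl fun e he => ?_
        rw [one_div, ENNReal.rpow_rpow_inv (r_pos e he).ne']
    _ ≤ (∫⁻ z, F z ^ p ∂(Measure.pi fun _ => μ)) ^ (1 / p) *
          ((∫⁻ s, Function.uncurry K s ^ r ∂(μ.prod μ)) ^ (1 / r)) ^ (edgePairs G).card :=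
        lintegral_pi_rpow_mul_prod_edgePairs_rpow_le G (K := fun s t => K s t ^ r)
          (hF.pow_const p) (hK.pow_const r) (by positivity)
          (one_div_nonneg.2 (by rw [hr]; positivity)) weight_le
    _ = _ := by
        rw [mul_comm]
        congr 1
        rcases (edgePairs G).eq_empty_or_nonempty with no_edge | ⟨e, he⟩
        · simp [no_edge]
        · have ofReal_r : ENNReal.ofReal q * G.maxDegree = ENNReal.ofReal r := by
            rw [hr, ENNReal.ofReal_mul hq.le, ENNReal.ofReal_natCast]
          rw [ofReal_r, eLpNorm_ofReal_eq_lintegral_rpow (r_pos e he)]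

end EdgePairs

theorem piProb_eq_pi {α : Type*} [MeasurableSpace α] (v : ℕ) (ν : Measure α)
    [h : IsProbabilityMeasure ν] : piProb v ν = Measure.pi fun _ => ν := by
  simp only [piProb, probOr, if_pos h]

theorem edgeCard_eq_card_edgePairs {v : ℕ} (G : SimpleGraph (Fin v)) [DecidableRel G.Adj] :
    edgeCard G = (edgePairs G).card :=
  rfl

theorem ofReal_edgeProd_abs {v : ℕ} (G : SimpleGraph (Fin v)) [DecidableRel G.Adj]
    (f : Fin v → Fin v → ℝ) :
    ENNReal.ofReal (edgeProd G fun a b => |f a b|) = ∏ e ∈ edgePairs G, ‖f e.1 e.2‖ₑ := by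
  simp only [Real.enorm_eq_ofReal_abs]
  exact ENNReal.ofReal_prod_of_nonneg fun _ _ => abs_nonneg _

theorem eLpNorm_enorm_comp_fst_eq_kerNorm {X : Type*} [MeasurableSpace X] {W : ℝ → ℝ → ℝ}
    (hW : Measurable (Function.uncurry W)) {ν : Measure (ℝ × X)} (hν : inTM ν) (r : ℝ≥0∞) :
    eLpNorm (Function.uncurry fun s t : ℝ × X => ‖W s.1 t.1‖ₑ) r (ν.prod ν) = kerNorm W r := by
  have := hν.1
  have fst_preserving : MeasurePreserving Prod.fst ν unif01 := ⟨measurable_fst, hν.2⟩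
  calc eLpNorm (Function.uncurry fun s t : ℝ × X => ‖W s.1 t.1‖ₑ) r (ν.prod ν)
    _ = eLpNorm (Function.uncurry W ∘ Prod.map Prod.fst Prod.fst) r (ν.prod ν) := eLpNorm_enorm _
    _ = kerNorm W r := eLpNorm_comp_measurePreserving hW.aestronglyMeasurable
          (fst_preserving.prod fst_preserving)

theorem lintegral_piProb_comp_snd {X Y : Type*} [MeasurableSpace X] [MeasurableSpace Y] {v : ℕ}
    {ν : Measure (Y × X)} [IsProbabilityMeasure ν] {f : (Fin v → X) → ℝ≥0∞} (hf : Measurable f) :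
    ∫⁻ z : Fin v → Y × X, f (fun a => (z a).2) ∂piProb v ν =
      ∫⁻ y, f y ∂piProb v (ν.map Prod.snd) := by
  have := Measure.isProbabilityMeasure_map (μ := ν) measurable_snd.aemeasurable
  rw [piProb_eq_pi, piProb_eq_pi]
  exact (measurePreserving_pi _ _ (f := fun _ => Prod.snd)
    fun _ => ⟨measurable_snd, rfl⟩).lintegral_comp hf

theorem TWphi_holder_bound_general
    {X : Type*} [MeasurableSpace X] {v : ℕ} (G : SimpleGraph (Fin v)) [DecidableRel G.Adj]
    {φ : (Fin v → X) → ℝ} (hφ : Measurable φ)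
    {W : ℝ → ℝ → ℝ} (hW : Measurable (Function.uncurry W)) {ν : Measure (ℝ × X)} (hν : inTM ν)
    {p q : ℝ} (hp : 0 < p) (hq : 0 < q) (hpq : 1 / p + 1 / q ≤ 1) :
    ∫⁻ z : Fin v → ℝ × X,
        ENNReal.ofReal
          (|φ (fun a => (z a).2)| * edgeProd G (fun a b => |W (z a).1 (z b).1|))
        ∂(piProb v ν) ≤
      kerNorm W (ENNReal.ofReal q * (G.maxDegree : ℝ≥0∞)) ^ edgeCard G *
        (∫⁻ y : Fin v → X, ENNReal.ofReal (|φ y| ^ p)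
            ∂(piProb v (ν.map Prod.snd))) ^ (1 / p) := by
  have := hν.1
  have enorm_rpow (y : Fin v → X) : ENNReal.ofReal (|φ y| ^ p) = ‖φ y‖ₑ ^ p := by
    rw [Real.enorm_eq_ofReal_abs, ENNReal.ofReal_rpow_of_nonneg (abs_nonneg _) hp.le]
  simp only [ENNReal.ofReal_mul (abs_nonneg _), ofReal_edgeProd_abs, enorm_rpow,
    ← Real.enorm_eq_ofReal_abs]
  rw [← lintegral_piProb_comp_snd (hφ.enorm.pow_const p), piProb_eq_pi,
    ← eLpNorm_enorm_comp_fst_eq_kerNorm hW hν, edgeCard_eq_card_edgePairs]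
  refine lintegral_pi_mul_prod_edgePairs_le G (K := fun s t : ℝ × X => ‖W s.1 t.1‖ₑ)
    (F := fun z : Fin v → ℝ × X => ‖φ fun a => (z a).2‖ₑ) ?_ ?_ hp hq hpq
  · exact (hφ.comp (by fun_prop : Measurable fun (z : Fin v → ℝ × X) a => (z a).2)).enorm
  · exact (hW.comp (measurable_fst.prodMap measurable_fst)).enorm

/-- Lemma 2.2: Hölder bound for `T_{|W|,|φ|}(ν)`. -/
theorem TWphi_holder_bound
    {X : Type*} [MeasurableSpace X] [TopologicalSpace X] [PolishSpace X] [BorelSpace X]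
    {v : ℕ} (hv : 2 ≤ v) (G : SimpleGraph (Fin v)) [DecidableRel G.Adj]
    (φ : (Fin v → X) → ℝ) (hφ : Measurable φ)
    (W : ℝ → ℝ → ℝ) (hWmeas : Measurable (Function.uncurry W))
    (hWsymm : ∀ x y, W x y = W y x)
    (ν : Measure (ℝ × X)) (hν : inTM ν)
    (p q : ℝ) (hp : 1 ≤ p) (hq : 1 < q) (hpq : 1 / p + 1 / q ≤ 1) :
    ∫⁻ z : Fin v → ℝ × X,
        ENNReal.ofReal
          (|φ (fun a => (z a).2)| * edgeProd G (fun a b => |W (z a).1 (z b).1|))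
        ∂(piProb v ν) ≤
      kerNorm W (ENNReal.ofReal q * (G.maxDegree : ℝ≥0∞)) ^ edgeCard G *
        (∫⁻ y : Fin v → X, ENNReal.ofReal (|φ y| ^ p)
            ∂(piProb v (ν.map Prod.snd))) ^ (1 / p) := by
  exact TWphi_holder_bound_general G hφ hWmeas hν (by linarith) (by linarith) hpq
end
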